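/- Fix an odd integer p ≥ 5, let R > 0 and C₀ > 0, and let ε₀ > 0 be sufficiently small depending on p, R, C₀. Let u be an exterior solution on {r > R + |t|} with data (u₀, u₁) such that: ‖(u₀,u₁)‖_{H(R)} ≤ ε₀; for every ρ ≥ R one has ‖u‖_{L²L⁸(ρ)} + ‖u‖_{L³L⁶(ρ)} + sup_{t∈ℝ} ‖(u(t,·), ∂_t u(t,·))‖_{H(ρ+|t|)} ≤ C₀‖(u₀,u₁)‖_{H(ρ)}; and the exterior energy of u vanishes. Assume moreover that for every t ∈ ℝ the function r ↦ u(t,r) is not identically 0 on (R+|t|, ∞). Then u never vanishes on the region {(t,r) : r > R+|t|} and has a constant sign there (either u(t,r) > 0 for all such (t,r), or u(t,r) < 0 for all such (t,r)); furthermore, there is a constant C > 0 (depending on p, R, C₀, ε₀) such that for every t ∈ ℝ there exists ℓ(t) ≠ 0 with |r²·u(t,r) − ℓ(t)| ≤ C·r⁴·|u(t,r)|³ for all r > R + |t|. -/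

import Mathlib

open MeasureTheory Filter Set
open scoped ENNReal

/-- The exterior energy norm `‖(v,w)‖_{H(R)} = (∫_R^∞ (|v'|² + |w|²) r³ dr)^{1/2}`. -/
noncomputable def eH (R : ℝ) (v w : ℝ → ℝ) : ℝ≥0∞ :=
  ((∫⁻ r in Ioi R, ENNReal.ofReal ((deriv v r) ^ 2 * r ^ 3)) +
      ∫⁻ r in Ioi R, ENNReal.ofReal ((w r) ^ 2 * r ^ 3)) ^ (1 / 2 : ℝ)

/-- The exterior spacetime norm `‖u‖_{L^aL^b(R)}` over the region `{r > R + |t|}`. -/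
noncomputable def eLL (a b R : ℝ) (u : ℝ → ℝ → ℝ) : ℝ≥0∞ :=
  (∫⁻ t : ℝ,
      (∫⁻ r in Ioi (R + |t|), ENNReal.ofReal (|u t r| ^ b * r ^ 3)) ^ (a / b)) ^ (1 / a)

/-- The time derivative `∂_t u` of a function of `(t,r)`. -/
noncomputable def dtu (u : ℝ → ℝ → ℝ) (t r : ℝ) : ℝ := deriv (fun s => u s r) t

/-- `u` is an exterior solution of `∂_t²u - ∂_r²u - (3/r)∂_r u = |u|^{p-1}u`
on `{r > R + |t|}`, of smoothness class `C^n`. -/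
def IsExtSol (p : ℕ) (n : ℕ∞) (R : ℝ) (u : ℝ → ℝ → ℝ) : Prop :=
  ContDiffOn ℝ n (fun q : ℝ × ℝ => u q.1 q.2) {q : ℝ × ℝ | R + |q.1| < q.2} ∧
  ∀ t r : ℝ, R + |t| < r →
    deriv (fun s => dtu u s r) t - deriv (deriv (u t)) r - (3 / r) * deriv (u t) r
      = |u t r| ^ (p - 1) * u t r

/-- The exterior energy of `u` outside `{r > R + |t|}` vanishes as `t → ±∞`. -/
def ExtEnergyVanishes (R : ℝ) (u : ℝ → ℝ → ℝ) : Prop :=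
  Tendsto (fun t : ℝ => ∫ r in Ioi (R + |t|),
      ((dtu u t r) ^ 2 + (deriv (u t) r) ^ 2) * r ^ 3) atTop (nhds 0) ∧
  Tendsto (fun t : ℝ => ∫ r in Ioi (R + |t|),
      ((dtu u t r) ^ 2 + (deriv (u t) r) ^ 2) * r ^ 3) atBot (nhds 0)

/-- `sup_{t∈ℝ} ‖(u(t,·), ∂_t u(t,·))‖_{H(R+|t|)}`. -/
noncomputable def supH (R : ℝ) (u : ℝ → ℝ → ℝ) : ℝ≥0∞ :=
  ⨆ t : ℝ, eH (R + |t|) (u t) (fun r => dtu u t r)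

/-!
The proof tests the solution against free waves. About any time `t₀`, the even part of `u` starts
from rest and, by hypothesis, radiates no energy outside the cone. Pair its gradient with that of an
outgoing free wave `V(t, r) = ∫_0^π ψ(r cos θ - t) sin² θ dθ`, where `ψ` is the Abel transform of a
mean-zero profile `m`, so that `V` lives in `r ≥ α + t`. In Green's identity the term at `t → ∞`
drops out and the term at `t = 0` is `∫ r² u(t₀, r) m(r) dr`. A source bounded by `Φ / r⁵`
contributes only `O(Φ / r)`, since `∫ |∂_t V| dt = O(1 / r)`. Letting `m` approximate a difference
of two point masses bounds the oscillation of `r² u(t₀, ·)` by `O(Φ / r)` on dyadic intervals, hence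
`r² u(t₀, r)` converges to some `ℓ` as `r → ∞`. The finite energy forces `ℓ` not to depend on `t₀`.

With `M = sup r² |u|`, which is small, the source is `O(M^p r^{-2p})`. The estimate then gives
`|r² u - ℓ| = O(M^p)`, which is absorbed to yield `|r² u - ℓ| ≤ |ℓ| / 3`: this determines the sign
of `u`, and inserting `M ≤ 2|ℓ|`, `|ℓ| ≤ 2 r² |u|` once more gives the cubic bound.
-/

namespace ExteriorWave

open Real

/-- The linear form `x dt + y dr` on the `(t, r)`-plane. -/
noncomputable def linForm (x y : ℝ) : ℝ × ℝ →L[ℝ] ℝ :=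
  x • ContinuousLinearMap.fst ℝ ℝ ℝ + y • ContinuousLinearMap.snd ℝ ℝ ℝ

@[simp]
lemma linForm_apply (x y : ℝ) (v : ℝ × ℝ) : linForm x y v = x * v.1 + y * v.2 := by
  simp [linForm]

lemma hasFDerivAt_integral_comp_mul_sub {k k' w γ : ℝ → ℝ} (hk : ∀ x, HasDerivAt k (k' x) x)
    (hk' : Continuous k') (hw : Continuous w) (hγ : Continuous γ) (a b : ℝ) (q : ℝ × ℝ) :
    HasFDerivAt (fun q : ℝ × ℝ => ∫ θ in a..b, k (q.2 * γ θ - q.1) * w θ)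
      (linForm (-∫ θ in a..b, k' (q.2 * γ θ - q.1) * w θ)
        (∫ θ in a..b, k' (q.2 * γ θ - q.1) * (γ θ * w θ))) q := by
  have hkc : Continuous k := continuous_iff_continuousAt.2 fun x => (hk x).continuousAt
  set F' : ℝ × ℝ → ℝ → ℝ × ℝ →L[ℝ] ℝ := fun q θ =>
    linForm (-(k' (q.2 * γ θ - q.1) * w θ)) (k' (q.2 * γ θ - q.1) * (γ θ * w θ)) with hF'
  have hF'c : Continuous (fun z : (ℝ × ℝ) × ℝ => F' z.1 z.2) := by
    simp only [hF', linForm]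
    fun_prop
  obtain ⟨C, hC⟩ := ((isCompact_closedBall q 1).prod (isCompact_uIcc (a := a) (b := b))
    ).exists_bound_of_continuousOn hF'c.continuousOn
  have main := intervalIntegral.hasFDerivAt_integral_of_dominated_of_fderiv_le
    (μ := volume) (a := a) (b := b) (𝕜 := ℝ) (bound := fun _ => C)
    (F := fun (q : ℝ × ℝ) θ => k (q.2 * γ θ - q.1) * w θ) (F' := F') (x₀ := q)
    (Metric.closedBall_mem_nhds q one_pos)
    (Eventually.of_forall fun x => (by fun_prop : Continuous _).aestronglyMeasurable)
    ((by fun_prop : Continuous _).intervalIntegrable _ _)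
    (hF'c.comp (Continuous.prodMk_right q)).aestronglyMeasurable
    (Eventually.of_forall fun θ hθ x hx => hC (x, θ) ⟨hx, uIoc_subset_uIcc hθ⟩)
    intervalIntegrable_const
    (Eventually.of_forall fun θ _ x _ => by
      have hphase : HasFDerivAt (fun q : ℝ × ℝ => q.2 * γ θ - q.1)
          (γ θ • ContinuousLinearMap.snd ℝ ℝ ℝ - ContinuousLinearMap.fst ℝ ℝ ℝ) x :=
        (hasFDerivAt_snd.mul_const (γ θ)).sub hasFDerivAt_fst
      refine (((hk _).comp_hasFDerivAt x hphase).mul_const (w θ)).congr_fderiv ?_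
      ext <;> simp [hF'] <;> ring)
  have hf_int : IntervalIntegrable (F' q) volume a b :=
    (hF'c.comp (Continuous.prodMk_right q)).intervalIntegrable _ _
  refine main.congr_fderiv ?_
  ext <;> rw [ContinuousLinearMap.comp_apply, ContinuousLinearMap.intervalIntegral_apply hf_int] <;>
    simp [hF']

lemma hasDerivAt_integral_comp_mul {k k' w γ : ℝ → ℝ} (hk : ∀ x, HasDerivAt k (k' x) x)
    (hk' : Continuous k') (hw : Continuous w) (hγ : Continuous γ) (a b s : ℝ) :
    HasDerivAt (fun s : ℝ => ∫ θ in a..b, k (s * γ θ) * w θ)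
      (∫ θ in a..b, k' (s * γ θ) * (γ θ * w θ)) s := by
  have h := (hasFDerivAt_integral_comp_mul_sub hk hk' hw hγ a b (0, s)).comp_hasDerivAt s
    ((hasDerivAt_const s (0 : ℝ)).prodMk (hasDerivAt_id s))
  simpa [Function.comp_def] using h

lemma continuous_integral_comp_mul_sub {k w γ : ℝ → ℝ} (hk : Continuous k) (hw : Continuous w)
    (hγ : Continuous γ) (a b : ℝ) :
    Continuous fun q : ℝ × ℝ => ∫ θ in a..b, k (q.2 * γ θ - q.1) * w θ := by
  apply intervalIntegral.continuous_parametric_intervalIntegral_of_continuous'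
  simp only [Function.uncurry_def]
  fun_prop

/-! ### An Archimedes-type identity -/

section Moments

variable {X Y : Type*} [MeasurableSpace X] [MeasurableSpace Y] {μ : Measure X} {ν : Measure Y}
  {f w : X → ℝ} {h v : Y → ℝ} {a b : ℝ}

lemma integrable_comp_mul {g : ℝ → ℝ} (hg : Continuous g) (hf : AEStronglyMeasurable f μ)
    (hfab : ∀ᵐ x ∂μ, f x ∈ Icc a b) (hw : Integrable w μ) :
    Integrable (fun x => g (f x) * w x) μ := by
  obtain ⟨C, hC⟩ := (isCompact_Icc (a := a) (b := b)).exists_bound_of_continuousOn hg.continuousOn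
  exact hw.bdd_mul (hg.comp_aestronglyMeasurable hf) (hfab.mono fun x hx => hC _ hx)

lemma integral_eval_mul (hf : AEStronglyMeasurable f μ) (hfab : ∀ᵐ x ∂μ, f x ∈ Icc a b)
    (hw : Integrable w μ) (P : Polynomial ℝ) :
    ∫ x, P.eval (f x) * w x ∂μ
      = ∑ n ∈ Finset.range (P.natDegree + 1), P.coeff n * ∫ x, f x ^ n * w x ∂μ := by
  simp only [Polynomial.eval_eq_sum_range, Finset.sum_mul, mul_assoc]
  rw [integral_finsetSum]
  · simp only [integral_const_mul]
  · exact fun n _ => (integrable_comp_mul (continuous_pow n) hf hfab hw).const_mul _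

lemma abs_integral_comp_mul_sub_le {g k : ℝ → ℝ} {ε : ℝ} (hg : Continuous g) (hk : Continuous k)
    (hgk : ∀ y ∈ Icc a b, |k y - g y| ≤ ε) (hf : AEStronglyMeasurable f μ)
    (hfab : ∀ᵐ x ∂μ, f x ∈ Icc a b) (hw : Integrable w μ) :
    |(∫ x, g (f x) * w x ∂μ) - ∫ x, k (f x) * w x ∂μ| ≤ ε * ∫ x, |w x| ∂μ := by
  rw [← integral_sub (integrable_comp_mul hg hf hfab hw) (integrable_comp_mul hk hf hfab hw),
    ← integral_const_mul, ← Real.norm_eq_abs]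
  refine norm_integral_le_of_norm_le (hw.abs.const_mul ε) (hfab.mono fun x hx => ?_)
  rw [← sub_mul, norm_mul, Real.norm_eq_abs, Real.norm_eq_abs, abs_sub_comm]
  gcongr
  exact hgk _ hx

theorem integral_comp_mul_eq_of_moments_eq (hf : AEStronglyMeasurable f μ)
    (hfab : ∀ᵐ x ∂μ, f x ∈ Icc a b) (hw : Integrable w μ) (hh : AEStronglyMeasurable h ν)
    (hhab : ∀ᵐ y ∂ν, h y ∈ Icc a b) (hv : Integrable v ν)
    (hmom : ∀ n : ℕ, ∫ x, f x ^ n * w x ∂μ = ∫ y, h y ^ n * v y ∂ν) {g : ℝ → ℝ}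
    (hg : Continuous g) : ∫ x, g (f x) * w x ∂μ = ∫ y, g (h y) * v y ∂ν := by
  set B := (∫ x, |w x| ∂μ) + ∫ y, |v y| ∂ν with hB
  have : 0 ≤ B := by positivity
  refine eq_of_abs_sub_le_all fun ε hε => ?_
  obtain ⟨P, hP⟩ := exists_polynomial_near_of_continuousOn a b g hg.continuousOn
    (ε / (B + 1)) (by positivity)
  have hP' := fun y hy => (hP y hy).le
  have happ₁ := abs_integral_comp_mul_sub_le hg P.continuous hP' hf hfab hw
  have happ₂ := abs_integral_comp_mul_sub_le hg P.continuous hP' hh hhab hv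
  have hpoly : ∫ x, P.eval (f x) * w x ∂μ = ∫ y, P.eval (h y) * v y ∂ν := by
    simp only [integral_eval_mul hf hfab hw, integral_eval_mul hh hhab hv, hmom]
  rw [hpoly] at happ₁
  have hle : ε / (B + 1) * B ≤ ε := by
    rw [div_mul_eq_mul_div, div_le_iff₀ (by positivity)]
    nlinarith
  rw [hB, mul_add] at hle
  rw [abs_le] at happ₁ happ₂ ⊢
  constructor <;> linarith

end Moments

lemma integral_cos_pow_eq_integral_sin_pow (n : ℕ) :
    ∫ x in (0 : ℝ)..(π / 2), cos x ^ n = ∫ x in (0 : ℝ)..(π / 2), sin x ^ n := by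
  simpa [sin_pi_div_two_sub] using
    intervalIntegral.integral_comp_sub_left (a := 0) (b := π / 2) (fun x => sin x ^ n) (π / 2)

lemma integral_sin_pow_add_two (n : ℕ) :
    ∫ x in (0 : ℝ)..(π / 2), sin x ^ (n + 2)
      = (n + 1) / (n + 2) * ∫ x in (0 : ℝ)..(π / 2), sin x ^ n := by
  rw [integral_sin_pow]
  simp

lemma integral_sin_pow_mul_integral_sin_pow_succ (n : ℕ) :
    (∫ x in (0 : ℝ)..(π / 2), sin x ^ n) * (∫ x in (0 : ℝ)..(π / 2), sin x ^ (n + 1))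
      = π / (2 * (n + 1)) := by
  induction n with
  | zero => simp
  | succ n ih =>
    rw [integral_sin_pow_add_two, mul_left_comm, mul_comm (∫ x in _.._, sin x ^ (n + 1)), ih]
    push_cast
    field_simp
    ring

lemma integral_pow_mul_one_sub_sq (n : ℕ) :
    ∫ y in (0 : ℝ)..1, y ^ n * (1 - y ^ 2) = 2 / (((n : ℝ) + 1) * (n + 3)) := by
  have hsplit : ∀ y : ℝ, y ^ n * (1 - y ^ 2) = y ^ n - y ^ (n + 2) := fun y => by ring
  simp only [hsplit]
  rw [intervalIntegral.integral_sub (intervalIntegral.intervalIntegrable_pow n)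
    (intervalIntegral.intervalIntegrable_pow _), integral_pow, integral_pow]
  push_cast
  simp only [one_pow, ne_eq, Nat.add_eq_zero_iff, one_ne_zero, and_false, not_false_eq_true,
    zero_pow, OfNat.ofNat_ne_zero]
  field_simp
  ring

lemma integral_cos_pow_mul_cos_mul_sin_sq (n : ℕ) :
    ∫ θ in (0 : ℝ)..(π / 2), cos θ ^ n * (cos θ * sin θ ^ 2)
      = 1 / (n + 3) * ∫ x in (0 : ℝ)..(π / 2), sin x ^ (n + 1) := by
  have hsplit : ∀ θ : ℝ, cos θ ^ n * (cos θ * sin θ ^ 2) = cos θ ^ (n + 1) - cos θ ^ (n + 1 + 2) :=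
    fun θ => by rw [sin_sq]; ring
  simp only [hsplit]
  rw [intervalIntegral.integral_sub ((by fun_prop : Continuous _).intervalIntegrable _ _)
    ((by fun_prop : Continuous _).intervalIntegrable _ _), integral_cos_pow_eq_integral_sin_pow,
    integral_cos_pow_eq_integral_sin_pow, integral_sin_pow_add_two]
  push_cast
  field_simp
  ring

lemma integral_integral_cos_mul_sin_pow (n : ℕ) :
    ∫ θ in (0 : ℝ)..(π / 2), (∫ φ in (0 : ℝ)..(π / 2), (cos θ * sin φ) ^ n) *
      (cos θ * sin θ ^ 2) = π / 4 * ∫ y in (0 : ℝ)..1, y ^ n * (1 - y ^ 2) := by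
  have hfactor : ∀ θ : ℝ, (∫ φ in (0 : ℝ)..(π / 2), (cos θ * sin φ) ^ n) * (cos θ * sin θ ^ 2)
      = (∫ φ in (0 : ℝ)..(π / 2), sin φ ^ n) * (cos θ ^ n * (cos θ * sin θ ^ 2)) := fun θ => by
    simp only [mul_pow, intervalIntegral.integral_const_mul]
    ring
  simp only [hfactor]
  rw [intervalIntegral.integral_const_mul, integral_cos_pow_mul_cos_mul_sin_sq, mul_left_comm,
    integral_sin_pow_mul_integral_sin_pow_succ, integral_pow_mul_one_sub_sq]
  field_simp
  norm_num

lemma intervalIntegral_intervalIntegral_eq_setIntegral_prod {F : ℝ × ℝ → ℝ} (hF : Continuous F)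
    {a b c d : ℝ} (hab : a ≤ b) (hcd : c ≤ d) :
    ∫ x in a..b, ∫ y in c..d, F (x, y) = ∫ z in Ioc a b ×ˢ Ioc c d, F z := by
  simp only [intervalIntegral.integral_of_le hab, intervalIntegral.integral_of_le hcd]
  rw [Measure.volume_eq_prod, setIntegral_prod]
  exact (hF.continuousOn.integrableOn_compact (isCompact_Icc.prod isCompact_Icc)).mono_set
    (prod_mono Ioc_subset_Icc_self Ioc_subset_Icc_self)

theorem integral_integral_comp_mul_eq_of_moments_eq {f w : ℝ × ℝ → ℝ} {h v : ℝ → ℝ}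
    {a b c d l m α β : ℝ} (hab : a ≤ b) (hcd : c ≤ d) (hlm : l ≤ m) (hf : Continuous f)
    (hw : Continuous w) (hh : Continuous h) (hv : Continuous v)
    (hfI : ∀ x ∈ Icc a b, ∀ y ∈ Icc c d, f (x, y) ∈ Icc α β)
    (hhI : ∀ y ∈ Icc l m, h y ∈ Icc α β)
    (hmom : ∀ n : ℕ, ∫ x in a..b, ∫ y in c..d, f (x, y) ^ n * w (x, y)
      = ∫ y in l..m, h y ^ n * v y) {g : ℝ → ℝ} (hg : Continuous g) :
    ∫ x in a..b, ∫ y in c..d, g (f (x, y)) * w (x, y) = ∫ y in l..m, g (h y) * v y := by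
  have hprod : ∀ k : ℝ → ℝ, Continuous k →
      ∫ x in a..b, ∫ y in c..d, k (f (x, y)) * w (x, y)
        = ∫ z in Ioc a b ×ˢ Ioc c d, k (f z) * w z := fun k hk =>
    intervalIntegral_intervalIntegral_eq_setIntegral_prod (F := fun z => k (f z) * w z)
      (by fun_prop) hab hcd
  rw [hprod g hg, intervalIntegral.integral_of_le hlm]
  refine integral_comp_mul_eq_of_moments_eq (a := α) (b := β) hf.aestronglyMeasurable ?_ ?_
    hh.aestronglyMeasurable ?_ ?_ (fun n => ?_) hg
  · filter_upwards [ae_restrict_mem (measurableSet_Ioc.prod measurableSet_Ioc)] with z hz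
      using hfI _ (Ioc_subset_Icc_self hz.1) _ (Ioc_subset_Icc_self hz.2)
  · exact (hw.continuousOn.integrableOn_compact (isCompact_Icc.prod isCompact_Icc)).mono_set
      (prod_mono Ioc_subset_Icc_self Ioc_subset_Icc_self)
  · filter_upwards [ae_restrict_mem measurableSet_Ioc] with y hy
      using hhI y (Ioc_subset_Icc_self hy)
  · exact hv.integrableOn_Icc.mono_set Ioc_subset_Icc_self
  · rw [← hprod _ (continuous_pow n), hmom, intervalIntegral.integral_of_le hlm]

lemma sin_mem_Icc_zero_one {φ : ℝ} (hφ : φ ∈ Icc 0 (π / 2)) : sin φ ∈ Icc (0 : ℝ) 1 :=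
  ⟨sin_nonneg_of_mem_Icc ⟨hφ.1, by linarith [hφ.2, pi_pos]⟩, sin_le_one φ⟩

lemma cos_mem_Icc_zero_one {θ : ℝ} (hθ : θ ∈ Icc 0 (π / 2)) : cos θ ∈ Icc (0 : ℝ) 1 :=
  ⟨cos_nonneg_of_mem_Icc ⟨by linarith [hθ.1, pi_pos], hθ.2⟩, cos_le_one θ⟩

theorem integral_integral_comp_cos_mul_sin {g : ℝ → ℝ} (hg : Continuous g) :
    ∫ θ in (0 : ℝ)..(π / 2), (∫ φ in (0 : ℝ)..(π / 2), g (cos θ * sin φ)) * (cos θ * sin θ ^ 2)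
      = π / 4 * ∫ y in (0 : ℝ)..1, g y * (1 - y ^ 2) := by
  simp only [← intervalIntegral.integral_mul_const, ← intervalIntegral.integral_const_mul,
    mul_left_comm (π / 4)]
  refine integral_integral_comp_mul_eq_of_moments_eq (f := fun z => cos z.1 * sin z.2)
    (w := fun z => cos z.1 * sin z.1 ^ 2) (h := fun y => y) (v := fun y => π / 4 * (1 - y ^ 2))
    (by positivity) (by positivity) zero_le_one (by fun_prop) (by fun_prop) (by fun_prop)
    (by fun_prop) (fun θ hθ φ hφ => ?_) (fun y hy => hy) (fun n => ?_) hg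
  · exact unitInterval.mul_mem (cos_mem_Icc_zero_one hθ) (sin_mem_Icc_zero_one hφ)
  · simp only [intervalIntegral.integral_mul_const, integral_integral_cos_mul_sin_pow,
      mul_left_comm _ (π / 4), intervalIntegral.integral_const_mul]

lemma integral_integral_mul_comp_mul_sin {g : ℝ → ℝ} (hg : Continuous g) :
    ∫ s in (0 : ℝ)..1, (∫ φ in (0 : ℝ)..(π / 2), g (s * sin φ)) * s
      = ∫ φ in (0 : ℝ)..(π / 2), g (sin φ) * cos φ ^ 2 := by
  simp only [← intervalIntegral.integral_mul_const]
  refine integral_integral_comp_mul_eq_of_moments_eq (f := fun z => z.1 * sin z.2)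
    (w := fun z => z.1) (h := sin) (v := fun φ => cos φ ^ 2)
    zero_le_one (by positivity) (by positivity) (by fun_prop) (by fun_prop) (by fun_prop)
    (by fun_prop) (fun s hs φ hφ => unitInterval.mul_mem hs (sin_mem_Icc_zero_one hφ))
    (fun φ hφ => sin_mem_Icc_zero_one hφ) (fun n => ?_) hg
  have hpow : ∀ φ : ℝ, sin φ ^ n * cos φ ^ 2 = sin φ ^ n - sin φ ^ (n + 2) := fun φ => by
    rw [cos_sq']; ring
  simp only [hpow, mul_pow, mul_right_comm _ _ (_ : ℝ), intervalIntegral.integral_const_mul,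
    intervalIntegral.integral_mul_const, ← pow_succ]
  rw [intervalIntegral.integral_sub ((by fun_prop : Continuous _).intervalIntegrable _ _)
    ((by fun_prop : Continuous _).intervalIntegrable _ _), integral_sin_pow_add_two, integral_pow]
  push_cast
  simp only [one_pow, ne_eq, Nat.add_eq_zero_iff, one_ne_zero, and_false, not_false_eq_true,
    zero_pow]
  field_simp
  ring

/-! ### The Abel transform -/

/-- The Abel transform `s ↦ (2/π) ∫_0^s m(x) s / √(s² - x²) dx`, written with `x = s sin φ`. It is
chosen so that averaging `abelTransform m (r cos θ)` against `sin² θ` gives back integrals of `m`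
over `[0, r]`. -/
noncomputable def abelTransform (m : ℝ → ℝ) (s : ℝ) : ℝ :=
  2 / π * s * ∫ φ in (0 : ℝ)..(π / 2), m (s * sin φ)

lemma contDiff_integral_comp_mul {n : ℕ} {k w γ : ℝ → ℝ} (hk : ContDiff ℝ n k) (hw : Continuous w)
    (hγ : Continuous γ) (a b : ℝ) : ContDiff ℝ n fun s : ℝ => ∫ θ in a..b, k (s * γ θ) * w θ := by
  induction n generalizing k w with
  | zero =>
    have hkc := hk.continuous
    refine contDiff_zero.2 (intervalIntegral.continuous_parametric_intervalIntegral_of_continuous'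
      ?_ a b)
    simp only [Function.uncurry_def]
    fun_prop
  | succ n ih =>
    have hkd : ∀ x, HasDerivAt k (deriv k x) x := fun x =>
      (hk.differentiable (by simp) x).hasDerivAt
    have hderiv := hasDerivAt_integral_comp_mul hkd (hk.continuous_deriv (by simp)) hw hγ a b
    push_cast at hk ⊢
    refine contDiff_succ_iff_deriv.2 ⟨fun s => (hderiv s).differentiableAt, by simp, ?_⟩
    rw [funext fun s => (hderiv s).deriv]
    exact ih (contDiff_succ_iff_deriv.1 hk).2.2 (hγ.mul hw)

lemma contDiff_abelTransform {n : ℕ} {m : ℝ → ℝ} (hm : ContDiff ℝ n m) :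
    ContDiff ℝ n (abelTransform m) := by
  have h := contDiff_integral_comp_mul hm continuous_one continuous_sin 0 (π / 2)
  simp only [Pi.one_apply, mul_one] at h
  unfold abelTransform
  fun_prop

lemma continuous_abelTransform {m : ℝ → ℝ} (hm : Continuous m) : Continuous (abelTransform m) :=
  (contDiff_abelTransform (n := 0) (contDiff_zero.2 hm)).continuous

lemma integral_comp_mul_sin_mul_cos {m : ℝ → ℝ} (hm : Continuous m) (s : ℝ) :
    ∫ φ in (0 : ℝ)..(π / 2), m (s * sin φ) * (s * cos φ) = ∫ x in (0 : ℝ)..s, m x := by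
  simpa using intervalIntegral.integral_comp_mul_deriv (a := 0) (b := π / 2)
    (f := fun φ => s * sin φ) (f' := fun φ => s * cos φ)
    (fun x _ => (hasDerivAt_sin x).const_mul s) (by fun_prop) hm

lemma abelTransform_eq_zero_of_le {α s : ℝ} {m : ℝ → ℝ} (hα : 0 ≤ α) (hm : ∀ x ≤ α, m x = 0)
    (hs : s ≤ α) : abelTransform m s = 0 := by
  have hzero : ∫ φ in (0 : ℝ)..(π / 2), m (s * sin φ) = ∫ φ in (0 : ℝ)..(π / 2), 0 := by
    refine intervalIntegral.integral_congr fun φ hφ => hm _ ?_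
    rw [uIcc_of_le (by positivity)] at hφ
    obtain ⟨h₀, h₁⟩ := sin_mem_Icc_zero_one hφ
    nlinarith
  rw [abelTransform, hzero, intervalIntegral.integral_zero, mul_zero]

lemma abs_abelTransform_le (m : ℝ → ℝ) {s : ℝ} (hs : 0 ≤ s) :
    |abelTransform m s| ≤ abelTransform (fun x => |m x|) s := by
  rw [abelTransform, abs_mul, abs_of_nonneg (by positivity)]
  unfold abelTransform
  gcongr
  exact intervalIntegral.abs_integral_le_integral_abs (by positivity)

lemma integral_abelTransform {m : ℝ → ℝ} (hm : Continuous m) (S : ℝ) :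
    ∫ s in (0 : ℝ)..S, abelTransform m s
      = 2 / π * S ^ 2 * ∫ φ in (0 : ℝ)..(π / 2), m (S * sin φ) * cos φ ^ 2 := by
  have hscale := intervalIntegral.mul_integral_comp_mul_left (a := 0) (b := 1)
    (f := abelTransform m) S
  rw [mul_zero, mul_one] at hscale
  have hscaled : ∀ x, abelTransform m (S * x)
      = 2 / π * S * ((∫ φ in (0 : ℝ)..(π / 2), m (S * (x * sin φ))) * x) := fun x => by
    simp only [abelTransform, mul_assoc]
    ring
  rw [← hscale]
  simp only [hscaled]
  rw [intervalIntegral.integral_const_mul,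
    integral_integral_mul_comp_mul_sin (g := fun y => m (S * y)) (by fun_prop)]
  ring

lemma integral_abelTransform_le {m : ℝ → ℝ} (hm : Continuous m) (hm0 : ∀ x, 0 ≤ m x) {S : ℝ}
    (hS : 0 ≤ S) :
    ∫ s in (0 : ℝ)..S, abelTransform m s ≤ 2 / π * S * ∫ x in (0 : ℝ)..S, m x := by
  rw [integral_abelTransform hm, pow_two, ← mul_assoc, mul_assoc _ S,
    ← integral_comp_mul_sin_mul_cos hm S, ← intervalIntegral.integral_const_mul]
  gcongr
  refine intervalIntegral.integral_mono_on (by positivity)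
    ((by fun_prop : Continuous _).intervalIntegrable _ _)
    ((by fun_prop : Continuous _).intervalIntegrable _ _) fun φ hφ => ?_
  obtain ⟨h₀, h₁⟩ := cos_mem_Icc_zero_one hφ
  calc S * (m (S * sin φ) * cos φ ^ 2) = m (S * sin φ) * (S * cos φ) * cos φ := by ring
    _ ≤ m (S * sin φ) * (S * cos φ) :=
      mul_le_of_le_one_right (mul_nonneg (hm0 _) (by positivity)) h₁

lemma integral_div_pow_le {a b K : ℝ} (ha : 0 < a) (hab : a ≤ b) (hK : 0 ≤ K) (n : ℕ) :
    ∫ x in a..b, K / x ^ (n + 2) ≤ K / ((n + 1) * a ^ (n + 1)) := by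
  have hb : 0 < b := ha.trans_le hab
  have hzpow : ∀ x : ℝ, K / x ^ (n + 2) = K * x ^ (-(n + 2 : ℕ) : ℤ) := fun x => by
    rw [zpow_neg, zpow_natCast, div_eq_mul_inv]
  simp only [hzpow]
  rw [intervalIntegral.integral_const_mul, integral_zpow (Or.inr ⟨by omega, by
    rw [uIcc_of_le hab]; exact fun h => absurd h.1 (not_le.2 ha)⟩),
    show (-(n + 2 : ℕ) : ℤ) + 1 = -(n + 1 : ℕ) by push_cast; ring]
  simp only [zpow_neg, zpow_natCast]
  have hneg : ((-(n + 2 : ℕ) : ℤ) : ℝ) + 1 = -(n + 1 : ℝ) := by push_cast; ring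
  rw [hneg, div_neg, ← neg_div, neg_sub, div_eq_mul_inv K, mul_inv]
  gcongr
  rw [div_eq_inv_mul]
  gcongr
  linarith [inv_pos.2 (pow_pos hb (n + 1))]

lemma continuousOn_div_pow {a b : ℝ} (ha : 0 < a) (hab : a ≤ b) (K : ℝ) (n : ℕ) :
    ContinuousOn (fun x : ℝ => K / x ^ n) (uIcc a b) := by
  rw [uIcc_of_le hab]
  exact continuousOn_const.div (continuousOn_pow n) fun x hx =>
    pow_ne_zero n (ha.trans_le hx.1).ne'

/-- A compactly supported radial profile with vanishing total mass: the moment against which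
`r² u` is tested. -/
structure IsMeanZeroProfile (α β : ℝ) (m : ℝ → ℝ) : Prop where
  contDiff : ContDiff ℝ 2 m
  eq_zero_of_le : ∀ x ≤ α, m x = 0
  eq_zero_of_ge : ∀ x, β ≤ x → m x = 0
  integral_eq_zero : ∫ x in α..β, m x = 0

lemma intervalIntegral_eq_of_eq_zero_outside {α β a b : ℝ} {f : ℝ → ℝ} (hf : Continuous f)
    (hleft : ∀ x ≤ α, f x = 0) (hright : ∀ x, β ≤ x → f x = 0) (ha : a ≤ α) (hb : β ≤ b) :
    ∫ x in a..b, f x = ∫ x in α..β, f x := by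
  have hf_int : ∀ c d, IntervalIntegrable f volume c d := hf.intervalIntegrable
  have hzero_left : ∫ x in a..α, f x = 0 :=
    intervalIntegral.integral_zero_ae (.of_forall fun x hx => hleft x (uIoc_of_le ha ▸ hx).2)
  have hzero_right : ∫ x in β..b, f x = 0 :=
    intervalIntegral.integral_zero_ae (.of_forall fun x hx => hright x (uIoc_of_le hb ▸ hx).1.le)
  rw [← intervalIntegral.integral_add_adjacent_intervals (hf_int a α) (hf_int α b),
    ← intervalIntegral.integral_add_adjacent_intervals (hf_int α β) (hf_int β b), hzero_left,
    hzero_right, zero_add, add_zero]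

lemma one_sub_cos_le {φ δ : ℝ} (hcos : 0 ≤ cos φ) (hsin : 0 ≤ sin φ) (hφ : sin φ ≤ δ)
    (hδ : δ ≤ 1 / 2) : 1 - cos φ ≤ 2 * δ ^ 2 * cos φ := by
  have hpyth := sin_sq_add_cos_sq φ
  have hsin_sq : sin φ ^ 2 ≤ δ ^ 2 := by gcongr
  have hhalf : 1 / 2 ≤ cos φ := by nlinarith
  nlinarith [cos_le_one φ]

namespace IsMeanZeroProfile

variable {α β : ℝ} {m : ℝ → ℝ}

lemma abelTransform_eq_integral_mul_one_sub_cos (hm : IsMeanZeroProfile α β m) (hα : 0 ≤ α)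
    {s : ℝ} (hs : β ≤ s) :
    abelTransform m s = 2 / π * ∫ φ in (0 : ℝ)..(π / 2), s * m (s * sin φ) * (1 - cos φ) := by
  have hmc := hm.contDiff.continuous
  have hmass : ∫ φ in (0 : ℝ)..(π / 2), m (s * sin φ) * (s * cos φ) = 0 := by
    rw [integral_comp_mul_sin_mul_cos hmc, intervalIntegral_eq_of_eq_zero_outside hmc
      hm.eq_zero_of_le hm.eq_zero_of_ge hα hs, hm.integral_eq_zero]
  have hsplit : ∀ φ : ℝ, s * m (s * sin φ) * (1 - cos φ)
      = s * m (s * sin φ) - m (s * sin φ) * (s * cos φ) := fun φ => by ring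
  simp only [hsplit]
  rw [intervalIntegral.integral_sub ((by fun_prop : Continuous _).intervalIntegrable _ _)
    ((by fun_prop : Continuous _).intervalIntegrable _ _), hmass,
    intervalIntegral.integral_const_mul, abelTransform]
  ring

lemma abs_abelTransform_le_div_sq (hm : IsMeanZeroProfile α β m) (hα : 0 < α) (hαβ : α ≤ β) {s : ℝ}
    (hs : 2 * β ≤ s) :
    |abelTransform m s| ≤ 4 / π * β ^ 2 * (∫ x in α..β, |m x|) / s ^ 2 := by
  have hmc := hm.contDiff.continuous
  have : 0 < β := hα.trans_le hαβ
  have hs0 : 0 < s := by linarith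
  have hpoint : ∀ φ ∈ Icc 0 (π / 2), |s * m (s * sin φ) * (1 - cos φ)|
      ≤ 2 * (β / s) ^ 2 * (|m (s * sin φ)| * (s * cos φ)) := fun φ hφ => by
    obtain ⟨hcos, hcos'⟩ := cos_mem_Icc_zero_one hφ
    rw [abs_mul, abs_mul, abs_of_pos hs0, abs_of_nonneg (sub_nonneg.2 hcos')]
    rcases le_total β (s * sin φ) with h | h
    · simp [hm.eq_zero_of_ge _ h]
    · have hle := one_sub_cos_le (δ := β / s) hcos (sin_mem_Icc_zero_one hφ).1
        (by rwa [le_div_iff₀' hs0]) (by rw [div_le_iff₀ hs0]; linarith)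
      calc s * |m (s * sin φ)| * (1 - cos φ)
          ≤ s * |m (s * sin φ)| * (2 * (β / s) ^ 2 * cos φ) := by gcongr
        _ = _ := by ring
  rw [hm.abelTransform_eq_integral_mul_one_sub_cos hα.le (by linarith), abs_mul,
    abs_of_pos (by positivity)]
  calc 2 / π * |∫ φ in (0 : ℝ)..(π / 2), s * m (s * sin φ) * (1 - cos φ)|
      ≤ 2 / π * ∫ φ in (0 : ℝ)..(π / 2), 2 * (β / s) ^ 2 * (|m (s * sin φ)| * (s * cos φ)) := by
        gcongr
        refine (intervalIntegral.abs_integral_le_integral_abs (by positivity)).trans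
          (intervalIntegral.integral_mono_on (by positivity)
            ((by fun_prop : Continuous _).intervalIntegrable _ _)
            ((by fun_prop : Continuous _).intervalIntegrable _ _) hpoint)
    _ = 4 / π * β ^ 2 * (∫ x in α..β, |m x|) / s ^ 2 := by
        rw [intervalIntegral.integral_const_mul,
          integral_comp_mul_sin_mul_cos (m := fun x => |m x|) (by fun_prop),
          intervalIntegral_eq_of_eq_zero_outside (by fun_prop)
            (fun x hx => by simp [hm.eq_zero_of_le x hx])
            (fun x hx => by simp [hm.eq_zero_of_ge x hx]) hα.le (by linarith : β ≤ s)]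
        ring

lemma integral_zero_abs_abelTransform_le (hm : IsMeanZeroProfile α β m) (hα : 0 < α) (hαβ : α ≤ β)
    {y : ℝ} (hy : 2 * β ≤ y) :
    ∫ s in (0 : ℝ)..y, |abelTransform m s| ≤ 2 * β * ∫ x in α..β, |m x| := by
  have hmc := hm.contDiff.continuous
  have hβ : 0 < β := hα.trans_le hαβ
  have hAc := continuous_abelTransform hmc
  have habsc := continuous_abelTransform hmc.abs
  set B := ∫ x in α..β, |m x|
  have hB : 0 ≤ B := intervalIntegral.integral_nonneg hαβ fun _ _ => abs_nonneg _
  have hnear : ∫ s in (0 : ℝ)..(2 * β), |abelTransform m s| ≤ 2 / π * (2 * β) * B := by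
    calc ∫ s in (0 : ℝ)..(2 * β), |abelTransform m s|
        ≤ ∫ s in (0 : ℝ)..(2 * β), abelTransform (fun x => |m x|) s :=
          intervalIntegral.integral_mono_on (by positivity) (hAc.abs.intervalIntegrable _ _)
            (habsc.intervalIntegrable _ _) fun s hs => abs_abelTransform_le m hs.1
      _ ≤ 2 / π * (2 * β) * ∫ x in (0 : ℝ)..(2 * β), |m x| :=
          integral_abelTransform_le hmc.abs (fun _ => abs_nonneg _) (by positivity)
      _ = 2 / π * (2 * β) * B := by
          rw [intervalIntegral_eq_of_eq_zero_outside hmc.abs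
            (fun x hx => by simp [hm.eq_zero_of_le x hx])
            (fun x hx => by simp [hm.eq_zero_of_ge x hx]) hα.le (by linarith : β ≤ 2 * β)]
  have hfar : ∫ s in (2 * β)..y, |abelTransform m s| ≤ 4 / π * β ^ 2 * B / (2 * β) :=
    calc ∫ s in (2 * β)..y, |abelTransform m s|
        ≤ ∫ s in (2 * β)..y, 4 / π * β ^ 2 * B / s ^ 2 :=
          intervalIntegral.integral_mono_on hy (hAc.abs.intervalIntegrable _ _)
            (continuousOn_div_pow (by positivity) hy _ 2).intervalIntegrable
            fun s hs => hm.abs_abelTransform_le_div_sq hα hαβ hs.1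
      _ ≤ 4 / π * β ^ 2 * B / (2 * β) := by
          simpa using integral_div_pow_le (by positivity) hy (by positivity) 0
  have hsum : 2 / π * (2 * β) * B + 4 / π * β ^ 2 * B / (2 * β) = 6 / π * (β * B) := by
    field_simp
    ring
  have hpi : 6 / π ≤ 2 := by
    rw [div_le_iff₀ pi_pos]
    linarith [pi_gt_three]
  rw [← intervalIntegral.integral_add_adjacent_intervals
    (hAc.abs.intervalIntegrable 0 (2 * β)) (hAc.abs.intervalIntegrable _ _)]
  nlinarith [mul_nonneg hβ.le hB]

theorem integral_abs_abelTransform_le (hm : IsMeanZeroProfile α β m) (hα : 0 < α) (hαβ : α ≤ β)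
    {x y : ℝ} (hxy : x ≤ y) :
    ∫ s in x..y, |abelTransform m s| ≤ 2 * β * ∫ x in α..β, |m x| := by
  have hAc := (continuous_abelTransform hm.contDiff.continuous).abs
  have hneg : ∫ s in (min x 0)..0, |abelTransform m s| = 0 :=
    intervalIntegral.integral_zero_ae (.of_forall fun s hs => by
      rw [uIoc_of_le (min_le_right _ _)] at hs
      rw [abelTransform_eq_zero_of_le hα.le hm.eq_zero_of_le (hs.2.trans hα.le), abs_zero])
  calc ∫ s in x..y, |abelTransform m s|
      ≤ ∫ s in (min x 0)..(max y (2 * β)), |abelTransform m s| :=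
        intervalIntegral.integral_mono_interval (min_le_left _ _) hxy (le_max_left _ _)
          (.of_forall fun _ => abs_nonneg _) (hAc.intervalIntegrable _ _)
    _ = ∫ s in (0 : ℝ)..(max y (2 * β)), |abelTransform m s| := by
        rw [← intervalIntegral.integral_add_adjacent_intervals (hAc.intervalIntegrable _ 0)
          (hAc.intervalIntegrable 0 _), hneg, zero_add]
    _ ≤ 2 * β * ∫ x in α..β, |m x| :=
        hm.integral_zero_abs_abelTransform_le hα hαβ (le_max_right _ _)

lemma exists_abs_abelTransform_le (hm : IsMeanZeroProfile α β m) (hα : 0 < α) (hαβ : α ≤ β) :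
    ∃ C, 0 ≤ C ∧ ∀ s, |abelTransform m s| ≤ C / (1 + s ^ 2) := by
  have hβ : 0 < β := hα.trans_le hαβ
  set f : ℝ → ℝ := fun s => abelTransform m s * (1 + s ^ 2) with hf
  have hfc : Continuous f := by
    have := continuous_abelTransform hm.contDiff.continuous
    fun_prop
  obtain ⟨C, hC⟩ := (isCompact_Icc (a := (0 : ℝ)) (b := 2 * β + 1)).exists_bound_of_continuousOn
    hfc.continuousOn
  have hC0 : 0 ≤ C := (norm_nonneg _).trans (hC 0 ⟨le_rfl, by linarith⟩)
  set K := 4 / π * β ^ 2 * ∫ x in α..β, |m x|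
  have hK : 0 ≤ K :=
    mul_nonneg (by positivity) (intervalIntegral.integral_nonneg hαβ fun _ _ => abs_nonneg _)
  refine ⟨C + 2 * K, by positivity, fun s => ?_⟩
  rw [le_div_iff₀ (by positivity)]
  rcases le_total s 0 with hs | hs
  · rw [abelTransform_eq_zero_of_le hα.le hm.eq_zero_of_le (hs.trans hα.le), abs_zero, zero_mul]
    positivity
  rcases le_total s (2 * β + 1) with hs' | hs'
  · have := hC s ⟨hs, hs'⟩
    rw [hf, norm_mul, Real.norm_eq_abs, Real.norm_of_nonneg (by positivity)] at this
    linarith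
  · calc |abelTransform m s| * (1 + s ^ 2) ≤ K / s ^ 2 * (1 + s ^ 2) := by
          gcongr
          exact hm.abs_abelTransform_le_div_sq hα hαβ (by linarith)
      _ ≤ K / s ^ 2 * (2 * s ^ 2) := by
          gcongr
          nlinarith
      _ = 2 * K := by
          have : s ≠ 0 := by linarith
          field_simp
      _ ≤ C + 2 * K := by linarith

end IsMeanZeroProfile

/-! ### Spherical means of plane waves -/

/-- `(a, b)` behaves on `Ω` like the gradient `(∂_t v, ∂_r v)` of a solution of the radial wave
equation `∂_t² v - ∂_r² v - (3/r) ∂_r v = F`: the cross derivatives agree (both are `y`) and the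
equation holds. No primitive `v` is mentioned, because the energy method only sees the gradient. -/
def IsWavePair (Ω : Set (ℝ × ℝ)) (a b F : ℝ × ℝ → ℝ) : Prop :=
  ∀ q ∈ Ω, ∃ x y z : ℝ, HasFDerivAt a (linForm x y) q ∧ HasFDerivAt b (linForm y z) q ∧
    x - z - 3 / q.2 * b q = F q

/-- The mean over directions of the plane wave with profile `ψ`, with angular weight `w`, at the
spacetime point `q = (t, r)`. -/
noncomputable def planeWaveMean (ψ w : ℝ → ℝ) (q : ℝ × ℝ) : ℝ :=
  ∫ θ in (0 : ℝ)..π, ψ (q.2 * cos θ - q.1) * w θ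

section PlaneWaveMean

variable {ψ w : ℝ → ℝ}

lemma continuous_planeWaveMean (hψ : Continuous ψ) (hw : Continuous w) :
    Continuous (planeWaveMean ψ w) :=
  continuous_integral_comp_mul_sub hψ hw continuous_cos 0 π

lemma hasDerivAt_deriv_of_contDiff (hψ : ContDiff ℝ 1 ψ) (x : ℝ) :
    HasDerivAt ψ (deriv ψ x) x :=
  (hψ.differentiable one_ne_zero x).hasDerivAt

lemma hasFDerivAt_planeWaveMean (hψ : ContDiff ℝ 1 ψ) (hw : Continuous w) (q : ℝ × ℝ) :
    HasFDerivAt (planeWaveMean ψ w)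
      (linForm (-planeWaveMean (deriv ψ) w q)
        (planeWaveMean (deriv ψ) (fun θ => cos θ * w θ) q)) q :=
  hasFDerivAt_integral_comp_mul_sub (hasDerivAt_deriv_of_contDiff hψ)
    (hψ.continuous_deriv le_rfl) hw continuous_cos 0 π q

lemma planeWaveMean_sub_weight {w₁ w₂ : ℝ → ℝ} (hψ : Continuous ψ) (hw₁ : Continuous w₁)
    (hw₂ : Continuous w₂) (q : ℝ × ℝ) :
    planeWaveMean ψ (fun θ => w₁ θ - w₂ θ) q = planeWaveMean ψ w₁ q - planeWaveMean ψ w₂ q := by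
  simp only [planeWaveMean, mul_sub]
  exact intervalIntegral.integral_sub ((by fun_prop : Continuous _).intervalIntegrable _ _)
    ((by fun_prop : Continuous _).intervalIntegrable _ _)

lemma planeWaveMean_cos_mul_sin_pow (hψ : ContDiff ℝ 1 ψ) (n : ℕ) (q : ℝ × ℝ) :
    (n + 1) * planeWaveMean ψ (fun θ => cos θ * sin θ ^ n) q
      = q.2 * planeWaveMean (deriv ψ) (fun θ => sin θ ^ (n + 2)) q := by
  have hψ₀ := hψ.continuous
  have := hψ.continuous_deriv le_rfl
  have hprimitive : ∀ θ, HasDerivAt (fun θ => ψ (q.2 * cos θ - q.1) * sin θ ^ (n + 1))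
      ((n + 1) * (ψ (q.2 * cos θ - q.1) * (cos θ * sin θ ^ n))
        - q.2 * (deriv ψ (q.2 * cos θ - q.1) * sin θ ^ (n + 2))) θ := fun θ => by
    have hphase : HasDerivAt (fun θ => q.2 * cos θ - q.1) (q.2 * -sin θ) θ :=
      ((hasDerivAt_cos θ).const_mul q.2).sub_const q.1
    refine (((hasDerivAt_deriv_of_contDiff hψ _).comp θ hphase).mul
      ((hasDerivAt_sin θ).pow (n + 1))).congr_deriv ?_
    simp only [Function.comp_apply, Pi.pow_apply, Nat.add_sub_cancel]
    push_cast
    ring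
  have hFTC := intervalIntegral.integral_eq_sub_of_hasDerivAt (a := 0) (b := π)
    (fun θ _ => hprimitive θ) ((by fun_prop : Continuous _).intervalIntegrable _ _)
  rw [intervalIntegral.integral_sub ((by fun_prop : Continuous _).intervalIntegrable _ _)
    ((by fun_prop : Continuous _).intervalIntegrable _ _), intervalIntegral.integral_const_mul,
    intervalIntegral.integral_const_mul, sin_pi, sin_zero] at hFTC
  simp only [zero_pow n.succ_ne_zero, mul_zero, sub_zero] at hFTC
  exact sub_eq_zero.1 hFTC

lemma isWavePair_planeWaveMean (hψ : ContDiff ℝ 1 ψ) :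
    IsWavePair {q | 0 < q.2} (fun q => -planeWaveMean ψ (fun θ => sin θ ^ 2) q)
      (planeWaveMean ψ fun θ => cos θ * sin θ ^ 2) 0 := by
  intro q hq
  have hψ₁ := hψ.continuous_deriv le_rfl
  refine ⟨planeWaveMean (deriv ψ) (fun θ => sin θ ^ 2) q,
    -planeWaveMean (deriv ψ) (fun θ => cos θ * sin θ ^ 2) q, _,
    (hasFDerivAt_planeWaveMean hψ (by fun_prop) q).neg.congr_fderiv ?_,
    hasFDerivAt_planeWaveMean hψ (by fun_prop) q, ?_⟩
  · ext <;> simp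
  · have hsin : (fun θ : ℝ => sin θ ^ 2 - cos θ * (cos θ * sin θ ^ 2)) = fun θ => sin θ ^ (2 + 2) :=
      funext fun θ => by linear_combination -sin θ ^ 2 * sin_sq_add_cos_sq θ
    have hparts := planeWaveMean_cos_mul_sin_pow hψ 2 q
    rw [← planeWaveMean_sub_weight hψ₁ (by fun_prop) (by fun_prop), hsin]
    have : q.2 ≠ 0 := ne_of_gt hq
    field_simp
    simp only [Pi.zero_apply, mul_zero]
    push_cast at hparts
    linarith

section Fubini

variable {f : ℝ → ℝ → ℝ} {a b c d : ℝ}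

lemma integrableOn_uIoc_prod_of_continuousOn
    (hf : ContinuousOn (fun q : ℝ × ℝ => f q.1 q.2) (uIcc a b ×ˢ uIcc c d)) :
    IntegrableOn (fun q : ℝ × ℝ => f q.1 q.2) (uIoc a b ×ˢ uIoc c d) :=
  (hf.integrableOn_compact (isCompact_uIcc.prod isCompact_uIcc)).mono_set
    (prod_mono uIoc_subset_uIcc uIoc_subset_uIcc)

lemma intervalIntegral_swap_of_continuousOn
    (hf : ContinuousOn (fun q : ℝ × ℝ => f q.1 q.2) (uIcc a b ×ˢ uIcc c d)) :
    ∫ x in a..b, ∫ y in c..d, f x y = ∫ y in c..d, ∫ x in a..b, f x y :=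
  intervalIntegral_intervalIntegral_swap (integrableOn_uIoc_prod_of_continuousOn hf)

lemma intervalIntegrable_intervalIntegral_of_continuousOn
    (hf : ContinuousOn (fun q : ℝ × ℝ => f q.1 q.2) (uIcc a b ×ˢ uIcc c d)) :
    IntervalIntegrable (fun x => ∫ y in c..d, f x y) volume a b := by
  have hf_int := integrableOn_uIoc_prod_of_continuousOn hf
  rw [IntegrableOn, Measure.volume_eq_prod, ← Measure.prod_restrict] at hf_int
  simp only [intervalIntegral.intervalIntegral_eq_integral_uIoc]
  exact intervalIntegrable_iff.2 (hf_int.integral_prod_left.smul (if c ≤ d then (1 : ℝ) else -1))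

end Fubini

lemma integral_abs_planeWaveMean_le {B T : ℝ} (hψ : Continuous ψ) (hw : Continuous w)
    (hw₁ : ∀ θ, |w θ| ≤ 1) (hB : ∀ x y, x ≤ y → ∫ s in x..y, |ψ s| ≤ B) (hT : 0 ≤ T) (r : ℝ) :
    ∫ t in (0 : ℝ)..T, |planeWaveMean ψ w (t, r)| ≤ π * B := by
  have hcont : Continuous fun t : ℝ => ∫ θ in (0 : ℝ)..π, |ψ (r * cos θ - t)| := by
    apply intervalIntegral.continuous_parametric_intervalIntegral_of_continuous'
    simp only [Function.uncurry_def]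
    fun_prop
  have hcont' : Continuous fun θ : ℝ => ∫ t in (0 : ℝ)..T, |ψ (r * cos θ - t)| := by
    apply intervalIntegral.continuous_parametric_intervalIntegral_of_continuous'
    simp only [Function.uncurry_def]
    fun_prop
  have hmean := continuous_planeWaveMean hψ hw
  calc ∫ t in (0 : ℝ)..T, |planeWaveMean ψ w (t, r)|
      ≤ ∫ t in (0 : ℝ)..T, ∫ θ in (0 : ℝ)..π, |ψ (r * cos θ - t)| := by
        refine intervalIntegral.integral_mono_on hT
          ((by fun_prop : Continuous _).intervalIntegrable _ _) (hcont.intervalIntegrable _ _)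
          fun t _ => ?_
        refine (intervalIntegral.abs_integral_le_integral_abs pi_pos.le).trans ?_
        refine intervalIntegral.integral_mono_on pi_pos.le
          ((by fun_prop : Continuous _).intervalIntegrable _ _)
          ((by fun_prop : Continuous _).intervalIntegrable _ _) fun θ _ => ?_
        rw [abs_mul]
        exact mul_le_of_le_one_right (abs_nonneg _) (hw₁ θ)
    _ = ∫ θ in (0 : ℝ)..π, ∫ t in (0 : ℝ)..T, |ψ (r * cos θ - t)| :=
        intervalIntegral_swap_of_continuousOn (by fun_prop)
    _ ≤ ∫ _ in (0 : ℝ)..π, B := by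
        refine intervalIntegral.integral_mono_on pi_pos.le (hcont'.intervalIntegrable _ _)
          (continuous_const.intervalIntegrable _ _) fun θ _ => ?_
        rw [intervalIntegral.integral_comp_sub_left (fun s => |ψ s|)]
        exact hB _ _ (by linarith)
    _ = π * B := by simp

lemma planeWaveMean_deriv_sin_sq (hψ : ContDiff ℝ 1 ψ) {q : ℝ × ℝ} (hq : 0 < q.2) :
    planeWaveMean (deriv ψ) (fun θ => sin θ ^ 2) q = planeWaveMean ψ cos q / q.2 := by
  have hparts := planeWaveMean_cos_mul_sin_pow hψ 0 q
  simp only [Nat.cast_zero, zero_add, one_mul, pow_zero, mul_one] at hparts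
  rw [eq_div_iff hq.ne', mul_comm, ← hparts]

lemma planeWaveMean_zero_eq_integral_half (hψ : Continuous ψ) (hw : Continuous w)
    (hψ₀ : ∀ s ≤ 0, ψ s = 0) {r : ℝ} (hr : 0 ≤ r) :
    planeWaveMean ψ w (0, r) = ∫ θ in (0 : ℝ)..(π / 2), ψ (r * cos θ) * w θ := by
  have hf_int : ∀ a b, IntervalIntegrable (fun θ => ψ (r * cos θ) * w θ) volume a b :=
    (by fun_prop : Continuous _).intervalIntegrable
  have hback : ∫ θ in (π / 2)..π, ψ (r * cos θ) * w θ = 0 := by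
    refine intervalIntegral.integral_zero_ae (.of_forall fun θ hθ => ?_)
    rw [uIoc_of_le (by linarith [pi_pos])] at hθ
    have hcos := cos_nonpos_of_pi_div_two_le_of_le hθ.1.le (by linarith [hθ.2, pi_pos])
    rw [hψ₀ _ (mul_nonpos_of_nonneg_of_nonpos hr hcos), zero_mul]
  simp only [planeWaveMean, sub_zero]
  rw [← intervalIntegral.integral_add_adjacent_intervals (hf_int 0 (π / 2)) (hf_int _ _), hback,
    add_zero]

lemma integral_cos_div_one_add {r : ℝ} (hr : 0 < r) :
    ∫ θ in (0 : ℝ)..(π / 2), cos θ / (1 + r ^ 2 * (1 - sin θ)) = log (1 + r ^ 2) / r ^ 2 := by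
  have hpos : ∀ θ, 0 < 1 + r ^ 2 * (1 - sin θ) := fun θ => by
    have := sub_nonneg.2 (sin_le_one θ)
    positivity
  have hcont : Continuous fun θ => cos θ / (1 + r ^ 2 * (1 - sin θ)) :=
    continuous_cos.div (by fun_prop) fun θ => (hpos θ).ne'
  have hprimitive : ∀ θ, HasDerivAt (fun θ => -(log (1 + r ^ 2 * (1 - sin θ)) / r ^ 2))
      (cos θ / (1 + r ^ 2 * (1 - sin θ))) θ := fun θ => by
    have hin : HasDerivAt (fun θ => 1 + r ^ 2 * (1 - sin θ)) (r ^ 2 * -cos θ) θ :=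
      (((hasDerivAt_sin θ).const_sub 1).const_mul (r ^ 2)).const_add 1
    refine ((hin.log (hpos θ).ne').div_const (r ^ 2)).neg.congr_deriv ?_
    have := (hpos θ).ne'
    field_simp
  rw [intervalIntegral.integral_eq_sub_of_hasDerivAt (fun θ _ => hprimitive θ)
    (hcont.intervalIntegrable _ _)]
  simp

lemma abs_planeWaveMean_zero_cos_le {C r : ℝ} (hψ : Continuous ψ) (hC : 0 ≤ C)
    (hψ₀ : ∀ s ≤ 0, ψ s = 0) (hdecay : ∀ s, |ψ s| ≤ C / (1 + s ^ 2)) (hr : 0 < r) :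
    |planeWaveMean ψ cos (0, r)| ≤ C * (log (1 + r ^ 2) / r ^ 2) := by
  have hpos : ∀ θ, 0 < 1 + r ^ 2 * (1 - sin θ) := fun θ => by
    have := sub_nonneg.2 (sin_le_one θ)
    positivity
  have hcont : Continuous fun θ => C * (cos θ / (1 + r ^ 2 * (1 - sin θ))) :=
    continuous_const.mul (continuous_cos.div (by fun_prop) fun θ => (hpos θ).ne')
  rw [planeWaveMean_zero_eq_integral_half hψ continuous_cos hψ₀ hr.le,
    ← integral_cos_div_one_add hr, ← intervalIntegral.integral_const_mul]
  refine (intervalIntegral.abs_integral_le_integral_abs (by positivity)).trans ?_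
  refine intervalIntegral.integral_mono_on (by positivity)
    ((by fun_prop : Continuous _).intervalIntegrable _ _) (hcont.intervalIntegrable _ _)
    fun θ hθ => ?_
  have hcos := (cos_mem_Icc_zero_one hθ).1
  have hsin := sin_mem_Icc_zero_one hθ
  have hsin_le : 1 - sin θ ≤ cos θ ^ 2 := by nlinarith [sin_sq_add_cos_sq θ, hsin.1, hsin.2]
  calc |ψ (r * cos θ) * cos θ| = |ψ (r * cos θ)| * cos θ := by rw [abs_mul, abs_of_nonneg hcos]
    _ ≤ C / (1 + (r * cos θ) ^ 2) * cos θ := by gcongr; exact hdecay _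
    _ ≤ C / (1 + r ^ 2 * (1 - sin θ)) * cos θ := by
      have := hpos θ
      rw [mul_pow]
      gcongr
    _ = C * (cos θ / (1 + r ^ 2 * (1 - sin θ))) := by ring

lemma log_one_add_sq_sq_le {r : ℝ} (hr : 0 ≤ r) : log (1 + r ^ 2) ^ 2 ≤ 16 * (1 + r) := by
  have hlog : log (1 + r ^ 2) ≤ 4 * (1 + r) ^ (1 / 2 : ℝ) := by
    have hrpow := log_le_rpow_div (x := 1 + r) (by positivity) (ε := 1 / 2) (by norm_num)
    calc log (1 + r ^ 2) ≤ log ((1 + r) ^ 2) := log_le_log (by positivity) (by nlinarith)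
      _ = 2 * log (1 + r) := by rw [log_pow]; norm_num
      _ ≤ 4 * (1 + r) ^ (1 / 2 : ℝ) := by linarith
  have hlog₀ : 0 ≤ log (1 + r ^ 2) := log_nonneg (by nlinarith)
  calc log (1 + r ^ 2) ^ 2 ≤ (4 * √(1 + r)) ^ 2 := by rw [sqrt_eq_rpow]; gcongr
    _ = 16 * (1 + r) := by rw [mul_pow, sq_sqrt (by positivity)]; norm_num

lemma sq_planeWaveMean_zero_deriv_sin_sq_mul_le {C r : ℝ} (hψ : ContDiff ℝ 1 ψ) (hC : 0 ≤ C)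
    (hψ₀ : ∀ s ≤ 0, ψ s = 0) (hdecay : ∀ s, |ψ s| ≤ C / (1 + s ^ 2)) (hr : 0 < r) :
    planeWaveMean (deriv ψ) (fun θ => sin θ ^ 2) (0, r) ^ 2 * r ^ 3
      ≤ 16 * C ^ 2 / r ^ 3 + 16 * C ^ 2 / r ^ 2 := by
  have hle := abs_planeWaveMean_zero_cos_le hψ.continuous hC hψ₀ hdecay hr
  rw [planeWaveMean_deriv_sin_sq hψ hr]
  calc (planeWaveMean ψ cos (0, r) / r) ^ 2 * r ^ 3 = |planeWaveMean ψ cos (0, r)| ^ 2 * r := by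
        rw [sq_abs]; field_simp
    _ ≤ (C * (log (1 + r ^ 2) / r ^ 2)) ^ 2 * r := by gcongr
    _ = C ^ 2 * log (1 + r ^ 2) ^ 2 / r ^ 3 := by field_simp
    _ ≤ C ^ 2 * (16 * (1 + r)) / r ^ 3 := by gcongr; exact log_one_add_sq_sq_le hr.le
    _ = 16 * C ^ 2 / r ^ 3 + 16 * C ^ 2 / r ^ 2 := by field_simp

end PlaneWaveMean

/-! ### The test wave -/

/-- A solution of the free radial wave equation on `{r > 0}`, given by its gradient `(c, d)`, that
vanishes inside the light cone `{r ≤ α + t}`. -/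
structure IsOutgoingFreeWave (α : ℝ) (c d : ℝ × ℝ → ℝ) : Prop where
  isWavePair : IsWavePair {q | 0 < q.2} c d 0
  fst_eq_zero : ∀ t r, 0 ≤ r → r ≤ α + t → c (t, r) = 0
  snd_eq_zero : ∀ t r, 0 ≤ r → r ≤ α + t → d (t, r) = 0

/-- An outgoing free wave of finite energy whose radial derivative at time `0` is
`r⁻³ ∫_0^r x² m(x) dx` and whose time derivative is integrable in time. -/
structure IsTestWave (α B : ℝ) (m : ℝ → ℝ) (c d : ℝ × ℝ → ℝ) : Prop
    extends IsOutgoingFreeWave α c d where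
  integral_abs_le : ∀ T r, 0 ≤ T → 0 < r → ∫ t in (0 : ℝ)..T, |c (t, r)| ≤ B / r
  initial_snd : ∀ r, 0 < r → d (0, r) * r ^ 3 = ∫ x in (0 : ℝ)..r, x ^ 2 * m x
  initial_energy_le : ∃ E, ∀ Λ, α ≤ Λ → ∫ r in α..Λ, (c (0, r) ^ 2 + d (0, r) ^ 2) * r ^ 3 ≤ E

lemma planeWaveMean_abelTransform_sin_sq {m : ℝ → ℝ} (hm : Continuous m)
    (hm₀ : ∀ x ≤ 0, m x = 0) {r : ℝ} (hr : 0 < r) :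
    planeWaveMean (abelTransform m) (fun θ => sin θ ^ 2) (0, r)
      = 1 / 2 * ((∫ x in (0 : ℝ)..r, m x) - (∫ x in (0 : ℝ)..r, x ^ 2 * m x) / r ^ 2) := by
  have hscale := intervalIntegral.mul_integral_comp_mul_left (a := 0) (b := 1)
    (f := fun x => m x * (1 - x ^ 2 / r ^ 2)) r
  have hsplit : ∫ x in (0 : ℝ)..r, m x * (1 - x ^ 2 / r ^ 2)
      = (∫ x in (0 : ℝ)..r, m x) - (∫ x in (0 : ℝ)..r, x ^ 2 * m x) / r ^ 2 := by
    rw [← intervalIntegral.integral_div, ← intervalIntegral.integral_sub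
      (hm.intervalIntegrable _ _) ((by fun_prop : Continuous _).intervalIntegrable _ _)]
    exact intervalIntegral.integral_congr fun x _ => by ring
  calc planeWaveMean (abelTransform m) (fun θ => sin θ ^ 2) (0, r)
      = ∫ θ in (0 : ℝ)..(π / 2), abelTransform m (r * cos θ) * sin θ ^ 2 :=
        planeWaveMean_zero_eq_integral_half (continuous_abelTransform hm) (by fun_prop)
          (fun s hs => abelTransform_eq_zero_of_le le_rfl hm₀ hs) hr.le
    _ = 2 / π * r * ∫ θ in (0 : ℝ)..(π / 2),
          (∫ φ in (0 : ℝ)..(π / 2), m (r * (cos θ * sin φ))) * (cos θ * sin θ ^ 2) := by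
        rw [← intervalIntegral.integral_const_mul]
        refine intervalIntegral.integral_congr fun θ _ => ?_
        simp only [abelTransform, mul_assoc]
        ring
    _ = 2 / π * r * (π / 4 * ∫ y in (0 : ℝ)..1, m (r * y) * (1 - y ^ 2)) := by
        rw [integral_integral_comp_cos_mul_sin (g := fun y => m (r * y)) (by fun_prop)]
    _ = 1 / 2 * (r * ∫ y in (0 : ℝ)..1, m (r * y) * (1 - (r * y) ^ 2 / r ^ 2)) := by
        have hcancel : ∀ y, (r * y) ^ 2 / r ^ 2 = y ^ 2 := fun y => by field_simp
        simp only [hcancel]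
        field_simp
        norm_num
    _ = _ := by rw [hscale, mul_zero, mul_one, hsplit]

lemma planeWaveMean_deriv_abelTransform_cos_mul_sin_sq {m : ℝ → ℝ} (hm : ContDiff ℝ 1 m)
    (hm₀ : ∀ x ≤ 0, m x = 0) {r : ℝ} (hr : 0 < r) :
    planeWaveMean (deriv (abelTransform m)) (fun θ => cos θ * sin θ ^ 2) (0, r) * r ^ 3
      = ∫ x in (0 : ℝ)..r, x ^ 2 * m x := by
  have hmc := hm.continuous
  have hmean : HasDerivAt (fun x => planeWaveMean (abelTransform m) (fun θ => sin θ ^ 2) (0, x))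
      (planeWaveMean (deriv (abelTransform m)) (fun θ => cos θ * sin θ ^ 2) (0, r)) r := by
    simpa [Function.comp_def] using (hasFDerivAt_planeWaveMean (w := fun θ => sin θ ^ 2)
      (contDiff_abelTransform hm) (by fun_prop) (0, r)).comp_hasDerivAt r
      ((hasDerivAt_const r (0 : ℝ)).prodMk (hasDerivAt_id r))
  have hmass : HasDerivAt (fun x => ∫ y in (0 : ℝ)..x, m y) (m r) r :=
    (hmc.integral_hasStrictDerivAt 0 r).hasDerivAt
  have hmoment : HasDerivAt (fun x => ∫ y in (0 : ℝ)..x, y ^ 2 * m y) (r ^ 2 * m r) r :=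
    ((by fun_prop : Continuous fun y : ℝ => y ^ 2 * m y).integral_hasStrictDerivAt 0 r).hasDerivAt
  have hformula := (hmass.sub (hmoment.div (hasDerivAt_pow 2 r) (by positivity))).const_mul
    (1 / 2 : ℝ)
  have heq : (fun x => planeWaveMean (abelTransform m) (fun θ => sin θ ^ 2) (0, x)) =ᶠ[nhds r]
      fun x => 1 / 2 * ((∫ y in (0 : ℝ)..x, m y) - (∫ y in (0 : ℝ)..x, y ^ 2 * m y) / x ^ 2) := by
    filter_upwards [lt_mem_nhds hr] with x hx using planeWaveMean_abelTransform_sin_sq hmc hm₀ hx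
  rw [hmean.unique (hformula.congr_of_eventuallyEq heq)]
  field_simp
  push_cast
  ring

lemma deriv_eq_zero_of_forall_le {f : ℝ → ℝ} {α s : ℝ} (hf : DifferentiableAt ℝ f s)
    (hf₀ : ∀ x ≤ α, f x = 0) (hs : s ≤ α) : deriv f s = 0 := by
  have hzero : HasDerivWithinAt f 0 (Iic s) s :=
    (hasDerivWithinAt_const s (Iic s) (0 : ℝ)).congr (fun x hx => hf₀ x (le_trans hx hs))
      (hf₀ s hs)
  exact (uniqueDiffWithinAt_Iic s).eq_deriv _ hf.hasDerivAt.hasDerivWithinAt hzero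

lemma planeWaveMean_eq_zero_of_le {ψ w : ℝ → ℝ} {α t r : ℝ} (hψ : ∀ s ≤ α, ψ s = 0) (hr : 0 ≤ r)
    (hrt : r ≤ α + t) : planeWaveMean ψ w (t, r) = 0 := by
  have hzero : ∀ θ, ψ (r * cos θ - t) = 0 := fun θ =>
    hψ _ (by nlinarith [cos_le_one θ])
  simp [planeWaveMean, hzero]

namespace IsMeanZeroProfile

variable {α β : ℝ} {m : ℝ → ℝ}

lemma exists_abs_integral_sq_mul_le (hm : IsMeanZeroProfile α β m) :
    ∃ M, ∀ r, α ≤ r → |∫ x in (0 : ℝ)..r, x ^ 2 * m x| ≤ M := by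
  have hcont : Continuous fun x => x ^ 2 * m x := by
    have := hm.contDiff.continuous
    fun_prop
  obtain ⟨M, hM⟩ := (isCompact_Icc (a := α) (b := max α β)).exists_bound_of_continuousOn
    (intervalIntegral.continuous_primitive (μ := volume) hcont.intervalIntegrable 0).continuousOn
  refine ⟨M, fun r hr => ?_⟩
  rcases le_total r (max α β) with h | h
  · exact hM r ⟨hr, h⟩
  · have htail : ∫ x in (max α β)..r, x ^ 2 * m x = 0 :=
      intervalIntegral.integral_zero_ae (.of_forall fun x hx => by
        rw [hm.eq_zero_of_ge x ((le_max_right α β).trans (uIoc_of_le h ▸ hx).1.le), mul_zero])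
    rw [← intervalIntegral.integral_add_adjacent_intervals (hcont.intervalIntegrable 0 (max α β))
      (hcont.intervalIntegrable _ r), htail, add_zero]
    exact hM _ ⟨le_max_left α β, le_rfl⟩

lemma exists_initial_energy_le (hm : IsMeanZeroProfile α β m) (hα : 0 < α) (hαβ : α ≤ β) :
    ∃ E, ∀ Λ, α ≤ Λ → ∫ r in α..Λ,
      ((-planeWaveMean (deriv (abelTransform m)) (fun θ => sin θ ^ 2) (0, r)) ^ 2
        + planeWaveMean (deriv (abelTransform m)) (fun θ => cos θ * sin θ ^ 2) (0, r) ^ 2) * r ^ 3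
      ≤ E := by
  obtain ⟨C, hC, hdecay⟩ := hm.exists_abs_abelTransform_le hα hαβ
  obtain ⟨M, hM⟩ := hm.exists_abs_integral_sq_mul_le
  have hψ : ContDiff ℝ 1 (abelTransform m) :=
    contDiff_abelTransform (n := 1) (hm.contDiff.of_le (by norm_num))
  have hψ₁ := hψ.continuous_deriv le_rfl
  have hcont₁ := continuous_planeWaveMean (w := fun θ => sin θ ^ 2) hψ₁ (by fun_prop)
  have hcont₂ := continuous_planeWaveMean (w := fun θ => cos θ * sin θ ^ 2) hψ₁ (by fun_prop)
  refine ⟨16 * C ^ 2 / (((1 : ℕ) + 1) * α ^ (1 + 1)) + 16 * C ^ 2 / (((0 : ℕ) + 1) * α ^ (0 + 1))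
    + M ^ 2 / (((1 : ℕ) + 1) * α ^ (1 + 1)), fun Λ hΛ => ?_⟩
  have hf_int : ∀ (K : ℝ) (n : ℕ), IntervalIntegrable (fun x : ℝ => K / x ^ n) volume α Λ :=
    fun K n => (continuousOn_div_pow hα hΛ K n).intervalIntegrable
  calc _ ≤ ∫ r in α..Λ, (16 * C ^ 2 / r ^ (1 + 2) + 16 * C ^ 2 / r ^ (0 + 2)
        + M ^ 2 / r ^ (1 + 2)) := by
        refine intervalIntegral.integral_mono_on hΛ
          ((by fun_prop : Continuous _).intervalIntegrable _ _)
          (((hf_int _ _).add (hf_int _ _)).add (hf_int _ _)) fun r hr => ?_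
        have hr₀ : 0 < r := hα.trans_le hr.1
        rw [add_mul, neg_sq]
        refine add_le_add (sq_planeWaveMean_zero_deriv_sin_sq_mul_le hψ hC (fun s hs =>
          abelTransform_eq_zero_of_le hα.le hm.eq_zero_of_le (hs.trans hα.le)) hdecay hr₀) ?_
        have hinit := planeWaveMean_deriv_abelTransform_cos_mul_sin_sq
          (hm.contDiff.of_le (by norm_num)) (fun x hx => hm.eq_zero_of_le x (hx.trans hα.le)) hr₀
        rw [le_div_iff₀ (by positivity)]
        calc _ = |∫ x in (0 : ℝ)..r, x ^ 2 * m x| ^ 2 := by rw [sq_abs, ← hinit]; ring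
          _ ≤ M ^ 2 := by gcongr; exact hM r hr.1
    _ ≤ _ := by
        rw [intervalIntegral.integral_add ((hf_int _ _).add (hf_int _ _)) (hf_int _ _),
          intervalIntegral.integral_add (hf_int _ _) (hf_int _ _)]
        gcongr <;> exact integral_div_pow_le hα hΛ (by positivity) _

theorem exists_isTestWave (hm : IsMeanZeroProfile α β m) (hα : 0 < α) (hαβ : α ≤ β) :
    ∃ c d, IsTestWave α (π * (2 * β * ∫ x in α..β, |m x|)) m c d := by
  have hψ : ContDiff ℝ 2 (abelTransform m) := contDiff_abelTransform hm.contDiff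
  have hψ₁ : ContDiff ℝ 1 (abelTransform m) := hψ.of_le (by norm_num)
  have hψ' : ∀ s ≤ α, deriv (abelTransform m) s = 0 := fun s hs =>
    deriv_eq_zero_of_forall_le (hψ₁.differentiable one_ne_zero s)
      (fun x hx => abelTransform_eq_zero_of_le hα.le hm.eq_zero_of_le hx) hs
  have hψ₂ : ContDiff ℝ (1 + 1) (abelTransform m) := by rwa [one_add_one_eq_two]
  refine ⟨_, _, ⟨isWavePair_planeWaveMean hψ₂.deriv', ?_, ?_⟩, ?_, ?_,
    hm.exists_initial_energy_le hα hαβ⟩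
  · intro t r hr hrt
    rw [planeWaveMean_eq_zero_of_le hψ' hr hrt, neg_zero]
  · exact fun t r hr hrt => planeWaveMean_eq_zero_of_le hψ' hr hrt
  · intro T r hT hr
    have hle := integral_abs_planeWaveMean_le hψ.continuous continuous_cos abs_cos_le_one
      (fun x y hxy => hm.integral_abs_abelTransform_le hα hαβ hxy) hT r
    simp only [abs_neg, planeWaveMean_deriv_sin_sq hψ₁ (q := (_, r)) hr, abs_div, abs_of_pos hr,
      intervalIntegral.integral_div]
    gcongr
  · exact fun r hr => planeWaveMean_deriv_abelTransform_cos_mul_sin_sq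
      (hm.contDiff.of_le (by norm_num)) (fun x hx => hm.eq_zero_of_le x (hx.trans hα.le)) hr

end IsMeanZeroProfile

/-! ### Green's identity against an outgoing free wave -/

/-- The exterior light cone `{r > ρ + |t|}`. -/
def exteriorCone (ρ : ℝ) : Set (ℝ × ℝ) := {q | ρ + |q.1| < q.2}

lemma isOpen_exteriorCone (ρ : ℝ) : IsOpen (exteriorCone ρ) :=
  isOpen_lt (by fun_prop) (by fun_prop)

lemma mem_exteriorCone_of_nonneg {ρ t r : ℝ} (ht : 0 ≤ t) (hr : ρ + t < r) :
    (t, r) ∈ exteriorCone ρ :=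
  show ρ + |t| < r by rwa [abs_of_nonneg ht]

namespace IsWavePair

variable {Ω Ω' : Set (ℝ × ℝ)} {a b F : ℝ × ℝ → ℝ} {q : ℝ × ℝ}

lemma mono (h : IsWavePair Ω a b F) (hΩ : Ω' ⊆ Ω) : IsWavePair Ω' a b F := fun q hq => h q (hΩ hq)

lemma continuousAt_fst (h : IsWavePair Ω a b F) (hq : q ∈ Ω) : ContinuousAt a q := by
  obtain ⟨x, y, z, ha, -, -⟩ := h q hq
  exact ha.continuousAt

lemma continuousAt_snd (h : IsWavePair Ω a b F) (hq : q ∈ Ω) : ContinuousAt b q := by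
  obtain ⟨x, y, z, -, hb, -⟩ := h q hq
  exact hb.continuousAt

end IsWavePair

lemma hasDerivAt_max_zero_sq (y : ℝ) :
    HasDerivAt (fun y : ℝ => max 0 y ^ 2) (2 * max 0 y) y := by
  refine hasDerivAt_of_hasDerivAt_of_ne' (x := 0) (g := fun y => 2 * max 0 y) (fun y hy => ?_)
    (by fun_prop) (by fun_prop) y
  rcases hy.lt_or_gt with hneg | hpos
  · rw [max_eq_left hneg.le, mul_zero]
    refine (hasDerivAt_const y (0 : ℝ)).congr_of_eventuallyEq ?_
    filter_upwards [gt_mem_nhds hneg] with z hz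
    rw [max_eq_left hz.le, zero_pow two_ne_zero]
  · rw [max_eq_right hpos.le]
    refine ((hasDerivAt_pow 2 y).congr_deriv (by norm_num)).congr_of_eventuallyEq ?_
    filter_upwards [lt_mem_nhds hpos] with z hz
    rw [max_eq_right hz.le]

/-- A `C¹` cutoff in the ingoing variable `t + r`, decreasing from `1` at `0` to `0` at `L`. -/
noncomputable def cutoff (L x : ℝ) : ℝ := max 0 (1 - x / L) ^ 2

/-- The derivative of `cutoff L`. -/
noncomputable def cutoffDeriv (L x : ℝ) : ℝ := -(2 / L) * max 0 (1 - x / L)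

lemma hasDerivAt_cutoff (L x : ℝ) : HasDerivAt (cutoff L) (cutoffDeriv L x) x := by
  have hlin : HasDerivAt (fun x : ℝ => 1 - x / L) (-(1 / L)) x :=
    ((hasDerivAt_id x).div_const L).const_sub 1
  exact ((hasDerivAt_max_zero_sq _).comp x hlin).congr_deriv (by unfold cutoffDeriv; ring)

@[fun_prop]
lemma continuous_cutoff (L : ℝ) : Continuous (cutoff L) := by
  unfold cutoff
  fun_prop

@[fun_prop]
lemma continuous_cutoffDeriv (L : ℝ) : Continuous (cutoffDeriv L) := by
  unfold cutoffDeriv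
  fun_prop

lemma cutoff_nonneg (L x : ℝ) : 0 ≤ cutoff L x := sq_nonneg _

section Cutoff

variable {L x : ℝ}

lemma max_zero_one_sub_div_le_one (hL : 0 < L) (hx : 0 ≤ x) : max 0 (1 - x / L) ≤ 1 :=
  max_le zero_le_one (sub_le_self _ (by positivity))

lemma cutoff_le_one (hL : 0 < L) (hx : 0 ≤ x) : cutoff L x ≤ 1 :=
  pow_le_one₀ (le_max_left _ _) (max_zero_one_sub_div_le_one hL hx)

lemma cutoff_eq_zero_of_le (hL : 0 < L) (hx : L ≤ x) : cutoff L x = 0 := by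
  rw [cutoff, max_eq_left (sub_nonpos.2 ((one_le_div hL).2 hx)), zero_pow two_ne_zero]

lemma sq_one_sub_div_le_cutoff {y : ℝ} (hL : 0 < L) (hxy : x ≤ y) (hy : y ≤ L) :
    (1 - y / L) ^ 2 ≤ cutoff L x := by
  have : 0 ≤ 1 - y / L := sub_nonneg.2 ((div_le_one hL).2 hy)
  unfold cutoff
  gcongr
  exact le_max_of_le_right (by gcongr)

lemma cutoffDeriv_nonpos (hL : 0 < L) : cutoffDeriv L x ≤ 0 :=
  mul_nonpos_of_nonpos_of_nonneg (by simp only [Left.neg_nonpos_iff]; positivity)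
    (le_max_left _ _)

lemma abs_cutoffDeriv_le (hL : 0 < L) (hx : 0 ≤ x) : |cutoffDeriv L x| ≤ 2 / L := by
  rw [cutoffDeriv, abs_mul, abs_neg, abs_of_pos (by positivity),
    abs_of_nonneg (le_max_left _ _)]
  exact mul_le_of_le_one_right (by positivity) (max_zero_one_sub_div_le_one hL hx)

end Cutoff

/-- The polarized energy density of `(a, b)` and `(c, d)`, localized by the cutoff. With `c` and `d`
exchanged it is the corresponding energy flux. -/
noncomputable def energyFlux (L : ℝ) (a b c d : ℝ × ℝ → ℝ) (q : ℝ × ℝ) : ℝ :=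
  (a q * c q + b q * d q) * (cutoff L (q.1 + q.2) * q.2 ^ 3)

/-- The spacetime divergence `∂_t (energyFlux L a b c d) - ∂_r (energyFlux L a b d c)` when
`(a, b)` solves the wave equation with source `F` and `(c, d)` is free. -/
noncomputable def fluxDivergence (L : ℝ) (a b c d F : ℝ × ℝ → ℝ) (q : ℝ × ℝ) : ℝ :=
  cutoff L (q.1 + q.2) * q.2 ^ 3 * (c q * F q)
    + cutoffDeriv L (q.1 + q.2) * q.2 ^ 3 * ((a q - b q) * (c q - d q))

lemma hasFDerivAt_cutoff_mul_cube (L : ℝ) (q : ℝ × ℝ) :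
    HasFDerivAt (fun q : ℝ × ℝ => cutoff L (q.1 + q.2) * q.2 ^ 3)
      (linForm (cutoffDeriv L (q.1 + q.2) * q.2 ^ 3)
        (cutoffDeriv L (q.1 + q.2) * q.2 ^ 3 + cutoff L (q.1 + q.2) * (3 * q.2 ^ 2))) q := by
  have hsum := (hasDerivAt_cutoff L (q.1 + q.2)).comp_hasFDerivAt q
    ((hasFDerivAt_fst (𝕜 := ℝ) (p := q)).add hasFDerivAt_snd)
  refine (hsum.mul ((hasFDerivAt_snd (𝕜 := ℝ) (p := q)).pow 3)).congr_fderiv ?_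
  ext <;> simp <;> ring

section Green

variable {ρ α L : ℝ} {a b c d F : ℝ × ℝ → ℝ} {q : ℝ × ℝ}

lemma IsWavePair.divergence_energyFlux {Ω : Set (ℝ × ℝ)} (hv : IsWavePair Ω a b F)
    (hw : IsWavePair Ω c d 0) (hq : q ∈ Ω) (hr : q.2 ≠ 0) :
    DifferentiableAt ℝ (energyFlux L a b c d) q ∧ DifferentiableAt ℝ (energyFlux L a b d c) q ∧
      fderiv ℝ (energyFlux L a b c d) q (1, 0) - fderiv ℝ (energyFlux L a b d c) q (0, 1)
        = fluxDivergence L a b c d F q := by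
  obtain ⟨x, y, z, ha, hb, hF⟩ := hv q hq
  obtain ⟨x', y', z', hc, hd, hfree⟩ := hw q hq
  have hweight := hasFDerivAt_cutoff_mul_cube L q
  have hdensity : HasFDerivAt (energyFlux L a b c d) _ q :=
    ((ha.mul hc).add (hb.mul hd)).mul hweight
  have hflux : HasFDerivAt (energyFlux L a b d c) _ q := ((ha.mul hd).add (hb.mul hc)).mul hweight
  refine ⟨hdensity.differentiableAt, hflux.differentiableAt, ?_⟩
  rw [hdensity.fderiv, hflux.fderiv, fluxDivergence, ← hF]
  have hx' : x' = z' + 3 / q.2 * d q := by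
    rw [Pi.zero_apply] at hfree
    linarith
  simp only [Pi.add_apply, Pi.mul_apply, hx', smul_add, add_apply, smul_apply, linForm_apply,
    mul_one, mul_zero, add_zero, smul_eq_mul, zero_add]
  field_simp
  ring

lemma IsWavePair.continuousAt_fluxDivergence {Ω : Set (ℝ × ℝ)} (hv : IsWavePair Ω a b F)
    (hw : IsWavePair Ω c d 0) (hF : ContinuousAt F q) (hq : q ∈ Ω) :
    ContinuousAt (fluxDivergence L a b c d F) q := by
  have ha := hv.continuousAt_fst hq
  have hb := hv.continuousAt_snd hq
  have hc := hw.continuousAt_fst hq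
  have hd := hw.continuousAt_snd hq
  have hcut : ContinuousAt (fun q : ℝ × ℝ => cutoff L (q.1 + q.2) * q.2 ^ 3) q :=
    (by fun_prop : Continuous _).continuousAt
  have hcut' : ContinuousAt (fun q : ℝ × ℝ => cutoffDeriv L (q.1 + q.2) * q.2 ^ 3) q :=
    (by fun_prop : Continuous _).continuousAt
  exact (hcut.mul (hc.mul hF)).add (hcut'.mul ((ha.sub hb).mul (hc.sub hd)))

namespace IsOutgoingFreeWave

lemma isWavePair_exteriorCone (hw : IsOutgoingFreeWave α c d) (hρ : 0 ≤ ρ) :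
    IsWavePair (exteriorCone ρ) c d 0 :=
  hw.isWavePair.mono fun q hq => (add_nonneg hρ (abs_nonneg q.1)).trans_lt hq

lemma energyFlux_eq_zero (hw : IsOutgoingFreeWave α c d) (hr : 0 ≤ q.2) (hrt : q.2 ≤ α + q.1) :
    energyFlux L a b c d q = 0 := by
  simp [energyFlux, hw.fst_eq_zero q.1 q.2 hr hrt, hw.snd_eq_zero q.1 q.2 hr hrt]

lemma energyFlux_swap_eq_zero (hw : IsOutgoingFreeWave α c d) (hr : 0 ≤ q.2)
    (hrt : q.2 ≤ α + q.1) : energyFlux L a b d c q = 0 := by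
  simp [energyFlux, hw.fst_eq_zero q.1 q.2 hr hrt, hw.snd_eq_zero q.1 q.2 hr hrt]

lemma fluxDivergence_eq_zero (hw : IsOutgoingFreeWave α c d) (hr : 0 ≤ q.2)
    (hrt : q.2 ≤ α + q.1) : fluxDivergence L a b c d F q = 0 := by
  simp [fluxDivergence, hw.fst_eq_zero q.1 q.2 hr hrt, hw.snd_eq_zero q.1 q.2 hr hrt]

/-- The region `{r < α + t}` where `(a, b)` is not controlled is harmless: everything paired with
the outgoing wave vanishes there. -/
lemma divergence_energyFlux (hw : IsOutgoingFreeWave α c d) (hρ : 0 ≤ ρ) (hρα : ρ < α)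
    (hv : IsWavePair (exteriorCone ρ) a b F) (hF : ContinuousOn F (exteriorCone ρ))
    (ht : 0 ≤ q.1) (hr : α ≤ q.2) :
    DifferentiableAt ℝ (energyFlux L a b c d) q ∧ DifferentiableAt ℝ (energyFlux L a b d c) q ∧
      fderiv ℝ (energyFlux L a b c d) q (1, 0) - fderiv ℝ (energyFlux L a b d c) q (0, 1)
        = fluxDivergence L a b c d F q ∧
      ContinuousAt (fluxDivergence L a b c d F) q := by
  have hr₀ : 0 < q.2 := by linarith
  rcases lt_or_ge q.2 (α + q.1) with hin | hout
  · have hpos : IsOpen {z : ℝ × ℝ | 0 < z.2} := isOpen_lt (by fun_prop) (by fun_prop)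
    have hlt : IsOpen {z : ℝ × ℝ | z.2 < α + z.1} := isOpen_lt (by fun_prop) (by fun_prop)
    have hnhds := (hpos.inter hlt).mem_nhds ⟨hr₀, hin⟩
    have hzero : energyFlux L a b c d =ᶠ[nhds q] fun _ => 0 := by
      filter_upwards [hnhds] with z hz using hw.energyFlux_eq_zero hz.1.le hz.2.le
    have hzero_swap : energyFlux L a b d c =ᶠ[nhds q] fun _ => 0 := by
      filter_upwards [hnhds] with z hz using hw.energyFlux_swap_eq_zero hz.1.le hz.2.le
    have hzero_div : fluxDivergence L a b c d F =ᶠ[nhds q] fun _ => 0 := by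
      filter_upwards [hnhds] with z hz using hw.fluxDivergence_eq_zero hz.1.le hz.2.le
    refine ⟨(differentiableAt_const _).congr_of_eventuallyEq hzero,
      (differentiableAt_const _).congr_of_eventuallyEq hzero_swap, ?_,
      continuousAt_const.congr hzero_div.symm⟩
    rw [hzero.fderiv_eq, hzero_swap.fderiv_eq, hzero_div.eq_of_nhds]
    simp
  · have hq : q ∈ exteriorCone ρ := mem_exteriorCone_of_nonneg ht (by linarith)
    have hfree := hw.isWavePair_exteriorCone hρ
    obtain ⟨hdensity, hflux, hdiv⟩ := hv.divergence_energyFlux (L := L) hfree hq hr₀.ne'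
    exact ⟨hdensity, hflux, hdiv, hv.continuousAt_fluxDivergence hfree
      (hF.continuousAt ((isOpen_exteriorCone ρ).mem_nhds hq)) hq⟩

theorem integral_integral_fluxDivergence (hw : IsOutgoingFreeWave α c d) (hρ : 0 ≤ ρ)
    (hρα : ρ < α) (hv : IsWavePair (exteriorCone ρ) a b F)
    (hF : ContinuousOn F (exteriorCone ρ)) (hL : α ≤ L) {T : ℝ} (hT : 0 ≤ T) :
    ∫ t in (0 : ℝ)..T, ∫ r in α..L, fluxDivergence L a b c d F (t, r)
      = (∫ r in α..L, energyFlux L a b c d (T, r)) - ∫ r in α..L, energyFlux L a b c d (0, r) := by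
  set S := uIcc 0 T ×ˢ uIcc α L
  have hdiv := fun (q : ℝ × ℝ) (hq : q ∈ S) => hw.divergence_energyFlux (L := L) hρ hρα hv hF
    (uIcc_of_le hT ▸ hq.1).1 (uIcc_of_le hL ▸ hq.2).1
  have hsub : ∀ q ∈ Ioo (min 0 T) (max 0 T) ×ˢ Ioo (min α L) (max α L) \ (∅ : Set (ℝ × ℝ)), q ∈ S :=
    fun q hq => ⟨Ioo_subset_Icc_self hq.1.1, Ioo_subset_Icc_self hq.1.2⟩
  have heq : ∀ q ∈ S, fderiv ℝ (energyFlux L a b c d) q (1, 0)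
      + (-fderiv ℝ (energyFlux L a b d c) q) (0, 1) = fluxDivergence L a b c d F q :=
    fun q hq => (sub_eq_add_neg _ _).symm.trans (hdiv q hq).2.2.1
  have hcont : ContinuousOn (fluxDivergence L a b c d F) S := fun q hq =>
    (hdiv q hq).2.2.2.continuousWithinAt
  have hstokes := integral2_divergence_prod_of_hasFDerivAt_off_countable (energyFlux L a b c d)
    (fun q => -energyFlux L a b d c q) (fderiv ℝ (energyFlux L a b c d))
    (fun q => -fderiv ℝ (energyFlux L a b d c) q) 0 α T L ∅ countable_empty
    (fun q hq => (hdiv q hq).1.continuousAt.continuousWithinAt)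
    (fun q hq => (hdiv q hq).2.1.continuousAt.neg.continuousWithinAt)
    (fun q hq => (hdiv q (hsub q hq)).1.hasFDerivAt)
    (fun q hq => (hdiv q (hsub q hq)).2.1.hasFDerivAt.neg)
    ((hcont.congr heq).integrableOn_compact (isCompact_uIcc.prod isCompact_uIcc))
  have houter : ∀ t ∈ uIcc 0 T, -energyFlux L a b d c (t, L) = 0 := fun t ht => by
    have ht₀ := (uIcc_of_le hT ▸ ht).1
    rw [energyFlux, cutoff_eq_zero_of_le (by linarith) (le_add_of_nonneg_left ht₀), zero_mul,
      mul_zero, neg_zero]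
  have hinner : ∀ t ∈ uIcc 0 T, -energyFlux L a b d c (t, α) = 0 := fun t ht => by
    rw [hw.energyFlux_swap_eq_zero (hρ.trans hρα.le)
      (le_add_of_nonneg_right (uIcc_of_le hT ▸ ht).1), neg_zero]
  rw [intervalIntegral.integral_congr houter, intervalIntegral.integral_congr hinner,
    sub_self, zero_add] at hstokes
  rw [← hstokes]
  exact intervalIntegral.integral_congr fun t ht => intervalIntegral.integral_congr fun r hr =>
    (heq (t, r) ⟨ht, hr⟩).symm

end IsOutgoingFreeWave

end Green

/-! ### Energy estimates -/

/-- The radial energy density of a wave given by its gradient `(a, b)`. -/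
noncomputable def energyDensity (a b : ℝ × ℝ → ℝ) (q : ℝ × ℝ) : ℝ := (a q ^ 2 + b q ^ 2) * q.2 ^ 3

/-- The energy of `(a, b)` at time `t` outside the ball of radius `x` is at most `E`. Stated over
bounded intervals, so that no integrability at infinity is presupposed. -/
def EnergyLE (a b : ℝ × ℝ → ℝ) (t x E : ℝ) : Prop :=
  ∀ y, x ≤ y → ∫ r in x..y, energyDensity a b (t, r) ≤ E

lemma EnergyLE.nonneg {a b : ℝ × ℝ → ℝ} {t x E : ℝ} (h : EnergyLE a b t x E) : 0 ≤ E := by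
  simpa using h x le_rfl

lemma energyDensity_nonneg (a b : ℝ × ℝ → ℝ) {q : ℝ × ℝ} (hq : 0 ≤ q.2) :
    0 ≤ energyDensity a b q := by
  unfold energyDensity
  positivity

lemma IsWavePair.continuousOn_energyDensity {Ω : Set (ℝ × ℝ)} {a b F : ℝ × ℝ → ℝ}
    (h : IsWavePair Ω a b F) : ContinuousOn (energyDensity a b) Ω := fun q hq =>
  ((((h.continuousAt_fst hq).pow 2).add ((h.continuousAt_snd hq).pow 2)).mul
    (by fun_prop : Continuous fun q : ℝ × ℝ => q.2 ^ 3).continuousAt).continuousWithinAt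

lemma intervalIntegrable_slice {Ω : Set (ℝ × ℝ)} {f : ℝ × ℝ → ℝ} {t x y : ℝ}
    (hf : ContinuousOn f Ω) (hxy : x ≤ y) (hΩ : ∀ r, x ≤ r → (t, r) ∈ Ω) :
    IntervalIntegrable (fun r => f (t, r)) volume x y :=
  (hf.comp (Continuous.prodMk_right t).continuousOn fun r hr =>
    hΩ r (uIcc_of_le hxy ▸ hr).1).intervalIntegrable

lemma abs_integral_le_integral {f g : ℝ → ℝ} {a b : ℝ} (hab : a ≤ b)
    (hfg : ∀ x ∈ Ioc a b, |f x| ≤ g x) (hg : IntervalIntegrable g volume a b) :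
    |∫ x in a..b, f x| ≤ ∫ x in a..b, g x := by
  rw [← norm_eq_abs]
  exact intervalIntegral.norm_integral_le_of_norm_le hab (.of_forall hfg) hg

lemma intervalIntegral_nonpos {f : ℝ → ℝ} {a b : ℝ} (hab : a ≤ b) (hf : ∀ x ∈ Ioc a b, f x ≤ 0) :
    ∫ x in a..b, f x ≤ 0 := by
  rw [intervalIntegral.integral_of_le hab]
  exact setIntegral_nonpos measurableSet_Ioc hf

lemma integral_eq_of_eq_zero_left {f : ℝ → ℝ} {a x b : ℝ} (hax : a ≤ x) (hxb : x ≤ b)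
    (hf : ∀ y ∈ Ioc a x, f y = 0) : ∫ y in a..b, f y = ∫ y in x..b, f y := by
  rw [intervalIntegral.integral_of_le (hax.trans hxb), intervalIntegral.integral_of_le hxb]
  refine setIntegral_eq_of_subset_of_forall_sdiff_eq_zero measurableSet_Ioc
    (Ioc_subset_Ioc_left hax) fun y hy => hf y ⟨hy.1.1, not_lt.1 fun h => hy.2 ⟨h, hy.1.2⟩⟩

section Pointwise

variable {L Φ : ℝ} {a b c d F : ℝ × ℝ → ℝ} {q : ℝ × ℝ}

lemma abs_mul_le_weighted_sq {κ : ℝ} (hκ : 0 < κ) (x y : ℝ) :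
    |x * y| ≤ 1 / (2 * κ) * x ^ 2 + κ / 2 * y ^ 2 := by
  have hsq : 1 / (2 * κ) * x ^ 2 + κ / 2 * y ^ 2 - |x| * |y|
      = 1 / (2 * κ) * (|x| - κ * |y|) ^ 2 := by
    rw [← sq_abs x, ← sq_abs y]
    field_simp
    ring
  have : 0 ≤ 1 / (2 * κ) * (|x| - κ * |y|) ^ 2 := by positivity
  rw [abs_mul]
  linarith

lemma abs_energyFlux_le {κ : ℝ} (hκ : 0 < κ) (hL : 0 < L) (ht : 0 ≤ q.1) (hr : 0 ≤ q.2) :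
    |energyFlux L a b c d q|
      ≤ 1 / (2 * κ) * energyDensity a b q + κ / 2 * energyDensity c d q := by
  have hpair : |a q * c q + b q * d q|
      ≤ 1 / (2 * κ) * (a q ^ 2 + b q ^ 2) + κ / 2 * (c q ^ 2 + d q ^ 2) := by
    linarith [abs_add_le (a q * c q) (b q * d q), abs_mul_le_weighted_sq hκ (a q) (c q),
      abs_mul_le_weighted_sq hκ (b q) (d q)]
  have hcut₀ := cutoff_nonneg L (q.1 + q.2)
  have hcut₁ := cutoff_le_one hL (add_nonneg ht hr)
  rw [energyFlux, abs_mul, abs_of_nonneg (by positivity : 0 ≤ cutoff L (q.1 + q.2) * q.2 ^ 3)]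
  calc _ ≤ (1 / (2 * κ) * (a q ^ 2 + b q ^ 2) + κ / 2 * (c q ^ 2 + d q ^ 2)) * (1 * q.2 ^ 3) := by
        gcongr
    _ = _ := by
        unfold energyDensity
        ring

lemma abs_fluxDivergence_le (hL : 0 < L) (ht : 0 ≤ q.1) (hr : 0 < q.2)
    (hF : |F q| ≤ Φ / q.2 ^ 5) :
    |fluxDivergence L a b c d F q|
      ≤ Φ / q.2 ^ 2 * |c q| + 2 / L * (energyDensity a b q + energyDensity c d q) := by
  have hcut₀ := cutoff_nonneg L (q.1 + q.2)
  have hcut₁ := cutoff_le_one hL (add_nonneg ht hr.le)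
  have hcut' := abs_cutoffDeriv_le hL (add_nonneg ht hr.le)
  have hpair : |(a q - b q) * (c q - d q)| ≤ a q ^ 2 + b q ^ 2 + (c q ^ 2 + d q ^ 2) := by
    have := abs_mul_le_weighted_sq one_pos (a q - b q) (c q - d q)
    linarith [sq_nonneg (a q + b q), sq_nonneg (c q + d q)]
  unfold fluxDivergence energyDensity
  refine (abs_add_le _ _).trans (add_le_add ?_ ?_)
  · rw [abs_mul, abs_of_nonneg (by positivity), abs_mul]
    calc _ ≤ 1 * q.2 ^ 3 * (|c q| * (Φ / q.2 ^ 5)) := by gcongr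
      _ = _ := by field_simp
  · rw [abs_mul, abs_mul, abs_of_pos (by positivity : 0 < q.2 ^ 3)]
    calc _ ≤ 2 / L * q.2 ^ 3 * (a q ^ 2 + b q ^ 2 + (c q ^ 2 + d q ^ 2)) := by gcongr
      _ = _ := by ring

end Pointwise

namespace IsOutgoingFreeWave

variable {ρ α L T E E' Φ : ℝ} {a b c d F : ℝ × ℝ → ℝ}

lemma integral_energyFlux_self_le (hw : IsOutgoingFreeWave α c d) (hα : 0 < α)
    (hE : EnergyLE c d 0 α E) (hT : 0 ≤ T) (hL : α ≤ L) :
    ∫ r in α..L, energyFlux L c d c d (T, r) ≤ E := by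
  have hL₀ : 0 < L := hα.trans_le hL
  have hgreen := hw.integral_integral_fluxDivergence le_rfl hα (hw.isWavePair_exteriorCone le_rfl)
    continuousOn_const hL hT
  have hdissipation : ∫ t in (0 : ℝ)..T, ∫ r in α..L, fluxDivergence L c d c d 0 (t, r) ≤ 0 := by
    refine intervalIntegral_nonpos hT fun t _ => intervalIntegral_nonpos hL fun r hr => ?_
    have hr₀ : 0 < r := hα.trans hr.1
    have hcut := mul_nonpos_of_nonpos_of_nonneg (cutoffDeriv_nonpos (x := t + r) hL₀)
      (pow_nonneg hr₀.le 3)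
    simpa [fluxDivergence] using mul_nonpos_of_nonpos_of_nonneg hcut
      (mul_self_nonneg (c (t, r) - d (t, r)))
  have hinitial : |∫ r in α..L, energyFlux L c d c d (0, r)| ≤ E := by
    refine (abs_integral_le_integral hL (fun r hr => ?_) ?_).trans (hE L hL)
    · exact (abs_energyFlux_le one_pos hL₀ le_rfl (hα.trans hr.1).le).trans_eq (by ring)
    · exact intervalIntegrable_slice hw.isWavePair.continuousOn_energyDensity hL
        fun r hr => hα.trans_le hr
  linarith [le_abs_self (∫ r in α..L, energyFlux L c d c d (0, r))]

lemma mul_integral_energyDensity_le (hw : IsOutgoingFreeWave α c d) (hα : 0 < α) {x y : ℝ}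
    (hx : α ≤ x) (hxy : x ≤ y) (hT : 0 ≤ T) (hL : T + y ≤ L) :
    (1 - (T + y) / L) ^ 2 * ∫ r in x..y, energyDensity c d (T, r)
      ≤ ∫ r in α..L, energyFlux L c d c d (T, r) := by
  have hL₀ : 0 < L := by linarith
  have hflux_eq : ∀ q : ℝ × ℝ, energyFlux L c d c d q
      = cutoff L (q.1 + q.2) * energyDensity c d q := fun q => by
    unfold energyFlux energyDensity
    ring
  have hflux : ContinuousOn (energyFlux L c d c d) {q | 0 < q.2} :=
    (((continuous_cutoff L).comp (by fun_prop : Continuous fun q : ℝ × ℝ => q.1 + q.2)).continuousOn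
      |>.mul hw.isWavePair.continuousOn_energyDensity).congr fun q _ => hflux_eq q
  rw [← intervalIntegral.integral_const_mul]
  calc _ ≤ ∫ r in x..y, energyFlux L c d c d (T, r) := by
        refine intervalIntegral.integral_mono_on hxy ((intervalIntegrable_slice
          hw.isWavePair.continuousOn_energyDensity hxy fun r hr => ?_).const_mul _)
          (intervalIntegrable_slice hflux hxy fun r hr => ?_) fun r hr => ?_
        · exact hα.trans_le (hx.trans hr)
        · exact hα.trans_le (hx.trans hr)
        · rw [hflux_eq]
          exact mul_le_mul_of_nonneg_right
            (sq_one_sub_div_le_cutoff hL₀ (by linarith [hr.2]) hL)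
            (energyDensity_nonneg c d (by linarith [hr.1]))
    _ ≤ _ := by
        refine intervalIntegral.integral_mono_interval hx hxy (by linarith) ?_
          (intervalIntegrable_slice hflux (by linarith) fun r hr => hα.trans_le hr)
        filter_upwards [ae_restrict_mem measurableSet_Ioc] with r hr
        rw [Pi.zero_apply, hflux_eq]
        exact mul_nonneg (cutoff_nonneg _ _) (energyDensity_nonneg c d (hα.trans hr.1).le)

lemma energyLE (hw : IsOutgoingFreeWave α c d) (hα : 0 < α) (hE : EnergyLE c d 0 α E)
    (hT : 0 ≤ T) {x : ℝ} (hx : α ≤ x) : EnergyLE c d T x E := by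
  intro y hy
  have hlim : Tendsto (fun L : ℝ => (1 - (T + y) / L) ^ 2 * ∫ r in x..y, energyDensity c d (T, r))
      atTop (nhds ((1 - 0) ^ 2 * ∫ r in x..y, energyDensity c d (T, r))) :=
    (((tendsto_id.const_div_atTop _).const_sub 1).pow 2).mul_const _
  rw [sub_zero, one_pow, one_mul] at hlim
  refine le_of_tendsto hlim ?_
  filter_upwards [eventually_ge_atTop (T + y)] with L hL
  exact (hw.mul_integral_energyDensity_le hα hx hy hT hL).trans
    (hw.integral_energyFlux_self_le hα hE hT (by linarith))

lemma continuousOn_source_pairing (hw : IsOutgoingFreeWave α c d) (Φ : ℝ) :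
    ContinuousOn (fun q : ℝ × ℝ => Φ / q.2 ^ 2 * |c q|) {q | 0 < q.2} := by
  have hweight : ContinuousOn (fun q : ℝ × ℝ => Φ / q.2 ^ 2) {q | 0 < q.2} :=
    continuousOn_const.div (by fun_prop) fun q hq => pow_ne_zero 2 (ne_of_gt hq)
  exact hweight.mul fun q hq => (hw.isWavePair.continuousAt_fst hq).abs.continuousWithinAt

lemma intervalIntegrable_energyDensities (hw : IsOutgoingFreeWave α c d) (hρ : 0 ≤ ρ)
    (hρα : ρ < α) (hv : IsWavePair (exteriorCone ρ) a b F) {t : ℝ} (ht : 0 ≤ t) (hL : α + t ≤ L) :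
    IntervalIntegrable (fun r => energyDensity a b (t, r)) volume (α + t) L ∧
      IntervalIntegrable (fun r => energyDensity c d (t, r)) volume (α + t) L :=
  ⟨intervalIntegrable_slice hv.continuousOn_energyDensity hL fun _ hr =>
      mem_exteriorCone_of_nonneg ht (by linarith),
    intervalIntegrable_slice hw.isWavePair.continuousOn_energyDensity hL fun r hr =>
      show 0 < r by linarith⟩

lemma abs_integral_energyFlux_le (hw : IsOutgoingFreeWave α c d) (hρ : 0 ≤ ρ)
    (hρα : ρ < α) (hv : IsWavePair (exteriorCone ρ) a b F) {κ : ℝ} (hκ : 0 < κ)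
    (hT : 0 ≤ T) (hL : α + T ≤ L) (hE : EnergyLE a b T (α + T) E)
    (hE' : EnergyLE c d T (α + T) E') :
    |∫ r in α..L, energyFlux L a b c d (T, r)| ≤ 1 / (2 * κ) * E + κ / 2 * E' := by
  obtain ⟨hab, hcd⟩ := hw.intervalIntegrable_energyDensities hρ hρα hv hT hL
  rw [integral_eq_of_eq_zero_left (by linarith) hL
    fun r hr => hw.energyFlux_eq_zero (by linarith [hr.1]) hr.2]
  calc _ ≤ ∫ r in (α + T)..L, (1 / (2 * κ) * energyDensity a b (T, r)
          + κ / 2 * energyDensity c d (T, r)) :=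
        abs_integral_le_integral hL (fun r hr => abs_energyFlux_le hκ (by linarith) hT
          (by linarith [hr.1])) ((hab.const_mul _).add (hcd.const_mul _))
    _ = 1 / (2 * κ) * (∫ r in (α + T)..L, energyDensity a b (T, r))
          + κ / 2 * ∫ r in (α + T)..L, energyDensity c d (T, r) := by
        rw [intervalIntegral.integral_add (hab.const_mul _) (hcd.const_mul _),
          intervalIntegral.integral_const_mul, intervalIntegral.integral_const_mul]
    _ ≤ _ := by
        gcongr
        · exact hE L hL
        · exact hE' L hL

lemma abs_integral_fluxDivergence_le (hw : IsOutgoingFreeWave α c d) (hρ : 0 ≤ ρ)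
    (hρα : ρ < α) (hv : IsWavePair (exteriorCone ρ) a b F) {t : ℝ} (ht : 0 ≤ t)
    (hL : α + t ≤ L) (hΦ : 0 ≤ Φ) (hF : ∀ q ∈ exteriorCone ρ, |F q| ≤ Φ / q.2 ^ 5)
    (hE : EnergyLE a b t (α + t) E) (hE' : EnergyLE c d t (α + t) E') :
    |∫ r in α..L, fluxDivergence L a b c d F (t, r)|
      ≤ (∫ r in α..L, Φ / r ^ 2 * |c (t, r)|) + 2 / L * (E + E') := by
  have hL₀ : 0 < L := by linarith
  obtain ⟨hab, hcd⟩ := hw.intervalIntegrable_energyDensities hρ hρα hv ht hL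
  have hc := hw.continuousOn_source_pairing Φ
  have hsource := intervalIntegrable_slice (t := t) hc hL fun r hr => show 0 < r by linarith
  rw [integral_eq_of_eq_zero_left (by linarith) hL
    fun r hr => hw.fluxDivergence_eq_zero (by linarith [hr.1]) hr.2]
  calc _ ≤ ∫ r in (α + t)..L, (Φ / r ^ 2 * |c (t, r)|
          + 2 / L * (energyDensity a b (t, r) + energyDensity c d (t, r))) :=
        abs_integral_le_integral hL (fun r hr => abs_fluxDivergence_le hL₀ ht
            (by linarith [hr.1]) (hF _ (mem_exteriorCone_of_nonneg ht (by linarith [hr.1]))))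
          (hsource.add ((hab.add hcd).const_mul _))
    _ = (∫ r in (α + t)..L, Φ / r ^ 2 * |c (t, r)|)
          + 2 / L * ((∫ r in (α + t)..L, energyDensity a b (t, r))
            + ∫ r in (α + t)..L, energyDensity c d (t, r)) := by
        rw [intervalIntegral.integral_add hsource ((hab.add hcd).const_mul _),
          intervalIntegral.integral_const_mul, intervalIntegral.integral_add hab hcd]
    _ ≤ _ := by
        gcongr
        · exact intervalIntegral.integral_mono_interval (by linarith) hL le_rfl
            (.of_forall fun r => by positivity)
            (intervalIntegrable_slice hc (by linarith) fun r hr => show 0 < r by linarith)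
        · exact hE L hL
        · exact hE' L hL

end IsOutgoingFreeWave

namespace IsTestWave

variable {ρ α B L T E E' Φ : ℝ} {m : ℝ → ℝ} {a b c d F : ℝ × ℝ → ℝ}

lemma bound_nonneg (hw : IsTestWave α B m c d) : 0 ≤ B := by
  simpa using hw.integral_abs_le 0 1 le_rfl one_pos

lemma integral_integral_source_pairing_le (hw : IsTestWave α B m c d) (hα : 0 < α) (hΦ : 0 ≤ Φ)
    (hT : 0 ≤ T) (hL : α ≤ L) :
    ∫ t in (0 : ℝ)..T, ∫ r in α..L, Φ / r ^ 2 * |c (t, r)| ≤ Φ * B / (2 * α ^ 2) := by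
  have hcont : ContinuousOn (fun q : ℝ × ℝ => Φ / q.1 ^ 2 * |c (q.2, q.1)|)
      (uIcc α L ×ˢ uIcc 0 T) := by
    refine (hw.continuousOn_source_pairing Φ).comp continuous_swap.continuousOn fun q hq => ?_
    exact hα.trans_le (uIcc_of_le hL ▸ hq.1).1
  have hB := hw.bound_nonneg
  calc _ = ∫ r in α..L, ∫ t in (0 : ℝ)..T, Φ / r ^ 2 * |c (t, r)| :=
        (intervalIntegral_swap_of_continuousOn hcont).symm
    _ ≤ ∫ r in α..L, Φ * B / r ^ (1 + 2) := by
        refine intervalIntegral.integral_mono_on hL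
          (intervalIntegrable_intervalIntegral_of_continuousOn hcont)
          (continuousOn_div_pow hα hL _ _).intervalIntegrable fun r hr => ?_
        have hr₀ : 0 < r := hα.trans_le hr.1
        rw [intervalIntegral.integral_const_mul]
        calc _ ≤ Φ / r ^ 2 * (B / r) := by
              gcongr
              exact hw.integral_abs_le T r hT hr₀
          _ = Φ * B / r ^ (1 + 2) := by rw [pow_add, pow_one]; field_simp
    _ ≤ Φ * B / (2 * α ^ 2) :=
        (integral_div_pow_le hα hL (mul_nonneg hΦ hB) 1).trans_eq (by norm_num)

lemma abs_integral_integral_fluxDivergence_le (hw : IsTestWave α B m c d) (hρ : 0 ≤ ρ)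
    (hρα : ρ < α) (hv : IsWavePair (exteriorCone ρ) a b F) (hT : 0 ≤ T) (hL : α + T ≤ L)
    (hΦ : 0 ≤ Φ) (hF : ∀ q ∈ exteriorCone ρ, |F q| ≤ Φ / q.2 ^ 5)
    (hE : ∀ t, 0 ≤ t → EnergyLE a b t (α + t) E)
    (hE' : ∀ t, 0 ≤ t → EnergyLE c d t (α + t) E') :
    |∫ t in (0 : ℝ)..T, ∫ r in α..L, fluxDivergence L a b c d F (t, r)|
      ≤ Φ * B / (2 * α ^ 2) + T * (2 / L * (E + E')) := by
  have hα : 0 < α := hρ.trans_lt hρα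
  have hαL : α ≤ L := by linarith
  have hsource : IntervalIntegrable (fun t => ∫ r in α..L, Φ / r ^ 2 * |c (t, r)|) volume 0 T := by
    refine intervalIntegrable_intervalIntegral_of_continuousOn
      ((hw.continuousOn_source_pairing Φ).mono fun q hq => ?_)
    exact hα.trans_le (uIcc_of_le hαL ▸ hq.2).1
  calc _ ≤ ∫ t in (0 : ℝ)..T, ((∫ r in α..L, Φ / r ^ 2 * |c (t, r)|) + 2 / L * (E + E')) :=
        abs_integral_le_integral hT (fun t ht => hw.abs_integral_fluxDivergence_le hρ hρα hv
            ht.1.le (by linarith [ht.2]) hΦ hF (hE t ht.1.le) (hE' t ht.1.le))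
          (hsource.add intervalIntegrable_const)
    _ = (∫ t in (0 : ℝ)..T, ∫ r in α..L, Φ / r ^ 2 * |c (t, r)|) + T * (2 / L * (E + E')) := by
        rw [intervalIntegral.integral_add hsource intervalIntegrable_const,
          intervalIntegral.integral_const, smul_eq_mul, sub_zero]
    _ ≤ _ := by
        gcongr
        exact hw.integral_integral_source_pairing_le hα hΦ hT hαL

end IsTestWave

/-! ### The linear estimate -/

/-- A solution of the radial wave equation with source `F` on the exterior cone of `ρ`, given by its
gradient `(a, b)`, which starts from rest with initial value `U` and radiates no energy to the
future outside the cone. -/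
structure IsNonradiativeFromRest (ρ Φ : ℝ) (a b F : ℝ × ℝ → ℝ) (U : ℝ → ℝ) : Prop where
  isWavePair : IsWavePair (exteriorCone ρ) a b F
  continuousOn_source : ContinuousOn F (exteriorCone ρ)
  abs_source_le : ∀ q ∈ exteriorCone ρ, |F q| ≤ Φ / q.2 ^ 5
  initial_fst : ∀ r, ρ < r → a (0, r) = 0
  hasDerivAt_initial : ∀ r, ρ < r → HasDerivAt U (b (0, r)) r
  initial_decay : ∃ K, ∀ r, ρ < r → |U r| ≤ K / r
  energy_bounded : ∃ E, ∀ t x, 0 ≤ t → ρ + t < x → EnergyLE a b t x E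
  energy_vanishes : ∀ ε > 0, ∃ T > 0, ∀ x, ρ + T < x → EnergyLE a b T x ε

lemma tendsto_cutoff_atTop (x : ℝ) : Tendsto (fun L => cutoff L x) atTop (nhds 1) := by
  have hlim := (tendsto_const_nhds (x := (0 : ℝ)).max
    ((tendsto_id.const_div_atTop x).const_sub 1)).pow 2
  simpa [cutoff] using hlim

lemma tendsto_integral_mul_cutoff {f : ℝ → ℝ} {α β : ℝ} (hα : 0 ≤ α) (hαβ : α ≤ β)
    (hf : ∀ x, β ≤ x → f x = 0) (hfi : ∀ L, α ≤ L → IntervalIntegrable f volume α L) :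
    Tendsto (fun L => ∫ x in α..L, f x * cutoff L x) atTop (nhds (∫ x in α..β, f x)) := by
  have htail : (fun L => ∫ x in α..β, f x * cutoff L x)
      =ᶠ[atTop] fun L => ∫ x in α..L, f x * cutoff L x := by
    filter_upwards [eventually_ge_atTop β] with L hL
    have hαL := (hfi L (hαβ.trans hL)).mul_continuousOn (continuous_cutoff L).continuousOn
    have hsub := (hfi β hαβ).mul_continuousOn (continuous_cutoff L).continuousOn
    have hzero : ∫ x in β..L, f x * cutoff L x = 0 := by
      rw [intervalIntegral.integral_congr (g := 0) fun x hx => ?_]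
      · simp
      · simp [hf x (uIcc_of_le hL ▸ hx).1]
    rw [← intervalIntegral.integral_add_adjacent_intervals hsub (hsub.symm.trans hαL), hzero,
      add_zero]
  refine Tendsto.congr' htail ?_
  refine intervalIntegral.tendsto_integral_filter_of_dominated_convergence (fun x => |f x|)
    (.of_forall fun L => ?_) ?_ (hfi β hαβ).abs (.of_forall fun x _ => ?_)
  · exact ((hfi β hαβ).mul_continuousOn (continuous_cutoff L).continuousOn).def'.1
  · filter_upwards [eventually_gt_atTop 0] with L hL
    refine .of_forall fun x hx => ?_
    rw [uIoc_of_le hαβ] at hx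
    rw [norm_eq_abs, abs_mul, abs_of_nonneg (cutoff_nonneg L x)]
    exact mul_le_of_le_one_right (abs_nonneg _) (cutoff_le_one hL (hα.trans hx.1.le))
  · simpa using (tendsto_cutoff_atTop x).const_mul (f x)

lemma tendsto_log_div_id_atTop : Tendsto (fun x => log x / x) atTop (nhds 0) :=
  isLittleO_log_id_atTop.tendsto_div_nhds_zero

lemma tendsto_integral_mul_cutoffDeriv {f : ℝ → ℝ} {α K : ℝ} (hα : 0 < α)
    (hf : ∀ x, α ≤ x → |f x| ≤ K / x) :
    Tendsto (fun L => ∫ x in α..L, f x * cutoffDeriv L x) atTop (nhds 0) := by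
  have hlim : Tendsto (fun L => 2 * K * (log L / L) - 2 * K * log α * L⁻¹) atTop
      (nhds (2 * K * 0 - 2 * K * log α * 0)) :=
    (tendsto_log_div_id_atTop.const_mul _).sub (tendsto_inv_atTop_zero.const_mul _)
  rw [mul_zero, mul_zero, sub_zero] at hlim
  refine squeeze_zero_norm' ?_ hlim
  filter_upwards [eventually_ge_atTop α] with L hL
  have hL₀ : 0 < L := hα.trans_le hL
  calc _ ≤ ∫ x in α..L, 2 * K / L * x⁻¹ := by
        refine abs_integral_le_integral hL (fun x hx => ?_) ?_
        · have hx₀ : 0 < x := hα.trans hx.1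
          rw [abs_mul]
          calc _ ≤ K / x * (2 / L) := mul_le_mul (hf x hx.1.le) (abs_cutoffDeriv_le hL₀ hx₀.le)
                (abs_nonneg _) ((abs_nonneg _).trans (hf x hx.1.le))
            _ = _ := by field_simp
        · refine ((continuousOn_inv₀.mono fun x hx => ?_).const_smul (2 * K / L)).intervalIntegrable
          exact (hα.trans_le (uIcc_of_le hL ▸ hx).1).ne'
    _ = _ := by
        rw [intervalIntegral.integral_const_mul, integral_inv_of_pos hα hL₀,
          log_div hL₀.ne' hα.ne']
        ring

section InitialTerm

variable {ρ Φ α β B L : ℝ} {m U : ℝ → ℝ} {a b c d F : ℝ × ℝ → ℝ}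

lemma IsNonradiativeFromRest.continuousOn_initial (hv : IsNonradiativeFromRest ρ Φ a b F U)
    (hρα : ρ < α) (hL : α ≤ L) : ContinuousOn U (uIcc α L) := fun r hr =>
  (hv.hasDerivAt_initial r
    (hρα.trans_le (uIcc_of_le hL ▸ hr).1)).continuousAt.continuousWithinAt

lemma IsTestWave.integral_energyFlux_initial (hw : IsTestWave α B m c d) (hm : Continuous m)
    (hα : 0 < α) (hv : IsNonradiativeFromRest ρ Φ a b F U) (hρα : ρ < α) (hL : α ≤ L) :
    ∫ r in α..L, energyFlux L a b c d (0, r)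
      = -(∫ r in α..L, U r * (r ^ 2 * m r) * cutoff L r)
        - ∫ r in α..L, U r * (∫ x in (0 : ℝ)..r, x ^ 2 * m x) * cutoffDeriv L r := by
  set μ : ℝ → ℝ := fun r => ∫ x in (0 : ℝ)..r, x ^ 2 * m x with hμ_def
  have hμ : ∀ r, HasDerivAt μ (r ^ 2 * m r) r := fun r =>
    ((by fun_prop : Continuous fun x => x ^ 2 * m x).integral_hasStrictDerivAt 0 r).hasDerivAt
  have : Continuous μ := continuous_iff_continuousAt.2 fun r => (hμ r).continuousAt
  have hμα : μ α = 0 := by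
    simp only [hμ_def]
    rw [← hw.initial_snd α hα, hw.snd_eq_zero 0 α hα.le (by simp), zero_mul]
  have hmem : ∀ r ∈ uIcc α L, α ≤ r := fun r hr => (uIcc_of_le hL ▸ hr).1
  have hU := hv.continuousOn_initial hρα hL
  have hb : IntervalIntegrable (fun r => b (0, r)) volume α L :=
    intervalIntegrable_slice (fun q hq => (hv.isWavePair.continuousAt_snd hq).continuousWithinAt)
      hL fun r hr => mem_exteriorCone_of_nonneg le_rfl (by linarith)
  have hparts := intervalIntegral.integral_mul_deriv_eq_deriv_mul
    (fun r hr => hv.hasDerivAt_initial r (hρα.trans_le (hmem r hr)))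
    (fun r _ => (hμ r).mul (hasDerivAt_cutoff L r)) hb
    ((by fun_prop : Continuous _).intervalIntegrable _ _)
  have hsplit : ∫ r in α..L, U r * (r ^ 2 * m r * cutoff L r + μ r * cutoffDeriv L r)
      = (∫ r in α..L, U r * (r ^ 2 * m r) * cutoff L r)
        + ∫ r in α..L, U r * μ r * cutoffDeriv L r := by
    rw [← intervalIntegral.integral_add]
    · exact intervalIntegral.integral_congr fun r _ => by ring
    · exact ((hU.mul (by fun_prop)).mul (by fun_prop)).intervalIntegrable
    · exact ((hU.mul (by fun_prop)).mul (by fun_prop)).intervalIntegrable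
  have hflux : ∫ r in α..L, energyFlux L a b c d (0, r)
      = ∫ r in α..L, b (0, r) * (μ * cutoff L) r := by
    refine intervalIntegral.integral_congr fun r hr => ?_
    have hr₀ : 0 < r := hα.trans_le (hmem r hr)
    simp only [energyFlux, hv.initial_fst r (hρα.trans_le (hmem r hr)), Pi.mul_apply, hμ_def,
      ← hw.initial_snd r hr₀]
    ring_nf
  rw [hsplit, Pi.mul_apply, Pi.mul_apply, cutoff_eq_zero_of_le (hα.trans_le hL) le_rfl, hμα]
    at hparts
  rw [hflux]
  linarith

lemma IsTestWave.tendsto_integral_energyFlux_initial (hw : IsTestWave α B m c d)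
    (hm : IsMeanZeroProfile α β m) (hα : 0 < α) (hαβ : α ≤ β)
    (hv : IsNonradiativeFromRest ρ Φ a b F U) (hρα : ρ < α) :
    Tendsto (fun L => ∫ r in α..L, energyFlux L a b c d (0, r)) atTop
      (nhds (-∫ r in α..β, U r * (r ^ 2 * m r))) := by
  have hm_cont : Continuous m := hm.contDiff.continuous
  obtain ⟨K, hK⟩ := hv.initial_decay
  obtain ⟨M, hM⟩ := hm.exists_abs_integral_sq_mul_le
  have hmain := tendsto_integral_mul_cutoff (f := fun r => U r * (r ^ 2 * m r)) hα.le hαβ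
    (fun r hr => by simp [hm.eq_zero_of_ge r hr])
    fun L hL => ((hv.continuousOn_initial hρα hL).mul (by fun_prop)).intervalIntegrable
  have herror := tendsto_integral_mul_cutoffDeriv (K := K * M)
    (f := fun r => U r * ∫ x in (0 : ℝ)..r, x ^ 2 * m x) hα fun r hr => by
      rw [abs_mul, mul_div_right_comm]
      exact mul_le_mul (hK r (hρα.trans_le hr)) (hM r hr) (abs_nonneg _)
        ((abs_nonneg _).trans (hK r (hρα.trans_le hr)))
  have hlim := hmain.neg.sub herror
  rw [sub_zero] at hlim
  refine hlim.congr' ?_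
  filter_upwards [eventually_ge_atTop α] with L hL
  exact (hw.integral_energyFlux_initial hm_cont hα hv hρα hL).symm

end InitialTerm

/-- A `C²` probability density supported in `[α, β]`. -/
structure IsBump (α β : ℝ) (g : ℝ → ℝ) : Prop where
  contDiff : ContDiff ℝ 2 g
  nonneg : ∀ x, 0 ≤ g x
  eq_zero_of_le : ∀ x ≤ α, g x = 0
  eq_zero_of_ge : ∀ x, β ≤ x → g x = 0
  integral_eq_one : ∫ x in α..β, g x = 1

namespace IsBump

variable {α β : ℝ} {f g : ℝ → ℝ}

lemma intervalIntegrable (hg : IsBump α β g) (x y : ℝ) : IntervalIntegrable g volume x y :=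
  hg.contDiff.continuous.intervalIntegrable x y

lemma isMeanZeroProfile_sub (hf : IsBump α β f) (hg : IsBump α β g) :
    IsMeanZeroProfile α β fun x => f x - g x where
  contDiff := hf.contDiff.sub hg.contDiff
  eq_zero_of_le x hx := by rw [hf.eq_zero_of_le x hx, hg.eq_zero_of_le x hx, sub_self]
  eq_zero_of_ge x hx := by rw [hf.eq_zero_of_ge x hx, hg.eq_zero_of_ge x hx, sub_self]
  integral_eq_zero := by
    rw [intervalIntegral.integral_sub (hf.intervalIntegrable _ _) (hg.intervalIntegrable _ _),
      hf.integral_eq_one, hg.integral_eq_one, sub_self]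

lemma integral_abs_sub_le (hf : IsBump α β f) (hg : IsBump α β g) (hαβ : α ≤ β) :
    ∫ x in α..β, |f x - g x| ≤ 2 := by
  have hfi := hf.intervalIntegrable α β
  have hgi := hg.intervalIntegrable α β
  calc _ ≤ ∫ x in α..β, (f x + g x) := by
        refine intervalIntegral.integral_mono_on hαβ (hfi.sub hgi).abs (hfi.add hgi) fun x _ => ?_
        rw [abs_sub_le_iff]
        constructor <;> linarith [hf.nonneg x, hg.nonneg x]
    _ = 2 := by
        rw [intervalIntegral.integral_add hfi hgi, hf.integral_eq_one, hg.integral_eq_one]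
        norm_num

lemma abs_integral_mul_sub_le (hg : IsBump α β g) (hαβ : α ≤ β) {h : ℝ → ℝ} {z ε : ℝ}
    (hh : ContinuousOn h (Icc α β)) (hε : ∀ x ∈ Icc α β, g x ≠ 0 → |h x - z| ≤ ε) :
    |(∫ x in α..β, h x * g x) - z| ≤ ε := by
  have hgi := hg.intervalIntegrable α β
  have hhg : IntervalIntegrable (fun x => h x * g x) volume α β :=
    hgi.continuousOn_mul (by rwa [uIcc_of_le hαβ])
  have hmean : ∀ k : ℝ, ∫ x in α..β, k * g x = k := fun k => by
    rw [intervalIntegral.integral_const_mul, hg.integral_eq_one, mul_one]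
  calc _ = |∫ x in α..β, (h x * g x - z * g x)| := by
        rw [intervalIntegral.integral_sub hhg (hgi.const_mul z), hmean]
    _ ≤ ∫ x in α..β, ε * g x := by
        refine abs_integral_le_integral hαβ (fun x hx => ?_) (hgi.const_mul ε)
        rw [← sub_mul, abs_mul, abs_of_nonneg (hg.nonneg x)]
        by_cases hgx : g x = 0
        · simp [hgx]
        · exact mul_le_mul_of_nonneg_right (hε x ⟨hx.1.le, hx.2⟩ hgx) (hg.nonneg x)
    _ = ε := hmean ε

end IsBump

lemma exists_isBump_of_ball_subset {α β x₀ δ : ℝ} (hδ : 0 < δ) (hsub : Metric.ball x₀ δ ⊆ Ioo α β) :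
    ∃ g, IsBump α β g ∧ ∀ x, g x ≠ 0 → |x - x₀| < δ := by
  let f : ContDiffBump x₀ := ⟨δ / 2, δ, half_pos hδ, half_lt_self hδ⟩
  have hsupp : Function.support (f.normed volume) = Metric.ball x₀ δ := f.support_normed_eq
  have hzero : ∀ x ∉ Ioo α β, f.normed volume x = 0 := fun x hx =>
    Function.notMem_support.1 fun hmem => hx (hsub (hsupp ▸ hmem))
  refine ⟨f.normed volume, ⟨f.contDiff_normed, f.nonneg_normed, fun x hx => ?_, fun x hx => ?_, ?_⟩,
    fun x hx => ?_⟩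
  · exact hzero x fun h => hx.not_gt h.1
  · exact hzero x fun h => hx.not_gt h.2
  · rw [intervalIntegral.integral_eq_integral_of_support_subset, f.integral_normed]
    exact hsupp ▸ hsub.trans Ioo_subset_Ioc_self
  · have hball : x ∈ Metric.ball x₀ δ := hsupp ▸ hx
    rwa [Metric.mem_ball, dist_eq] at hball

lemma exists_isBump_abs_integral_mul_sub_le {h : ℝ → ℝ} {α β x₀ ε : ℝ} (hx₀ : x₀ ∈ Ioo α β)
    (hh : ContinuousOn h (Icc α β)) (hε : 0 < ε) :
    ∃ g, IsBump α β g ∧ |(∫ x in α..β, h x * g x) - h x₀| ≤ ε := by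
  have hnear : h ⁻¹' Metric.closedBall (h x₀) ε ∈ nhds x₀ :=
    hh.continuousAt (Icc_mem_nhds hx₀.1 hx₀.2) (Metric.closedBall_mem_nhds _ hε)
  obtain ⟨δ, hδ, hball⟩ := Metric.mem_nhds_iff.1 (inter_mem (Ioo_mem_nhds hx₀.1 hx₀.2) hnear)
  obtain ⟨g, hg, hsupp⟩ := exists_isBump_of_ball_subset hδ fun x hx => (hball hx).1
  refine ⟨g, hg, hg.abs_integral_mul_sub_le (hx₀.1.trans hx₀.2).le hh fun x _ hgx => ?_⟩
  exact (hball (hsupp x hgx)).2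

namespace IsNonradiativeFromRest

variable {ρ Φ α β B : ℝ} {m U : ℝ → ℝ} {a b c d F : ℝ × ℝ → ℝ}

lemma source_bound_nonneg (hv : IsNonradiativeFromRest ρ Φ a b F U) : 0 ≤ Φ := by
  have hsource := hv.abs_source_le (0, |ρ| + 1)
    (mem_exteriorCone_of_nonneg le_rfl (by linarith [le_abs_self ρ]))
  exact (by positivity : 0 ≤ |F (0, |ρ| + 1)| * (|ρ| + 1) ^ 5).trans
    ((le_div_iff₀ (by positivity)).1 hsource)

-- The initial term of Green's identity is controlled by the final one, which is small because the
-- energy vanishes, and by the source.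
lemma abs_integral_initial_le (hv : IsNonradiativeFromRest ρ Φ a b F U) (hρ : 0 ≤ ρ)
    (hρα : ρ < α) (hαβ : α ≤ β) (hm : IsMeanZeroProfile α β m) (hw : IsTestWave α B m c d) :
    |∫ r in α..β, U r * (r ^ 2 * m r)| ≤ Φ * B / (2 * α ^ 2) := by
  have hα : 0 < α := hρ.trans_lt hρα
  obtain ⟨E, hE⟩ := hv.energy_bounded
  obtain ⟨E', hE'⟩ : ∃ E', EnergyLE c d 0 α E' := hw.initial_energy_le
  have hE'₀ := hE'.nonneg
  have hcd : ∀ t, 0 ≤ t → EnergyLE c d t (α + t) E' := fun t ht =>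
    hw.energyLE hα hE' ht (by linarith)
  refine le_of_forall_pos_le_add fun τ hτ => ?_
  set κ := 2 * τ / (1 + E') with hκ_def
  have hκ : 0 < κ := by positivity
  obtain ⟨T, hT, hTκ⟩ := hv.energy_vanishes (κ ^ 2) (by positivity)
  have hfinal : 1 / (2 * κ) * κ ^ 2 + κ / 2 * E' = τ := by
    calc _ = κ * (1 + E') / 2 := by field_simp
      _ = τ := by rw [hκ_def]; field_simp
  have hlim := (hw.tendsto_integral_energyFlux_initial hm hα hαβ hv hρα).abs
  have hbound : Tendsto (fun L => Φ * B / (2 * α ^ 2) + τ + T * (2 / L * (E + E'))) atTop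
      (nhds (Φ * B / (2 * α ^ 2) + τ + T * (0 * (E + E')))) :=
    (((tendsto_id.const_div_atTop 2).mul_const _).const_mul _).const_add _
  rw [abs_neg] at hlim
  rw [zero_mul, mul_zero, add_zero] at hbound
  refine le_of_tendsto_of_tendsto hlim hbound ?_
  filter_upwards [eventually_ge_atTop (α + T)] with L hL
  have hgreen := hw.integral_integral_fluxDivergence hρ hρα hv.isWavePair hv.continuousOn_source
    (by linarith : α ≤ L) hT.le
  have hdiv := hw.abs_integral_integral_fluxDivergence_le hρ hρα hv.isWavePair hT.le hL
    hv.source_bound_nonneg hv.abs_source_le (fun t ht => hE t _ ht (by linarith)) hcd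
  have hflux := hw.abs_integral_energyFlux_le hρ hρα hv.isWavePair hκ hT.le hL
    (hTκ _ (by linarith)) (hcd T hT.le)
  rw [abs_le] at hdiv hflux ⊢
  constructor <;> linarith [hdiv.1, hdiv.2, hflux.1, hflux.2]

lemma abs_sq_mul_initial_sub_le_of_mem_Ioo (hv : IsNonradiativeFromRest ρ Φ a b F U) (hρ : 0 ≤ ρ)
    (hρα : ρ < α) {r s : ℝ} (hr : r ∈ Ioo α β) (hs : s ∈ Ioo α β) :
    |r ^ 2 * U r - s ^ 2 * U s| ≤ 2 * π * Φ * β / α ^ 2 := by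
  have hα : 0 < α := hρ.trans_lt hρα
  have hαβ : α ≤ β := (hr.1.trans hr.2).le
  have hU : ContinuousOn (fun r => r ^ 2 * U r) (Icc α β) :=
    (by fun_prop : Continuous fun r : ℝ => r ^ 2).continuousOn.mul
      (uIcc_of_le hαβ ▸ hv.continuousOn_initial hρα hαβ)
  refine le_of_forall_pos_le_add fun ε hε => ?_
  obtain ⟨f, hf, hfr⟩ := exists_isBump_abs_integral_mul_sub_le hr hU (half_pos hε)
  obtain ⟨g, hg, hgs⟩ := exists_isBump_abs_integral_mul_sub_le hs hU (half_pos hε)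
  have hm := hf.isMeanZeroProfile_sub hg
  obtain ⟨c, d, hw⟩ := hm.exists_isTestWave hα hαβ
  have hcore := hv.abs_integral_initial_le hρ hρα hαβ hm hw
  have hsplit : ∫ r in α..β, U r * (r ^ 2 * (f r - g r))
      = (∫ r in α..β, r ^ 2 * U r * f r) - ∫ r in α..β, r ^ 2 * U r * g r := by
    rw [← intervalIntegral.integral_sub
      ((hf.intervalIntegrable _ _).continuousOn_mul (by rwa [uIcc_of_le hαβ]))
      ((hg.intervalIntegrable _ _).continuousOn_mul (by rwa [uIcc_of_le hαβ]))]
    exact intervalIntegral.integral_congr fun r _ => by ring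
  have hconst : Φ * (π * (2 * β * ∫ x in α..β, |f x - g x|)) / (2 * α ^ 2)
      ≤ 2 * π * Φ * β / α ^ 2 := by
    have := hv.source_bound_nonneg
    have := hα.le.trans hαβ
    calc _ ≤ Φ * (π * (2 * β * 2)) / (2 * α ^ 2) := by
          gcongr
          exact hf.integral_abs_sub_le hg hαβ
      _ = _ := by field_simp
  rw [hsplit] at hcore
  rw [abs_le] at hcore hfr hgs ⊢
  constructor <;> linarith [hcore.1, hcore.2, hfr.1, hfr.2, hgs.1, hgs.2]

theorem abs_sq_mul_initial_sub_le (hv : IsNonradiativeFromRest ρ Φ a b F U) (hρ : 0 ≤ ρ)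
    {r s : ℝ} (hr : ρ < r) (hrs : r ≤ s) (hs : s ≤ 2 * r) :
    |r ^ 2 * U r - s ^ 2 * U s| ≤ 100 * Φ / r := by
  have hr₀ : 0 < r := hρ.trans_lt hr
  have hΦ := hv.source_bound_nonneg
  calc _ ≤ 2 * π * Φ * (3 * r) / ((ρ + r) / 2) ^ 2 :=
        hv.abs_sq_mul_initial_sub_le_of_mem_Ioo hρ (by linarith)
          ⟨by linarith, by linarith⟩ ⟨by linarith, by linarith⟩
    _ ≤ 2 * 3.15 * Φ * (3 * r) / (r / 2) ^ 2 := by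
        gcongr
        · exact pi_lt_d2.le
        · linarith
    _ = 75.6 * Φ / r := by
        field_simp
        ring
    _ ≤ 100 * Φ / r := by
        gcongr
        norm_num

end IsNonradiativeFromRest

/-! ### Exterior solutions as wave pairs -/

lemma eq_linForm (L : ℝ × ℝ →L[ℝ] ℝ) : L = linForm (L (1, 0)) (L (0, 1)) := by
  ext <;> simp

section Slices

variable {f : ℝ × ℝ → ℝ} {x y t r : ℝ}

lemma hasDerivAt_slice_fst (h : HasFDerivAt f (linForm x y) (t, r)) :
    HasDerivAt (fun s => f (s, r)) x t := by
  have hcomp := h.comp_hasDerivAt t ((hasDerivAt_id t).prodMk (hasDerivAt_const t r))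
  rwa [linForm_apply, mul_one, mul_zero, add_zero] at hcomp

lemma hasDerivAt_slice_snd (h : HasFDerivAt f (linForm x y) (t, r)) :
    HasDerivAt (fun s => f (t, s)) y r := by
  have hcomp := h.comp_hasDerivAt r ((hasDerivAt_const r t).prodMk (hasDerivAt_id r))
  rwa [linForm_apply, mul_one, mul_zero, zero_add] at hcomp

end Slices

/-- `∂ₜu` as a function of the spacetime point. -/
noncomputable def timeDeriv (u : ℝ → ℝ → ℝ) (q : ℝ × ℝ) : ℝ := dtu u q.1 q.2

/-- `∂ᵣu` as a function of the spacetime point. -/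
noncomputable def radialDeriv (u : ℝ → ℝ → ℝ) (q : ℝ × ℝ) : ℝ := deriv (u q.1) q.2

section SecondOrder

variable {Ω : Set (ℝ × ℝ)} {u : ℝ → ℝ → ℝ} {q : ℝ × ℝ}

lemma timeDeriv_eq_fderiv (h : DifferentiableAt ℝ (fun q : ℝ × ℝ => u q.1 q.2) q) :
    timeDeriv u q = fderiv ℝ (fun q : ℝ × ℝ => u q.1 q.2) q (1, 0) :=
  (hasDerivAt_slice_fst (h.hasFDerivAt.congr_fderiv (eq_linForm _))).deriv

lemma radialDeriv_eq_fderiv (h : DifferentiableAt ℝ (fun q : ℝ × ℝ => u q.1 q.2) q) :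
    radialDeriv u q = fderiv ℝ (fun q : ℝ × ℝ => u q.1 q.2) q (0, 1) :=
  (hasDerivAt_slice_snd (h.hasFDerivAt.congr_fderiv (eq_linForm _))).deriv

lemma hasFDerivAt_linForm_timeDeriv_radialDeriv
    (h : DifferentiableAt ℝ (fun q : ℝ × ℝ => u q.1 q.2) q) :
    HasFDerivAt (fun q : ℝ × ℝ => u q.1 q.2) (linForm (timeDeriv u q) (radialDeriv u q)) q := by
  rw [timeDeriv_eq_fderiv h, radialDeriv_eq_fderiv h, ← eq_linForm]
  exact h.hasFDerivAt

lemma hasFDerivAt_fderiv_apply {f : ℝ × ℝ → ℝ} (h : ContDiffAt ℝ 2 f q) (v : ℝ × ℝ) :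
    HasFDerivAt (fun q => fderiv ℝ f q v)
      (linForm (fderiv ℝ (fderiv ℝ f) q (1, 0) v) (fderiv ℝ (fderiv ℝ f) q (0, 1) v)) q := by
  have h₂ : DifferentiableAt ℝ (fderiv ℝ f) q :=
    (h.fderiv_right (m := 1) (by norm_num)).differentiableAt (by norm_num)
  exact (h₂.hasFDerivAt.clm_apply (hasFDerivAt_const v q)).congr_fderiv (by ext <;> simp)

lemma exists_hasFDerivAt_timeDeriv_radialDeriv
    (h : ContDiffAt ℝ 2 (fun q : ℝ × ℝ => u q.1 q.2) q) :
    ∃ x y z, HasFDerivAt (timeDeriv u) (linForm x y) q ∧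
      HasFDerivAt (radialDeriv u) (linForm y z) q := by
  have hdiff : ∀ᶠ q' in nhds q, DifferentiableAt ℝ (fun q : ℝ × ℝ => u q.1 q.2) q' :=
    (h.eventually (by norm_num)).mono fun q' hq' => hq'.differentiableAt (by norm_num)
  have htime := (hasFDerivAt_fderiv_apply h (1, 0)).congr_of_eventuallyEq
    (hdiff.mono fun q' hq' => timeDeriv_eq_fderiv hq')
  have hradial := (hasFDerivAt_fderiv_apply h (0, 1)).congr_of_eventuallyEq
    (hdiff.mono fun q' hq' => radialDeriv_eq_fderiv hq')
  rw [h.isSymmSndFDerivAt (by simp) (1, 0) (0, 1)] at hradial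
  exact ⟨_, _, _, htime, hradial⟩

lemma isWavePair_of_contDiffOn {F : ℝ × ℝ → ℝ} (hΩ : IsOpen Ω)
    (hu : ContDiffOn ℝ 2 (fun q : ℝ × ℝ => u q.1 q.2) Ω)
    (heq : ∀ q ∈ Ω, deriv (fun s => dtu u s q.2) q.1 - deriv (deriv (u q.1)) q.2
      - 3 / q.2 * deriv (u q.1) q.2 = F q) :
    IsWavePair Ω (timeDeriv u) (radialDeriv u) F := by
  rintro ⟨t, r⟩ hq
  obtain ⟨x, y, z, htime, hradial⟩ :=
    exists_hasFDerivAt_timeDeriv_radialDeriv (hu.contDiffAt (hΩ.mem_nhds hq))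
  refine ⟨x, y, z, htime, hradial, ?_⟩
  rw [← heq _ hq, ← (hasDerivAt_slice_fst htime).deriv, ← (hasDerivAt_slice_snd hradial).deriv]
  rfl

end SecondOrder

/-! ### From the exterior norms to pointwise bounds -/

lemma eH_eq_lintegral_energyDensity {ρ : ℝ} (hρ : 0 ≤ ρ) (u : ℝ → ℝ → ℝ) (t : ℝ) :
    eH ρ (u t) (fun r => dtu u t r) = (∫⁻ r in Ioi ρ,
      ENNReal.ofReal (energyDensity (timeDeriv u) (radialDeriv u) (t, r))) ^ (1 / 2 : ℝ) := by
  unfold eH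
  rw [← lintegral_add_left (by fun_prop)]
  congr 1
  refine setLIntegral_congr_fun measurableSet_Ioi fun r hr => ?_
  have : 0 < r := hρ.trans_lt hr
  simp only
  rw [← ENNReal.ofReal_add (by positivity) (by positivity), energyDensity, timeDeriv, radialDeriv]
  congr 1
  ring

lemma lintegral_energyDensity_le {R K : ℝ} {u : ℝ → ℝ → ℝ} (hR : 0 ≤ R) (hK : 0 ≤ K)
    (hu : supH R u ≤ ENNReal.ofReal K) (t : ℝ) :
    ∫⁻ r in Ioi (R + |t|), ENNReal.ofReal (energyDensity (timeDeriv u) (radialDeriv u) (t, r))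
      ≤ ENNReal.ofReal (K ^ 2) := by
  have hslice : eH (R + |t|) (u t) (fun r => dtu u t r) ≤ ENNReal.ofReal K :=
    (le_iSup (fun t : ℝ => eH (R + |t|) (u t) (fun r => dtu u t r)) t).trans hu
  rw [eH_eq_lintegral_energyDensity (by positivity), one_div,
    ENNReal.rpow_inv_le_iff (by norm_num)] at hslice
  rwa [ENNReal.rpow_two, ← ENNReal.ofReal_pow hK] at hslice

lemma intervalIntegral_le_integral_Ioi {ρ x y : ℝ} {f : ℝ → ℝ} (hf : IntegrableOn f (Ioi ρ))
    (hf₀ : ∀ r, ρ < r → 0 ≤ f r) (hx : ρ < x) (hxy : x ≤ y) :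
    ∫ r in x..y, f r ≤ ∫ r in Ioi ρ, f r := by
  rw [intervalIntegral.integral_of_le hxy]
  refine setIntegral_mono_set hf ?_ (.of_forall fun r hr => hx.trans hr.1)
  filter_upwards [ae_restrict_mem measurableSet_Ioi] with r hr using hf₀ r hr

lemma integrable_and_integral_le_of_lintegral_ofReal_le {X : Type*} [MeasurableSpace X]
    {μ : Measure X} {f : X → ℝ} {E : ℝ} (hf : AEStronglyMeasurable f μ) (hf₀ : 0 ≤ᵐ[μ] f)
    (hE : 0 ≤ E) (h : ∫⁻ x, ENNReal.ofReal (f x) ∂μ ≤ ENNReal.ofReal E) :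
    Integrable f μ ∧ ∫ x, f x ∂μ ≤ E := by
  refine ⟨⟨hf, ?_⟩, ?_⟩
  · rw [hasFiniteIntegral_iff_ofReal hf₀]
    exact h.trans_lt ENNReal.ofReal_lt_top
  · rw [integral_eq_lintegral_of_nonneg_ae hf₀ hf]
    exact ENNReal.toReal_le_of_le_ofReal hE h

lemma integrableOn_energyDensity_and_integral_le {R K t : ℝ} {u : ℝ → ℝ → ℝ} {F : ℝ × ℝ → ℝ}
    (hR : 0 ≤ R) (hK : 0 ≤ K)
    (hwave : IsWavePair (exteriorCone R) (timeDeriv u) (radialDeriv u) F)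
    (hu : supH R u ≤ ENNReal.ofReal K) :
    IntegrableOn (fun r => energyDensity (timeDeriv u) (radialDeriv u) (t, r)) (Ioi (R + |t|)) ∧
      ∫ r in Ioi (R + |t|), energyDensity (timeDeriv u) (radialDeriv u) (t, r) ≤ K ^ 2 := by
  have hcont : ContinuousOn (fun r => energyDensity (timeDeriv u) (radialDeriv u) (t, r))
      (Ioi (R + |t|)) :=
    hwave.continuousOn_energyDensity.comp (Continuous.prodMk_right t).continuousOn fun r hr => hr
  refine integrable_and_integral_le_of_lintegral_ofReal_le
    (hcont.aestronglyMeasurable measurableSet_Ioi) ?_ (sq_nonneg K)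
    (lintegral_energyDensity_le hR hK hu t)
  filter_upwards [ae_restrict_mem measurableSet_Ioi] with r hr
  exact energyDensity_nonneg _ _ ((by positivity : 0 ≤ R + |t|).trans (le_of_lt hr))

lemma abs_sub_le_of_integral_sq_mul_cube_le {x y K : ℝ} {U U' : ℝ → ℝ} (hx : 0 < x) (hxy : x ≤ y)
    (hK : 0 < K) (hU : ∀ r ∈ Icc x y, HasDerivAt U (U' r) r) (hU' : ContinuousOn U' (Icc x y))
    (henergy : ∫ r in x..y, U' r ^ 2 * r ^ 3 ≤ K ^ 2) : |U y - U x| ≤ 3 / 4 * (K / x) := by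
  rw [← uIcc_of_le hxy] at hU hU'
  have hf_int : IntervalIntegrable (fun r => U' r ^ 2 * r ^ 3) volume x y :=
    ContinuousOn.intervalIntegrable (by fun_prop)
  have hf_int' := (continuousOn_div_pow hx hxy 1 3).intervalIntegrable (μ := volume)
  rw [← intervalIntegral.integral_eq_sub_of_hasDerivAt hU hU'.intervalIntegrable]
  calc |∫ r in x..y, U' r|
      ≤ ∫ r in x..y, (1 / (2 * (K * x)) * (U' r ^ 2 * r ^ 3) + K * x / 2 * (1 / r ^ 3)) := by
        refine abs_integral_le_integral hxy (fun r hr => ?_)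
          ((hf_int.const_mul _).add (hf_int'.const_mul _))
        have hr₀ : 0 < r := hx.trans hr.1
        have := abs_mul_le_weighted_sq (by positivity : 0 < K * x / r ^ 3) (U' r) 1
        rw [mul_one] at this
        refine this.trans_eq ?_
        field_simp
    _ = 1 / (2 * (K * x)) * (∫ r in x..y, U' r ^ 2 * r ^ 3)
          + K * x / 2 * ∫ r in x..y, 1 / r ^ 3 := by
        rw [intervalIntegral.integral_add (hf_int.const_mul _) (hf_int'.const_mul _),
          intervalIntegral.integral_const_mul, intervalIntegral.integral_const_mul]
    _ ≤ 1 / (2 * (K * x)) * K ^ 2 + K * x / 2 * (1 / (2 * x ^ 2)) := by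
        gcongr
        exact (integral_div_pow_le hx hxy zero_le_one 1).trans_eq (by norm_num)
    _ = 3 / 4 * (K / x) := by
        field_simp
        ring

lemma setLIntegral_rpow_mul_cube_eq_top {ρ x δ b : ℝ} {U : ℝ → ℝ} (hδ : 0 < δ) (hx : 0 < x)
    (hρx : ρ ≤ x) (hb : 0 ≤ b) (hU : ∀ y, x < y → δ ≤ |U y|) :
    ∫⁻ y in Ioi ρ, ENNReal.ofReal (|U y| ^ b * y ^ 3) = ⊤ := by
  rw [eq_top_iff]
  calc ⊤ = ∫⁻ _ in Ioi x, ENNReal.ofReal (δ ^ b * x ^ 3) := by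
        rw [setLIntegral_const, volume_Ioi, ENNReal.mul_top]
        rw [Ne, ENNReal.ofReal_eq_zero, not_le]
        positivity
    _ ≤ ∫⁻ y in Ioi x, ENNReal.ofReal (|U y| ^ b * y ^ 3) := by
        refine setLIntegral_mono' measurableSet_Ioi fun y (hy : x < y) => ?_
        have := hU y hy
        gcongr
    _ ≤ _ := lintegral_mono_set (Ioi_subset_Ioi hρx)

lemma eLL_eq_top_of_eventually {a b R t : ℝ} {u : ℝ → ℝ → ℝ} (ha : 0 < a) (hb : 0 < b)
    (h : ∀ᶠ s in nhds t,
      ∫⁻ r in Ioi (R + |s|), ENNReal.ofReal (|u s r| ^ b * r ^ 3) = ⊤) :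
    eLL a b R u = ⊤ := by
  obtain ⟨V, hV, hVopen, htV⟩ := mem_nhds_iff.1 h
  have htop : ∫⁻ s, (∫⁻ r in Ioi (R + |s|), ENNReal.ofReal (|u s r| ^ b * r ^ 3)) ^ (a / b)
      = ⊤ := by
    rw [eq_top_iff]
    calc ⊤ = ∫⁻ _ in V, ⊤ := by
          rw [setLIntegral_const, ENNReal.top_mul (hVopen.measure_pos volume ⟨t, htV⟩).ne']
      _ = ∫⁻ s in V,
            (∫⁻ r in Ioi (R + |s|), ENNReal.ofReal (|u s r| ^ b * r ^ 3)) ^ (a / b) := by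
          refine setLIntegral_congr_fun hVopen.measurableSet fun s hs => ?_
          exact ((congrArg (· ^ (a / b)) (hV hs)).trans
            (ENNReal.top_rpow_of_pos (div_pos ha hb))).symm
      _ ≤ _ := setLIntegral_le_lintegral _ _
  rw [eLL, htop, ENNReal.top_rpow_of_pos (by positivity)]

/-- A classical solution of the radial wave equation with source `F` on the exterior cone of `R`
whose energy norm outside the cone never exceeds `K`. -/
structure IsFiniteEnergySolution (R K : ℝ) (F : ℝ × ℝ → ℝ) (u : ℝ → ℝ → ℝ) : Prop where
  hasFDerivAt : ∀ q ∈ exteriorCone R,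
    HasFDerivAt (fun q : ℝ × ℝ => u q.1 q.2) (linForm (timeDeriv u q) (radialDeriv u q)) q
  isWavePair : IsWavePair (exteriorCone R) (timeDeriv u) (radialDeriv u) F
  energyLE : ∀ t x, R + |t| < x → EnergyLE (timeDeriv u) (radialDeriv u) t x (K ^ 2)

/-- A finite energy solution that decays in space and radiates no energy outside the cone, neither
to the future nor to the past. -/
structure IsNonradiativeSolution (R K : ℝ) (F : ℝ × ℝ → ℝ) (u : ℝ → ℝ → ℝ) : Prop
    extends IsFiniteEnergySolution R K F u where
  continuousOn_source : ContinuousOn F (exteriorCone R)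
  decay : ∀ t r, R + |t| < r → |u t r| ≤ K / r
  energy_vanishes : ∀ ε > 0, ∃ T, ∀ t x, T ≤ |t| → R + |t| < x →
    EnergyLE (timeDeriv u) (radialDeriv u) t x ε

namespace IsFiniteEnergySolution

variable {R K a b t r x y : ℝ} {u : ℝ → ℝ → ℝ} {F : ℝ × ℝ → ℝ}

lemma hasDerivAt_time (hu : IsFiniteEnergySolution R K F u) (hr : R + |t| < r) :
    HasDerivAt (fun s => u s r) (timeDeriv u (t, r)) t :=
  hasDerivAt_slice_fst (hu.hasFDerivAt (t, r) hr)

lemma hasDerivAt_radial (hu : IsFiniteEnergySolution R K F u) (hr : R + |t| < r) :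
    HasDerivAt (u t) (radialDeriv u (t, r)) r :=
  hasDerivAt_slice_snd (hu.hasFDerivAt (t, r) hr)

lemma abs_sub_le (hu : IsFiniteEnergySolution R K F u) (hR : 0 ≤ R) (hK : 0 < K)
    (hx : R + |t| < x) (hxy : x ≤ y) : |u t y - u t x| ≤ 3 / 4 * (K / x) := by
  have hx₀ : 0 < x := lt_of_le_of_lt (by positivity) hx
  have hcone : ∀ r, x ≤ r → (t, r) ∈ exteriorCone R := fun r hr => hx.trans_le hr
  have hcont : ContinuousOn (radialDeriv u) (exteriorCone R) := fun q hq =>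
    (hu.isWavePair.continuousAt_snd hq).continuousWithinAt
  have hcont' : ContinuousOn (fun r => radialDeriv u (t, r)) (Icc x y) :=
    hcont.comp (Continuous.prodMk_right t).continuousOn fun r hr => hcone r hr.1
  refine abs_sub_le_of_integral_sq_mul_cube_le hx₀ hxy hK
    (fun r hr => hu.hasDerivAt_radial (hx.trans_le hr.1)) hcont'
    (le_trans ?_ (hu.energyLE t x hx y hxy))
  refine intervalIntegral.integral_mono_on hxy ?_
    (intervalIntegrable_slice hu.isWavePair.continuousOn_energyDensity hxy hcone) fun r hr => ?_
  · exact intervalIntegrable_slice (by fun_prop : ContinuousOn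
      (fun q => radialDeriv u q ^ 2 * q.2 ^ 3) (exteriorCone R)) hxy hcone
  · have : 0 < r := hx₀.trans_le hr.1
    unfold energyDensity
    gcongr
    exact le_add_of_nonneg_left (sq_nonneg _)

lemma abs_le_div_of_eLL_ne_top (hu : IsFiniteEnergySolution R K F u) (hR : 0 ≤ R) (hK : 0 < K)
    (ha : 0 < a) (hb : 0 < b) (hL : eLL a b R u ≠ ⊤) (hr : R + |t| < r) : |u t r| ≤ K / r := by
  by_contra! hlarge
  have hr₀ : 0 < r := lt_of_le_of_lt (by positivity) hr
  have hKr : 0 < K / r := by positivity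
  have hcone : ∀ᶠ s in nhds t, R + |s| < r :=
    (continuous_const.add continuous_abs).continuousAt.eventually_lt continuousAt_const hr
  have hlarge' : ∀ᶠ s in nhds t, K / r < |u s r| :=
    (hu.hasDerivAt_time hr).continuousAt.abs.eventually (lt_mem_nhds hlarge)
  refine hL (eLL_eq_top_of_eventually (t := t) ha hb ?_)
  filter_upwards [hcone, hlarge'] with s hs hsu
  refine setLIntegral_rpow_mul_cube_eq_top (sub_pos.2 hsu) hr₀ hs.le hb.le fun y hy => ?_
  have hosc := hu.abs_sub_le hR hK hs hy.le
  have := abs_sub_abs_le_abs_sub (u s r) (u s y)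
  rw [abs_sub_comm] at this
  linarith

end IsFiniteEnergySolution

/-- The focusing power nonlinearity `|u|^{p-1}u`, viewed as a source on spacetime. -/
noncomputable def powerSource (p : ℕ) (u : ℝ → ℝ → ℝ) (q : ℝ × ℝ) : ℝ :=
  |u q.1 q.2| ^ (p - 1) * u q.1 q.2

lemma isNonradiativeSolution_of_isExtSol {p : ℕ} {R K a b : ℝ} {u : ℝ → ℝ → ℝ} (hR : 0 ≤ R)
    (hK : 0 < K) (ha : 0 < a) (hb : 0 < b) (hu : IsExtSol p 2 R u)
    (hE : supH R u ≤ ENNReal.ofReal K) (hL : eLL a b R u ≠ ⊤) (hvan : ExtEnergyVanishes R u) :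
    IsNonradiativeSolution R K (powerSource p u) u := by
  have hopen := isOpen_exteriorCone R
  have hwave := isWavePair_of_contDiffOn hopen hu.1 fun q hq => hu.2 q.1 q.2 hq
  have hcont : ContinuousOn (fun q : ℝ × ℝ => u q.1 q.2) (exteriorCone R) := hu.1.continuousOn
  have henergy : ∀ t x, R + |t| < x → EnergyLE (timeDeriv u) (radialDeriv u) t x
      (∫ r in Ioi (R + |t|), energyDensity (timeDeriv u) (radialDeriv u) (t, r)) :=
    fun t x hx y hxy => intervalIntegral_le_integral_Ioi
      (integrableOn_energyDensity_and_integral_le hR hK.le hwave hE).1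
      (fun r hr => energyDensity_nonneg _ _ ((by positivity : 0 ≤ R + |t|).trans hr.le)) hx hxy
  have hfin : IsFiniteEnergySolution R K (powerSource p u) u :=
    { hasFDerivAt := fun q hq => hasFDerivAt_linForm_timeDeriv_radialDeriv
        ((hu.1.contDiffAt (hopen.mem_nhds hq)).differentiableAt (by norm_num))
      isWavePair := hwave
      energyLE := fun t x hx y hxy => (henergy t x hx y hxy).trans
        (integrableOn_energyDensity_and_integral_le hR hK.le hwave hE).2 }
  refine ⟨hfin, (hcont.abs.pow _).mul hcont,
    fun t r hr => hfin.abs_le_div_of_eLL_ne_top hR hK ha hb hL hr, fun ε hε => ?_⟩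
  obtain ⟨T₁, hT₁⟩ := eventually_atTop.1 (hvan.1.eventually (gt_mem_nhds hε))
  obtain ⟨T₂, hT₂⟩ := eventually_atBot.1 (hvan.2.eventually (gt_mem_nhds hε))
  refine ⟨max T₁ (-T₂), fun t x ht hx y hxy => (henergy t x hx y hxy).trans ?_⟩
  obtain ⟨ht₁, ht₂⟩ := max_le_iff.1 ht
  rcases abs_cases t with ⟨habs, -⟩ | ⟨habs, -⟩
  · exact (hT₁ t (by linarith)).le
  · exact (hT₂ t (by linarith)).le

/-! ### Even reflection in time -/

/-- The even part of `f` in time about `t₀`, as a function of the time elapsed since `t₀`. -/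
noncomputable def evenPart (t₀ : ℝ) (f : ℝ × ℝ → ℝ) (q : ℝ × ℝ) : ℝ :=
  1 / 2 * (f (t₀ + q.1, q.2) + f (t₀ - q.1, q.2))

/-- The odd part of `f` in time about `t₀`, as a function of the time elapsed since `t₀`. -/
noncomputable def oddPart (t₀ : ℝ) (f : ℝ × ℝ → ℝ) (q : ℝ × ℝ) : ℝ :=
  1 / 2 * (f (t₀ + q.1, q.2) - f (t₀ - q.1, q.2))

lemma mem_exteriorCone_of_abs_sub {R ρ t₀ t r : ℝ} (hρ : R + |t₀| ≤ ρ) (hr : ρ + |t - t₀| < r) :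
    R + |t| < r := by
  have := abs_add_le t₀ (t - t₀)
  rw [add_sub_cancel] at this
  linarith

section Reflection

variable {R ρ t₀ t r x : ℝ} {a b f F : ℝ × ℝ → ℝ} {q : ℝ × ℝ}

lemma exteriorCone_time_add (hρ : R + |t₀| ≤ ρ) (hq : q ∈ exteriorCone ρ) :
    (t₀ + q.1, q.2) ∈ exteriorCone R :=
  mem_exteriorCone_of_abs_sub hρ (by simpa [exteriorCone] using hq)

lemma exteriorCone_time_sub (hρ : R + |t₀| ≤ ρ) (hq : q ∈ exteriorCone ρ) :
    (t₀ - q.1, q.2) ∈ exteriorCone R :=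
  mem_exteriorCone_of_abs_sub hρ (by simpa [exteriorCone] using hq)

section Derivatives

variable {x₁ y₁ x₂ y₂ : ℝ}

lemma hasFDerivAt_comp_time_add (h : HasFDerivAt f (linForm x₁ y₁) (t₀ + q.1, q.2)) :
    HasFDerivAt (fun q : ℝ × ℝ => f (t₀ + q.1, q.2)) (linForm x₁ y₁) q :=
  (h.comp q ((hasFDerivAt_fst.const_add t₀).prodMk hasFDerivAt_snd)).congr_fderiv
    (by ext <;> simp)

lemma hasFDerivAt_comp_time_sub (h : HasFDerivAt f (linForm x₁ y₁) (t₀ - q.1, q.2)) :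
    HasFDerivAt (fun q : ℝ × ℝ => f (t₀ - q.1, q.2)) (linForm (-x₁) y₁) q :=
  (h.comp q ((hasFDerivAt_fst.const_sub t₀).prodMk hasFDerivAt_snd)).congr_fderiv
    (by ext <;> simp)

lemma hasFDerivAt_evenPart (h₁ : HasFDerivAt f (linForm x₁ y₁) (t₀ + q.1, q.2))
    (h₂ : HasFDerivAt f (linForm x₂ y₂) (t₀ - q.1, q.2)) :
    HasFDerivAt (evenPart t₀ f) (linForm (1 / 2 * (x₁ - x₂)) (1 / 2 * (y₁ + y₂))) q :=
  (((hasFDerivAt_comp_time_add h₁).add (hasFDerivAt_comp_time_sub h₂)).const_mul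
    (1 / 2)).congr_fderiv (by ext <;> simp <;> ring)

lemma hasFDerivAt_oddPart (h₁ : HasFDerivAt f (linForm x₁ y₁) (t₀ + q.1, q.2))
    (h₂ : HasFDerivAt f (linForm x₂ y₂) (t₀ - q.1, q.2)) :
    HasFDerivAt (oddPart t₀ f) (linForm (1 / 2 * (x₁ + x₂)) (1 / 2 * (y₁ - y₂))) q :=
  (((hasFDerivAt_comp_time_add h₁).sub (hasFDerivAt_comp_time_sub h₂)).const_mul
    (1 / 2)).congr_fderiv (by ext <;> simp)

end Derivatives

lemma IsWavePair.oddPart_evenPart (h : IsWavePair (exteriorCone R) a b F) (hρ : R + |t₀| ≤ ρ) :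
    IsWavePair (exteriorCone ρ) (oddPart t₀ a) (evenPart t₀ b) (evenPart t₀ F) := by
  intro q hq
  obtain ⟨x₁, y₁, z₁, ha₁, hb₁, heq₁⟩ := h _ (exteriorCone_time_add hρ hq)
  obtain ⟨x₂, y₂, z₂, ha₂, hb₂, heq₂⟩ := h _ (exteriorCone_time_sub hρ hq)
  refine ⟨_, _, _, hasFDerivAt_oddPart ha₁ ha₂, hasFDerivAt_evenPart hb₁ hb₂, ?_⟩
  unfold evenPart
  linear_combination 1 / 2 * heq₁ + 1 / 2 * heq₂

lemma continuousOn_evenPart (hf : ContinuousOn f (exteriorCone R)) (hρ : R + |t₀| ≤ ρ) :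
    ContinuousOn (evenPart t₀ f) (exteriorCone ρ) :=
  ((hf.comp (by fun_prop) fun _ hq => exteriorCone_time_add hρ hq).add
    (hf.comp (by fun_prop) fun _ hq => exteriorCone_time_sub hρ hq)).const_mul _

lemma energyDensity_oddPart_evenPart_le (hr : 0 ≤ r) :
    energyDensity (oddPart t₀ a) (evenPart t₀ b) (t, r)
      ≤ 1 / 2 * energyDensity a b (t₀ + t, r) + 1 / 2 * energyDensity a b (t₀ - t, r) := by
  unfold energyDensity oddPart evenPart
  rw [← mul_assoc, ← mul_assoc, ← add_mul]
  gcongr ?_ * r ^ 3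
  linarith [sq_nonneg (a (t₀ + t, r) + a (t₀ - t, r)), sq_nonneg (b (t₀ + t, r) - b (t₀ - t, r))]

lemma IsWavePair.energyLE_oddPart_evenPart {E : ℝ} (h : IsWavePair (exteriorCone R) a b F)
    (hρ : R + |t₀| ≤ ρ) (hx : (t, x) ∈ exteriorCone ρ) (hx₀ : 0 ≤ x)
    (h₁ : EnergyLE a b (t₀ + t) x E) (h₂ : EnergyLE a b (t₀ - t) x E) :
    EnergyLE (oddPart t₀ a) (evenPart t₀ b) t x E := by
  intro y hxy
  have hcone : ∀ r, x ≤ r → (t, r) ∈ exteriorCone ρ := fun r hr => lt_of_lt_of_le hx hr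
  have hf_int₁ := intervalIntegrable_slice (t := t₀ + t) h.continuousOn_energyDensity hxy
    fun r hr => exteriorCone_time_add hρ (hcone r hr)
  have hf_int₂ := intervalIntegrable_slice (t := t₀ - t) h.continuousOn_energyDensity hxy
    fun r hr => exteriorCone_time_sub hρ (hcone r hr)
  have hmono := intervalIntegral.integral_mono_on hxy
    (intervalIntegrable_slice (h.oddPart_evenPart hρ).continuousOn_energyDensity hxy hcone)
    ((hf_int₁.const_mul (1 / 2)).add (hf_int₂.const_mul (1 / 2)))
    fun r hr => energyDensity_oddPart_evenPart_le (hx₀.trans hr.1)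
  rw [intervalIntegral.integral_add (hf_int₁.const_mul _) (hf_int₂.const_mul _),
    intervalIntegral.integral_const_mul, intervalIntegral.integral_const_mul] at hmono
  linarith [h₁ y hxy, h₂ y hxy]

end Reflection

namespace IsNonradiativeSolution

variable {R K ρ Φ t₀ r s : ℝ} {u : ℝ → ℝ → ℝ} {F : ℝ × ℝ → ℝ}

lemma isNonradiativeFromRest (hu : IsNonradiativeSolution R K F u) (hR : 0 ≤ R)
    (hρ : R + |t₀| ≤ ρ) (hF : ∀ t r, ρ + |t - t₀| < r → |F (t, r)| ≤ Φ / r ^ 5) :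
    IsNonradiativeFromRest ρ Φ (oddPart t₀ (timeDeriv u)) (evenPart t₀ (radialDeriv u))
      (evenPart t₀ F) (u t₀) := by
  have hρ₀ : 0 ≤ ρ := le_trans (by positivity) hρ
  have henergy : ∀ t x E, 0 ≤ t → ρ + t < x →
      EnergyLE (timeDeriv u) (radialDeriv u) (t₀ + t) x E →
      EnergyLE (timeDeriv u) (radialDeriv u) (t₀ - t) x E →
      EnergyLE (oddPart t₀ (timeDeriv u)) (evenPart t₀ (radialDeriv u)) t x E :=
    fun t x E ht hx => hu.isWavePair.energyLE_oddPart_evenPart hρ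
      (mem_exteriorCone_of_nonneg ht hx) (by linarith)
  refine ⟨hu.isWavePair.oddPart_evenPart hρ, continuousOn_evenPart hu.continuousOn_source hρ,
    fun q hq => ?_, fun r _ => by simp [oddPart], fun r hr => ?_,
    ⟨K, fun r hr => hu.decay t₀ r (hρ.trans_lt hr)⟩, ⟨K ^ 2, fun t x ht hx => ?_⟩,
    fun ε hε => ?_⟩
  · have h₁ := hF (t₀ + q.1) q.2 (by simpa [exteriorCone] using hq)
    have h₂ := hF (t₀ - q.1) q.2 (by simpa [exteriorCone] using hq)
    rw [evenPart, abs_mul, abs_of_pos one_half_pos]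
    linarith [abs_add_le (F (t₀ + q.1, q.2)) (F (t₀ - q.1, q.2))]
  · have hrest : evenPart t₀ (radialDeriv u) (0, r) = radialDeriv u (t₀, r) := by
      simp only [evenPart, add_zero, sub_zero]
      ring
    exact hrest ▸ hu.hasDerivAt_radial (hρ.trans_lt hr)
  · have hcone := mem_exteriorCone_of_nonneg ht hx
    exact henergy t x _ ht hx (hu.energyLE _ _ (exteriorCone_time_add hρ hcone))
      (hu.energyLE _ _ (exteriorCone_time_sub hρ hcone))
  · obtain ⟨T₀, hT₀⟩ := hu.energy_vanishes ε hε
    have hT : 0 < |T₀| + |t₀| + 1 := by positivity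
    refine ⟨|T₀| + |t₀| + 1, hT, fun x hx => ?_⟩
    have hcone := mem_exteriorCone_of_nonneg hT.le hx
    refine henergy _ x ε hT.le hx (hT₀ _ _ ?_ (exteriorCone_time_add hρ hcone))
      (hT₀ _ _ ?_ (exteriorCone_time_sub hρ hcone))
    · exact le_trans (by linarith [le_abs_self T₀, neg_abs_le t₀]) (le_abs_self _)
    · exact le_trans (by linarith [le_abs_self T₀, le_abs_self t₀]) (neg_le_abs _)

theorem abs_sq_mul_sub_le (hu : IsNonradiativeSolution R K F u) (hR : 0 ≤ R)
    (hρ : R + |t₀| ≤ ρ) (hF : ∀ t r, ρ + |t - t₀| < r → |F (t, r)| ≤ Φ / r ^ 5)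
    (hr : ρ < r) (hrs : r ≤ s) (hs : s ≤ 2 * r) :
    |r ^ 2 * u t₀ r - s ^ 2 * u t₀ s| ≤ 100 * Φ / r :=
  (hu.isNonradiativeFromRest hR hρ hF).abs_sq_mul_initial_sub_le
    (le_trans (by positivity) hρ) hr hrs hs

end IsNonradiativeSolution

/-! ### The limit of `r² u(t, r)` at spatial infinity -/

section Dyadic

variable {h : ℝ → ℝ} {ρ B r s : ℝ}

lemma abs_sub_le_of_dyadic_of_le_two_pow (hρ : 0 ≤ ρ)
    (hd : ∀ r s, ρ < r → r ≤ s → s ≤ 2 * r → |h r - h s| ≤ B / r) (n : ℕ) (hr : ρ < r)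
    (hrs : r ≤ s) (hs : s ≤ 2 ^ n * r) : |h r - h s| ≤ 2 * B / r := by
  induction n generalizing r with
  | zero =>
    obtain rfl : r = s := le_antisymm hrs (by simpa using hs)
    have := hd r r hr le_rfl (by linarith)
    rw [sub_self, abs_zero] at this ⊢
    rw [mul_div_assoc]
    positivity
  | succ n ih =>
    have hB : 0 ≤ B / r := (abs_nonneg _).trans (hd r r hr le_rfl (by linarith))
    rw [mul_div_assoc]
    rcases le_total s (2 * r) with hs₂ | hs₂
    · linarith [hd r s hr hrs hs₂]
    · have hstep := hd r (2 * r) hr (by linarith) le_rfl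
      have htail := ih (by linarith) hs₂ (by rwa [← mul_assoc, ← pow_succ])
      rw [mul_div_mul_left _ _ two_ne_zero] at htail
      linarith [_root_.abs_sub_le (h r) (h (2 * r)) (h s)]

lemma abs_sub_le_of_dyadic (hρ : 0 ≤ ρ)
    (hd : ∀ r s, ρ < r → r ≤ s → s ≤ 2 * r → |h r - h s| ≤ B / r) (hr : ρ < r) (hrs : r ≤ s) :
    |h r - h s| ≤ 2 * B / r := by
  obtain ⟨n, hn⟩ := pow_unbounded_of_one_lt (s / r) one_lt_two
  exact abs_sub_le_of_dyadic_of_le_two_pow hρ hd n hr hrs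
    ((div_le_iff₀ (hρ.trans_lt hr)).1 hn.le)

lemma exists_tendsto_of_dyadic (hρ : 0 ≤ ρ)
    (hd : ∀ r s, ρ < r → r ≤ s → s ≤ 2 * r → |h r - h s| ≤ B / r) :
    ∃ ℓ, Tendsto h atTop (nhds ℓ) := by
  have hsmall : Tendsto (fun r => 2 * B / r) atTop (nhds 0) := tendsto_id.const_div_atTop _
  refine cauchySeq_tendsto_of_complete (Metric.cauchySeq_iff'.2 fun ε hε => ?_)
  obtain ⟨N, hNε, hN⟩ := ((hsmall.eventually (gt_mem_nhds hε)).and (eventually_gt_atTop ρ)).exists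
  refine ⟨N, fun r hr => ?_⟩
  rw [dist_comm, dist_eq]
  exact (abs_sub_le_of_dyadic hρ hd hN hr).trans_lt hNε

lemma abs_sub_limit_le_of_dyadic {ℓ : ℝ} (hρ : 0 ≤ ρ)
    (hd : ∀ r s, ρ < r → r ≤ s → s ≤ 2 * r → |h r - h s| ≤ B / r)
    (hℓ : Tendsto h atTop (nhds ℓ)) (hr : ρ < r) : |h r - ℓ| ≤ 2 * B / r := by
  refine le_of_tendsto (tendsto_const_nhds.sub hℓ).abs ?_
  filter_upwards [eventually_ge_atTop r] with s hs using abs_sub_le_of_dyadic hρ hd hr hs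

end Dyadic

section LogarithmicGrowth

variable {g : ℝ → ℝ} {δ x y : ℝ}

lemma half_mul_log_le_abs_integral (hx : 0 < x) (hxy : x ≤ y)
    (hg : IntervalIntegrable g volume x y) (hδ : ∀ r, x ≤ r → |r * g r - δ| ≤ |δ| / 2) :
    |δ| / 2 * log (y / x) ≤ |∫ r in x..y, g r| := by
  have hinv : IntervalIntegrable (fun r : ℝ => 1 / r) volume x y := by
    simpa using (continuousOn_div_pow hx hxy 1 1).intervalIntegrable (μ := volume)
  have hlog : ∫ r in x..y, 1 / r = log (y / x) := integral_one_div_of_pos hx (hx.trans_le hxy)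
  have herror : |∫ r in x..y, (g r - δ * (1 / r))| ≤ |δ| / 2 * log (y / x) := by
    rw [← hlog, ← intervalIntegral.integral_const_mul]
    refine abs_integral_le_integral hxy (fun r hr => ?_) (hinv.const_mul _)
    have hr₀ : 0 < r := hx.trans hr.1
    have hfactor : g r - δ * (1 / r) = (r * g r - δ) * (1 / r) := by field_simp
    rw [hfactor, abs_mul, abs_of_pos (one_div_pos.2 hr₀)]
    exact mul_le_mul_of_nonneg_right (hδ r hr.1.le) (by positivity)
  rw [intervalIntegral.integral_sub hg (hinv.const_mul δ), intervalIntegral.integral_const_mul,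
    hlog] at herror
  have htri := abs_sub_abs_le_abs_sub (δ * log (y / x)) (∫ r in x..y, g r)
  rw [abs_sub_comm, abs_mul, abs_of_nonneg (log_nonneg ((one_le_div hx).2 hxy))] at htri
  linarith

lemma limit_mul_eq_zero_of_abs_integral_le {E T x₀ : ℝ}
    (hT : 0 < T) (hg : ∀ x y, x₀ < x → x ≤ y → IntervalIntegrable g volume x y)
    (hbound : ∀ κ x y, 0 < κ → x₀ < x → x ≤ y →
      |∫ r in x..y, g r| ≤ (κ / 2 * E + 1 / (2 * κ) * log (y / x)) * T)
    (hδ : Tendsto (fun r => r * g r) atTop (nhds δ)) : δ = 0 := by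
  by_contra hne
  have hδ₀ : 0 < |δ| := abs_pos.2 hne
  have hclose : ∀ᶠ r in atTop, |r * g r - δ| ≤ |δ| / 2 :=
    (Metric.tendsto_nhds.1 hδ _ (half_pos hδ₀)).mono fun r hr => (dist_eq _ δ ▸ hr).le
  obtain ⟨x, hx, hx₀⟩ := ((eventually_forall_ge_atTop.2 hclose).and
    ((eventually_gt_atTop x₀).and (eventually_gt_atTop 0))).exists
  have hL : ∀ L, 0 ≤ L → |δ| / 4 * L ≤ T ^ 2 * E / |δ| := by
    intro L hL
    have hxy : x ≤ x * exp L := le_mul_of_one_le_right hx₀.2.le (one_le_exp hL)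
    have hlog : log (x * exp L / x) = L := by rw [mul_div_cancel_left₀ _ hx₀.2.ne', log_exp]
    have hlow := half_mul_log_le_abs_integral hx₀.2 hxy (hg _ _ hx₀.1 hxy) hx
    have hupp := hbound (2 * T / |δ|) x _ (by positivity) hx₀.1 hxy
    have hbalance : (2 * T / |δ| / 2 * E + 1 / (2 * (2 * T / |δ|)) * L) * T
        = T ^ 2 * E / |δ| + |δ| / 4 * L := by
      field_simp
      ring
    rw [hlog] at hlow hupp
    linarith
  have hunbounded := tendsto_id.const_mul_atTop (by positivity : 0 < |δ| / 4)
  obtain ⟨L, hL₁, hL₀⟩ := ((hunbounded.eventually_gt_atTop (T ^ 2 * E / |δ|)).and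
    (eventually_ge_atTop 0)).exists
  exact (hL L hL₀).not_gt hL₁

end LogarithmicGrowth

lemma add_abs_lt_of_mem_uIcc {R s t₁ t₂ x : ℝ} (h₁ : R + |t₁| < x) (h₂ : R + |t₂| < x)
    (hs : s ∈ uIcc t₁ t₂) : R + |s| < x := by
  have hmax : |s| ≤ max |t₁| |t₂| := by
    rcases mem_uIcc.1 hs with ⟨h, h'⟩ | ⟨h, h'⟩
    · exact abs_le_max_abs_abs h h'
    · exact max_comm |t₁| |t₂| ▸ abs_le_max_abs_abs h h'
  rcases le_max_iff.1 hmax with h | h <;> linarith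

namespace IsFiniteEnergySolution

variable {R K κ t t₁ t₂ x y : ℝ} {u : ℝ → ℝ → ℝ} {F : ℝ × ℝ → ℝ}

lemma abs_integral_timeDeriv_mul_le (hu : IsFiniteEnergySolution R K F u) (hR : 0 ≤ R)
    (hκ : 0 < κ) (hx : R + |t| < x) (hxy : x ≤ y) :
    |∫ r in x..y, timeDeriv u (t, r) * r| ≤ κ / 2 * K ^ 2 + 1 / (2 * κ) * log (y / x) := by
  have hx₀ : 0 < x := lt_of_le_of_lt (by positivity) hx
  have hinv : IntervalIntegrable (fun r : ℝ => 1 / r) volume x y := by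
    simpa using (continuousOn_div_pow hx₀ hxy 1 1).intervalIntegrable (μ := volume)
  have henergy := intervalIntegrable_slice (t := t) hu.isWavePair.continuousOn_energyDensity hxy
    fun r hr => hx.trans_le hr
  calc |∫ r in x..y, timeDeriv u (t, r) * r|
      ≤ ∫ r in x..y, (κ / 2 * energyDensity (timeDeriv u) (radialDeriv u) (t, r)
          + 1 / (2 * κ) * (1 / r)) := by
        refine abs_integral_le_integral hxy (fun r hr => ?_)
          ((henergy.const_mul _).add (hinv.const_mul _))
        have hr₀ : 0 < r := hx₀.trans hr.1
        refine (abs_mul_le_weighted_sq (by positivity : 0 < 1 / (κ * r ^ 3)) _ r).trans ?_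
        unfold energyDensity
        field_simp
        gcongr
        exact le_add_of_nonneg_right (sq_nonneg _)
    _ = κ / 2 * (∫ r in x..y, energyDensity (timeDeriv u) (radialDeriv u) (t, r))
          + 1 / (2 * κ) * log (y / x) := by
        rw [intervalIntegral.integral_add (henergy.const_mul _) (hinv.const_mul _),
          intervalIntegral.integral_const_mul, intervalIntegral.integral_const_mul,
          integral_one_div_of_pos hx₀ (hx₀.trans_le hxy)]
    _ ≤ κ / 2 * K ^ 2 + 1 / (2 * κ) * log (y / x) := by
        gcongr
        exact hu.energyLE t x hx y hxy

lemma integral_sub_mul_eq (hu : IsFiniteEnergySolution R K F u) (h₁ : R + |t₁| < x)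
    (h₂ : R + |t₂| < x) (hxy : x ≤ y) :
    ∫ r in x..y, (u t₂ r - u t₁ r) * r
      = ∫ s in t₁..t₂, ∫ r in x..y, timeDeriv u (s, r) * r := by
  have hcone : ∀ s ∈ uIcc t₁ t₂, ∀ r ∈ uIcc x y, (s, r) ∈ exteriorCone R := fun s hs r hr =>
    (add_abs_lt_of_mem_uIcc h₁ h₂ hs).trans_le (uIcc_of_le hxy ▸ hr).1
  have hcont : ContinuousOn (timeDeriv u) (uIcc t₁ t₂ ×ˢ uIcc x y) := fun q hq =>
    (hu.isWavePair.continuousAt_fst (hcone _ hq.1 _ hq.2)).continuousWithinAt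
  rw [intervalIntegral_swap_of_continuousOn (hcont.mul continuousOn_snd)]
  refine intervalIntegral.integral_congr fun r hr => ?_
  have hslice : ContinuousOn (fun s => timeDeriv u (s, r)) (uIcc t₁ t₂) :=
    hcont.comp (by fun_prop) fun s hs => ⟨hs, hr⟩
  simp only [intervalIntegral.integral_mul_const]
  rw [intervalIntegral.integral_eq_sub_of_hasDerivAt
    (fun s hs => hu.hasDerivAt_time (hcone s hs r hr)) hslice.intervalIntegrable]

lemma abs_integral_sub_mul_le (hu : IsFiniteEnergySolution R K F u) (hR : 0 ≤ R)
    (hκ : 0 < κ) (h₁ : R + |t₁| < x) (h₂ : R + |t₂| < x) (hxy : x ≤ y) :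
    |∫ r in x..y, (u t₂ r - u t₁ r) * r|
      ≤ (κ / 2 * K ^ 2 + 1 / (2 * κ) * log (y / x)) * |t₂ - t₁| := by
  rw [hu.integral_sub_mul_eq h₁ h₂ hxy, ← norm_eq_abs]
  refine intervalIntegral.norm_integral_le_of_norm_le_const fun s hs => ?_
  rw [norm_eq_abs]
  exact hu.abs_integral_timeDeriv_mul_le hR hκ
    (add_abs_lt_of_mem_uIcc h₁ h₂ (uIoc_subset_uIcc hs)) hxy

-- If the limits differed, `∫ (u t₂ r - u t₁ r) r dr` would grow like `log (y / x)`, whereas by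
-- Cauchy–Schwarz the energy bound only allows it to grow like the square root of `log (y / x)`.
lemma tendsto_sq_mul_unique (hu : IsFiniteEnergySolution R K F u) (hR : 0 ≤ R) {ℓ₁ ℓ₂ : ℝ}
    (h₁ : Tendsto (fun r => r ^ 2 * u t₁ r) atTop (nhds ℓ₁))
    (h₂ : Tendsto (fun r => r ^ 2 * u t₂ r) atTop (nhds ℓ₂)) : ℓ₁ = ℓ₂ := by
  rcases eq_or_ne t₁ t₂ with rfl | hne
  · exact tendsto_nhds_unique h₁ h₂
  have hcont : ContinuousOn (fun q : ℝ × ℝ => u q.1 q.2 * q.2) (exteriorCone R) := fun q hq =>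
    ((hu.hasFDerivAt q hq).continuousAt.mul continuousAt_snd).continuousWithinAt
  have hx₁ : ∀ x, R + max |t₁| |t₂| < x → R + |t₁| < x := fun x hx =>
    lt_of_le_of_lt (by gcongr; exact le_max_left _ _) hx
  have hx₂ : ∀ x, R + max |t₁| |t₂| < x → R + |t₂| < x := fun x hx =>
    lt_of_le_of_lt (by gcongr; exact le_max_right _ _) hx
  refine (sub_eq_zero.1 (limit_mul_eq_zero_of_abs_integral_le
    (g := fun r => (u t₂ r - u t₁ r) * r) (E := K ^ 2) (abs_pos.2 (sub_ne_zero.2 hne.symm))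
    (fun x y hx hxy => ?_) (fun κ x y hκ hx hxy =>
      hu.abs_integral_sub_mul_le hR hκ (hx₁ x hx) (hx₂ x hx) hxy) ?_)).symm
  · simp only [sub_mul]
    exact (intervalIntegrable_slice hcont hxy fun r hr => (hx₂ x hx).trans_le hr).sub
      (intervalIntegrable_slice hcont hxy fun r hr => (hx₁ x hx).trans_le hr)
  · exact (h₂.sub h₁).congr fun r => by ring

end IsFiniteEnergySolution

namespace IsNonradiativeSolution

variable {R K Φ ρ t r : ℝ} {u : ℝ → ℝ → ℝ} {F : ℝ × ℝ → ℝ}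

lemma exists_forall_tendsto_sq_mul (hu : IsNonradiativeSolution R K F u) (hR : 0 ≤ R)
    (hF : ∀ t r, R + |t| < r → |F (t, r)| ≤ Φ / r ^ 5) :
    ∃ ℓ, ∀ t, Tendsto (fun r => r ^ 2 * u t r) atTop (nhds ℓ) := by
  have hlim : ∀ t, ∃ ℓ, Tendsto (fun r => r ^ 2 * u t r) atTop (nhds ℓ) := fun t =>
    exists_tendsto_of_dyadic (by positivity) fun r s hr hrs hs => hu.abs_sq_mul_sub_le hR le_rfl
      (fun t' r' hr' => hF t' r' (mem_exteriorCone_of_abs_sub le_rfl hr')) hr hrs hs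
  choose ℓ hℓ using hlim
  exact ⟨ℓ 0, fun t => hu.tendsto_sq_mul_unique hR (hℓ t) (hℓ 0) ▸ hℓ t⟩

lemma abs_sq_mul_sub_limit_le (hu : IsNonradiativeSolution R K F u) (hR : 0 ≤ R) {ℓ : ℝ}
    (hℓ : Tendsto (fun r => r ^ 2 * u t r) atTop (nhds ℓ)) (hρ : R + |t| ≤ ρ)
    (hF : ∀ t' r, ρ + |t' - t| < r → |F (t', r)| ≤ Φ / r ^ 5) (hr : ρ < r) :
    |r ^ 2 * u t r - ℓ| ≤ 200 * Φ / r :=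
  (abs_sub_limit_le_of_dyadic (le_trans (by positivity) hρ)
    (fun _ _ => hu.abs_sq_mul_sub_le hR hρ hF) hℓ hr).trans_eq (by ring)

end IsNonradiativeSolution

/-! ### Bootstrapping the size of `r² u` -/

section PowerSource

variable {m : ℕ} {R K M ρ t r : ℝ} {u : ℝ → ℝ → ℝ}

lemma abs_powerSource {p : ℕ} (hp : p ≠ 0) (u : ℝ → ℝ → ℝ) (t r : ℝ) :
    |powerSource p u (t, r)| = |u t r| ^ p := by
  rw [powerSource, abs_mul, abs_pow, abs_abs, pow_sub_one_mul hp]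

lemma abs_powerSource_le_of_abs_le_div (hR : 0 < R) (hr : R ≤ r) (hK : 0 ≤ K)
    (hu : |u t r| ≤ K / r) : |powerSource (m + 5) u (t, r)| ≤ K ^ (m + 5) / R ^ m / r ^ 5 := by
  have hr₀ : 0 < r := hR.trans_le hr
  rw [abs_powerSource (by lia)]
  calc |u t r| ^ (m + 5) ≤ (K / r) ^ (m + 5) := by gcongr
    _ = K ^ (m + 5) / r ^ m / r ^ 5 := by rw [div_pow, pow_add r, div_div]
    _ ≤ K ^ (m + 5) / R ^ m / r ^ 5 := by gcongr

lemma abs_powerSource_le_of_abs_sq_mul_le (hR : 0 < R) (hρ : R ≤ ρ) (hr : ρ ≤ r)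
    (hu : |r ^ 2 * u t r| ≤ M) :
    |powerSource (m + 5) u (t, r)| ≤ M ^ (m + 5) / (ρ * R ^ (2 * m + 4)) / r ^ 5 := by
  have hρ₀ : 0 < ρ := hR.trans_le hρ
  have hr₀ : 0 < r := hρ₀.trans_le hr
  have hM₀ : 0 ≤ M := (abs_nonneg _).trans hu
  have hRr : R ≤ r := hρ.trans hr
  have hu' : |u t r| ≤ M / r ^ 2 := by
    rwa [abs_mul, abs_of_nonneg (sq_nonneg r), mul_comm, ← le_div_iff₀ (by positivity)] at hu
  rw [abs_powerSource (by lia)]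
  calc |u t r| ^ (m + 5) ≤ (M / r ^ 2) ^ (m + 5) := by gcongr
    _ = M ^ (m + 5) / (r * r ^ (2 * m + 4)) / r ^ 5 := by
        rw [div_pow, div_div]
        ring_nf
    _ ≤ M ^ (m + 5) / (ρ * R ^ (2 * m + 4)) / r ^ 5 := by gcongr

end PowerSource

lemma abs_sub_le_third_of_bootstrap {ι : Type*} {f : ι → ℝ} {B ℓ : ℝ} (hB : ∀ i, |f i| ≤ B)
    (hstep : ∀ M ≤ B, (∀ i, |f i| ≤ M) → ∀ i, |f i - ℓ| ≤ M / 4) (i : ι) :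
    |f i - ℓ| ≤ |ℓ| / 3 := by
  have : Nonempty ι := ⟨i⟩
  have hsup : ∀ j, |f j| ≤ ⨆ j, |f j| := le_ciSup ⟨B, forall_mem_range.2 hB⟩
  have hclose := hstep _ (ciSup_le hB) hsup
  have hself : ⨆ j, |f j| ≤ |ℓ| + (⨆ j, |f j|) / 4 :=
    ciSup_le fun j => by linarith [hclose j, abs_sub_abs_le_abs_sub (f j) ℓ]
  linarith [hclose i]

namespace IsNonradiativeSolution

variable {m : ℕ} {R K M B ℓ t r : ℝ} {u : ℝ → ℝ → ℝ}

lemma exists_tendsto_and_abs_sq_mul_le (hu : IsNonradiativeSolution R K (powerSource (m + 5) u) u)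
    (hR : 0 < R) (hK : 0 ≤ K) (hK₁ : K ≤ 1) :
    ∃ ℓ, (∀ t, Tendsto (fun r => r ^ 2 * u t r) atTop (nhds ℓ)) ∧
      ∀ t r, R + |t| < r → |r ^ 2 * u t r| ≤ K * (2 * R + 400 / R ^ (m + 1)) := by
  have hcone : ∀ t r, R + |t| < r → R < r := fun t r hr => by linarith [abs_nonneg t]
  have hsource : ∀ t r, R + |t| < r →
      |powerSource (m + 5) u (t, r)| ≤ K ^ (m + 5) / R ^ m / r ^ 5 := fun t r hr =>
    abs_powerSource_le_of_abs_le_div hR (hcone t r hr).le hK (hu.decay t r hr)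
  obtain ⟨ℓ, hℓ⟩ := hu.exists_forall_tendsto_sq_mul hR.le hsource
  have hclose : ∀ t r, R + |t| < r → |r ^ 2 * u t r - ℓ| ≤ K * (200 / R ^ (m + 1)) := by
    intro t r hr
    have := hcone t r hr
    calc |r ^ 2 * u t r - ℓ| ≤ 200 * (K ^ (m + 5) / R ^ m) / r :=
          hu.abs_sq_mul_sub_limit_le hR.le (hℓ t) le_rfl (fun t' r' hr' => hsource t' r'
            (mem_exteriorCone_of_abs_sub le_rfl hr')) hr
      _ ≤ 200 * (K / R ^ m) / R := by
          gcongr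
          exact pow_le_of_le_one hK hK₁ (by lia)
      _ = K * (200 / R ^ (m + 1)) := by
          field_simp
          ring
  refine ⟨ℓ, hℓ, fun t r hr => ?_⟩
  have h₀ : R + |(0 : ℝ)| < 2 * R := by simpa [two_mul] using hR
  have hinit : |(2 * R) ^ 2 * u 0 (2 * R)| ≤ K * (2 * R) := by
    rw [abs_mul, abs_of_pos (by positivity)]
    calc (2 * R) ^ 2 * |u 0 (2 * R)| ≤ (2 * R) ^ 2 * (K / (2 * R)) := by
          gcongr
          exact hu.decay 0 _ h₀
      _ = K * (2 * R) := by field_simp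
  have hsplit : K * (2 * R + 400 / R ^ (m + 1))
      = K * (2 * R) + K * (200 / R ^ (m + 1)) + K * (200 / R ^ (m + 1)) := by ring
  have hℓ_le := abs_sub_abs_le_abs_sub ℓ ((2 * R) ^ 2 * u 0 (2 * R))
  rw [abs_sub_comm] at hℓ_le
  linarith [hclose 0 _ h₀, hclose t r hr, abs_sub_abs_le_abs_sub (r ^ 2 * u t r) ℓ]

-- The exterior cone based at radius `(R + |t| + r) / 2` rather than `R + |t|` sees only radii
-- comparable to `r` or larger, which gains one more power of `r` in the decay.
lemma abs_sq_mul_sub_limit_le_of_abs_sq_mul_le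
    (hu : IsNonradiativeSolution R K (powerSource (m + 5) u) u) (hR : 0 < R)
    (hM : ∀ t r, R + |t| < r → |r ^ 2 * u t r| ≤ M)
    (hℓ : Tendsto (fun r => r ^ 2 * u t r) atTop (nhds ℓ)) (hr : R + |t| < r) :
    |r ^ 2 * u t r - ℓ| ≤ 400 * M ^ (m + 5) / (R ^ (2 * m + 4) * r ^ 2) := by
  have hM₀ : 0 ≤ M := (abs_nonneg _).trans (hM t r hr)
  have ht := abs_nonneg t
  set ρ := (R + |t| + r) / 2 with hρ_def
  have hρ : R + |t| ≤ ρ := by linarith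
  have hrρ : r / 2 ≤ ρ := by linarith
  have hr₀ : 0 < r := by linarith
  calc |r ^ 2 * u t r - ℓ| ≤ 200 * (M ^ (m + 5) / (ρ * R ^ (2 * m + 4))) / r :=
        hu.abs_sq_mul_sub_limit_le hR.le hℓ hρ (fun t' r' hr' =>
          abs_powerSource_le_of_abs_sq_mul_le hR (by linarith) (by linarith [abs_nonneg (t' - t)])
            (hM t' r' (mem_exteriorCone_of_abs_sub hρ hr'))) (by linarith)
    _ ≤ 200 * (M ^ (m + 5) / (r / 2 * R ^ (2 * m + 4))) / r := by gcongr
    _ = 400 * M ^ (m + 5) / (R ^ (2 * m + 4) * r ^ 2) := by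
        field_simp
        ring

lemma abs_sq_mul_sub_limit_le_div_four
    (hu : IsNonradiativeSolution R K (powerSource (m + 5) u) u) (hR : 0 < R)
    (hM : ∀ t r, R + |t| < r → |r ^ 2 * u t r| ≤ M) (hM₁ : M ≤ 1)
    (hMR : 1600 * M ≤ R ^ (2 * m + 6))
    (hℓ : Tendsto (fun r => r ^ 2 * u t r) atTop (nhds ℓ)) (hr : R + |t| < r) :
    |r ^ 2 * u t r - ℓ| ≤ M / 4 := by
  have hM₀ : 0 ≤ M := (abs_nonneg _).trans (hM t r hr)
  have hRr : R ≤ r := by linarith [abs_nonneg t]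
  calc |r ^ 2 * u t r - ℓ| ≤ 400 * M ^ (m + 5) / (R ^ (2 * m + 4) * r ^ 2) :=
        hu.abs_sq_mul_sub_limit_le_of_abs_sq_mul_le hR hM hℓ hr
    _ ≤ 400 * M ^ 2 / (R ^ (2 * m + 4) * R ^ 2) := by
        gcongr 400 * ?_ / (_ * ?_ ^ 2)
        exact pow_le_pow_of_le_one hM₀ hM₁ (by lia)
    _ = M / 4 * (1600 * M / R ^ (2 * m + 6)) := by
        rw [← pow_add]
        ring
    _ ≤ M / 4 * 1 := by
        gcongr
        exact (div_le_one (by positivity)).2 hMR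
    _ = M / 4 := mul_one _

lemma abs_sq_mul_sub_limit_le_third
    (hu : IsNonradiativeSolution R K (powerSource (m + 5) u) u) (hR : 0 < R)
    (hB : ∀ t r, R + |t| < r → |r ^ 2 * u t r| ≤ B) (hB₁ : B ≤ 1)
    (hBR : 1600 * B ≤ R ^ (2 * m + 6))
    (hℓ : ∀ t, Tendsto (fun r => r ^ 2 * u t r) atTop (nhds ℓ)) (hr : R + |t| < r) :
    |r ^ 2 * u t r - ℓ| ≤ |ℓ| / 3 :=
  abs_sub_le_third_of_bootstrap
    (f := fun q : exteriorCone R => (q : ℝ × ℝ).2 ^ 2 * u (q : ℝ × ℝ).1 (q : ℝ × ℝ).2)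
    (fun q => hB _ _ q.2)
    (fun _ hMB hM q => hu.abs_sq_mul_sub_limit_le_div_four hR (fun t r hr => hM ⟨(t, r), hr⟩)
      (by linarith) (by linarith) (hℓ _) q.2)
    ⟨(t, r), hr⟩

lemma abs_sq_mul_sub_limit_le_mul_cube
    (hu : IsNonradiativeSolution R K (powerSource (m + 5) u) u) (hR : 0 < R)
    (hB : ∀ t r, R + |t| < r → |r ^ 2 * u t r| ≤ B) (hB₁ : B ≤ 1 / 2)
    (hthird : ∀ t r, R + |t| < r → |r ^ 2 * u t r - ℓ| ≤ |ℓ| / 3)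
    (hℓ : Tendsto (fun r => r ^ 2 * u t r) atTop (nhds ℓ)) (hr : R + |t| < r) :
    |r ^ 2 * u t r - ℓ| ≤ 3200 / R ^ (2 * m + 4) * r ^ 4 * |u t r| ^ 3 := by
  have hr₀ : 0 < r := by linarith [abs_nonneg t]
  have hupper : ∀ t r, R + |t| < r → |r ^ 2 * u t r| ≤ 4 / 3 * |ℓ| := fun t r hr => by
    linarith [hthird t r hr, abs_sub_abs_le_abs_sub (r ^ 2 * u t r) ℓ]
  have hlower : 4 / 3 * |ℓ| ≤ 2 * |r ^ 2 * u t r| := by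
    have := abs_sub_abs_le_abs_sub ℓ (r ^ 2 * u t r)
    rw [abs_sub_comm] at this
    linarith [hthird t r hr]
  calc |r ^ 2 * u t r - ℓ| ≤ 400 * (4 / 3 * |ℓ|) ^ (m + 5) / (R ^ (2 * m + 4) * r ^ 2) :=
        hu.abs_sq_mul_sub_limit_le_of_abs_sq_mul_le hR hupper hℓ hr
    _ ≤ 400 * (4 / 3 * |ℓ|) ^ 3 / (R ^ (2 * m + 4) * r ^ 2) := by
        gcongr 400 * ?_ / _
        exact pow_le_pow_of_le_one (by positivity) (by linarith [hB t r hr]) (by lia)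
    _ ≤ 400 * (2 * |r ^ 2 * u t r|) ^ 3 / (R ^ (2 * m + 4) * r ^ 2) := by gcongr
    _ = 3200 / R ^ (2 * m + 4) * r ^ 4 * |u t r| ^ 3 := by
        rw [abs_mul, abs_of_pos (by positivity : 0 < r ^ 2)]
        field_simp
        ring

theorem exists_abs_sq_mul_sub_le (hu : IsNonradiativeSolution R K (powerSource (m + 5) u) u)
    (hR : 0 < R) (hK : 0 ≤ K) (hK₁ : K ≤ 1) (hKB : K * (2 * R + 400 / R ^ (m + 1)) ≤ B)
    (hB₁ : B ≤ 1 / 2) (hBR : 1600 * B ≤ R ^ (2 * m + 6)) :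
    ∃ ℓ, ∀ t r, R + |t| < r → |r ^ 2 * u t r - ℓ| ≤ |ℓ| / 3 ∧
      |r ^ 2 * u t r - ℓ| ≤ 3200 / R ^ (2 * m + 4) * r ^ 4 * |u t r| ^ 3 := by
  obtain ⟨ℓ, hℓ, hle⟩ := hu.exists_tendsto_and_abs_sq_mul_le hR hK hK₁
  have hB : ∀ t r, R + |t| < r → |r ^ 2 * u t r| ≤ B := fun t r hr => (hle t r hr).trans hKB
  have hthird : ∀ t r, R + |t| < r → |r ^ 2 * u t r - ℓ| ≤ |ℓ| / 3 := fun t r hr =>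
    hu.abs_sq_mul_sub_limit_le_third hR hB (by linarith) hBR hℓ hr
  exact ⟨ℓ, fun t r hr => ⟨hthird t r hr,
    hu.abs_sq_mul_sub_limit_le_mul_cube hR hB hB₁ hthird (hℓ t) hr⟩⟩

end IsNonradiativeSolution

lemma forall_pos_or_forall_neg_of_abs_sub_le_third {ι : Type*} {f : ι → ℝ} {ℓ : ℝ} (hℓ : ℓ ≠ 0)
    (hf : ∀ i, |f i - ℓ| ≤ |ℓ| / 3) : (∀ i, 0 < f i) ∨ ∀ i, f i < 0 := by
  rcases hℓ.lt_or_gt with hneg | hpos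
  · refine Or.inr fun i => ?_
    have := (abs_le.1 (hf i)).2
    rw [abs_of_neg hneg] at this
    linarith
  · refine Or.inl fun i => ?_
    have := (abs_le.1 (hf i)).1
    rw [abs_of_pos hpos] at this
    linarith

lemma pos_or_neg_of_abs_sq_mul_sub_le_third {R ℓ : ℝ} {u : ℝ → ℝ → ℝ} (hR : 0 ≤ R)
    (hnontrivial : ∃ t r, R + |t| < r ∧ u t r ≠ 0)
    (hu : ∀ t r, R + |t| < r → |r ^ 2 * u t r - ℓ| ≤ |ℓ| / 3) :
    ℓ ≠ 0 ∧ ((∀ t r, R + |t| < r → 0 < u t r) ∨ ∀ t r, R + |t| < r → u t r < 0) := by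
  have hr₀ : ∀ t r, R + |t| < r → 0 < r := fun t r hr => lt_of_le_of_lt (by positivity) hr
  have hℓ : ℓ ≠ 0 := by
    rintro rfl
    obtain ⟨t, r, hr, hne⟩ := hnontrivial
    have hzero := hu t r hr
    rw [sub_zero, abs_zero, zero_div, abs_nonpos_iff] at hzero
    exact mul_ne_zero (pow_ne_zero 2 (hr₀ t r hr).ne') hne hzero
  refine ⟨hℓ, (forall_pos_or_forall_neg_of_abs_sub_le_third hℓ
    (f := fun q : exteriorCone R => (q : ℝ × ℝ).2 ^ 2 * u (q : ℝ × ℝ).1 (q : ℝ × ℝ).2)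
    fun q => hu _ _ q.2).imp (fun h t r hr => ?_) fun h t r hr => ?_⟩
  · exact pos_of_mul_pos_right (h ⟨(t, r), hr⟩) (sq_nonneg r)
  · exact neg_of_mul_neg_right (h ⟨(t, r), hr⟩) (sq_nonneg r)

lemma eLL_ne_top_and_supH_le_of_le_mul_eH {R C₀ K : ℝ} {u : ℝ → ℝ → ℝ} (hC₀ : 0 < C₀)
    (hdata : eH R (u 0) (fun r => dtu u 0 r) ≤ ENNReal.ofReal (K / C₀))
    (hu : eLL 2 8 R u + eLL 3 6 R u + supH R u
      ≤ ENNReal.ofReal C₀ * eH R (u 0) (fun r => dtu u 0 r)) :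
    eLL 3 6 R u ≠ ⊤ ∧ supH R u ≤ ENNReal.ofReal K := by
  have hle : eLL 2 8 R u + eLL 3 6 R u + supH R u ≤ ENNReal.ofReal K := by
    refine (hu.trans (mul_le_mul_right hdata _)).trans_eq ?_
    rw [← ENNReal.ofReal_mul hC₀.le, mul_div_cancel₀ _ hC₀.ne']
  exact ⟨ne_top_of_le_ne_top ENNReal.ofReal_ne_top ((le_add_self.trans le_self_add).trans hle),
    le_add_self.trans hle⟩

end ExteriorWave

theorem stmt7_general (p : ℕ) (hp : 5 ≤ p) (R : ℝ) (hR : 0 < R) :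
    ∃ K > (0 : ℝ), ∃ C > (0 : ℝ), ∀ (u : ℝ → ℝ → ℝ) (a b : ℝ), 0 < a → 0 < b →
      IsExtSol p 2 R u →
      supH R u ≤ ENNReal.ofReal K →
      eLL a b R u ≠ ⊤ →
      ExtEnergyVanishes R u →
      (∃ t r : ℝ, R + |t| < r ∧ u t r ≠ 0) →
      ((∀ t r : ℝ, R + |t| < r → 0 < u t r) ∨ (∀ t r : ℝ, R + |t| < r → u t r < 0)) ∧
      (∃ ℓ : ℝ, ℓ ≠ 0 ∧ ∀ t r : ℝ, R + |t| < r →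
        |r ^ 2 * u t r - ℓ| ≤ C * r ^ 4 * |u t r| ^ 3) := by
  obtain ⟨m, rfl⟩ := Nat.exists_eq_add_of_le' hp
  set A := 2 * R + 400 / R ^ (m + 1)
  set B := min (1 / 2) (R ^ (2 * m + 6) / 1600)
  have hA : 0 < A := by positivity
  have : 0 < B := by positivity
  have hK : 0 < min 1 (B / A) := by positivity
  refine ⟨min 1 (B / A), hK, 3200 / R ^ (2 * m + 4), by positivity, ?_⟩
  intro u a b ha hb hu hE hL hvan hnontrivial
  obtain ⟨ℓ, hℓ⟩ := (ExteriorWave.isNonradiativeSolution_of_isExtSol hR.le hK ha hb hu hE hL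
    hvan).exists_abs_sq_mul_sub_le hR hK.le (min_le_left _ _)
    ((le_div_iff₀ hA).1 (min_le_right _ _)) (min_le_left _ _)
    ((le_div_iff₀' (by norm_num)).1 (min_le_right _ _))
  obtain ⟨hne, hsign⟩ := ExteriorWave.pos_or_neg_of_abs_sq_mul_sub_le_third hR.le hnontrivial
    fun t r hr => (hℓ t r hr).1
  exact ⟨hsign, ℓ, hne, fun t r hr => (hℓ t r hr).2⟩

/-- small non-radiative exterior solutions that are nowhere eventually
trivial have a constant sign on `{r > R + |t|}` and satisfy
`|r²u(t,r) - ℓ(t)| ≤ C r⁴ |u(t,r)|³` for some `ℓ(t) ≠ 0`. -/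
theorem stmt7 (p : ℕ) (hodd : Odd p) (hp5 : 5 ≤ p) (R C₀ : ℝ) (hR : 0 < R) (hC₀ : 0 < C₀) :
    ∃ ε₀ > (0:ℝ), ∃ C > (0:ℝ), ∀ u : ℝ → ℝ → ℝ,
      IsExtSol p 2 R u →
      eH R (u 0) (fun r => dtu u 0 r) ≤ ENNReal.ofReal ε₀ →
      (∀ ρ : ℝ, R ≤ ρ →
        eLL 2 8 ρ u + eLL 3 6 ρ u + supH ρ u
          ≤ ENNReal.ofReal C₀ * eH ρ (u 0) (fun r => dtu u 0 r)) →
      ExtEnergyVanishes R u →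
      (∀ t : ℝ, ∃ r : ℝ, R + |t| < r ∧ u t r ≠ 0) →
      ((∀ t r : ℝ, R + |t| < r → 0 < u t r) ∨ (∀ t r : ℝ, R + |t| < r → u t r < 0)) ∧
      (∀ t : ℝ, ∃ ℓ : ℝ, ℓ ≠ 0 ∧ ∀ r : ℝ, R + |t| < r →
        |r ^ 2 * u t r - ℓ| ≤ C * r ^ 4 * |u t r| ^ 3) := by
  obtain ⟨K, hK, C, hC, h⟩ := stmt7_general p hp5 R hR
  refine ⟨K / C₀, by positivity, C, hC, fun u hu hdata hnorms hvan hne => ?_⟩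
  obtain ⟨hL, hE⟩ := ExteriorWave.eLL_ne_top_and_supH_le_of_le_mul_eH hC₀ hdata (hnorms R le_rfl)
  obtain ⟨hsign, ℓ, hℓ, hbound⟩ :=
    h u 3 6 (by norm_num) (by norm_num) hu hE hL hvan ⟨0, hne 0⟩
  exact ⟨hsign, fun t => ⟨ℓ, hℓ, hbound t⟩⟩
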